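/- arXiv:2602.04544 — 3 statements merged into one kernel-verified Lean document; each statement's English description precedes it below -/
import Mathlib

section
/- Let a : ℕ₊ → ℕ be the 8-periodic sequence determined by (a_1,…,a_8) = (2,1,1,1,2,2,2,1), and define b : ℕ₊ → ℕ₊ by b_1 = 1 and b_{i+1} = a_i·b_i. Suppose a function f : ℕ₊ × ℕ₊ → ℕ satisfies, for all i, N ≥ 1: (i) f(i,N) + 1 ≤ f(i+1, a_i·N); (ii) f(i+8, N) = f(i, N); (iii) f(2,N) ≥ 1 and f(6,N) ≥ 1; (iv) f(1,N) = ρ(N). Then for all i, N ≥ 1 one has the equality of integers f(i,N) = ρ(N / b_i) + i − 1. -/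
/-- Extended Hurwitz–Radon number: writing the 2-adic valuation of `t` as `4a + b`
with `a ∈ ℤ` and `b ∈ {0,1,2,3}`, `ρ(t) := 8a + 2^b`. -/
noncomputable def hrRho (t : ℚ) : ℤ :=
  8 * (padicValRat 2 t / 4) + 2 ^ (padicValRat 2 t % 4).toNat

/-- The 8-periodic sequence determined by `(a_1,…,a_8) = (2,1,1,1,2,2,2,1)`. -/
def hrA (i : ℕ) : ℕ :=
  if i % 8 = 1 ∨ i % 8 = 5 ∨ i % 8 = 6 ∨ i % 8 = 7 then 2 else 1

/-- `hrB i = b_i` for `i ≥ 1`: indeed `hrB 1 = hrA 0 * hrB 0 = 1` and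
`hrB (i+1) = hrA i * hrB i`, i.e. `b_1 = 1` and `b_{i+1} = a_i · b_i`. -/
def hrB : ℕ → ℕ
  | 0 => 1
  | i + 1 => hrA i * hrB i

/-!
Let `d(i, N)` be the claimed value `ρ(N / b_i) + i - 1` minus `f(i, N)`. The claimed value grows by
exactly `1` along each step `(i, N) ↦ (i + 1, a_i N)` and is `8`-periodic in `i`, so `d` is
`8`-periodic, does not increase along steps, and vanishes at `i = 1`. Since every chain of steps
eventually returns to an index congruent to `1` modulo `8`, this forces `d ≥ 0`. For `d ≤ 0` one
goes forward from `i = 1`; the only pairs `(i + 1, N)` not reached by a step have `a_i = 2` and `N`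
odd, and there the claimed value is `1` (if `i + 1 ≡ 2, 6` modulo `8`) or `0`.
-/

/-- A family `g i N` that does not increase along the steps `(i, N) ↦ (i + 1, a i * N)`. Both the
index and the argument range over the positive integers, encoded as `ℕ` with lower bounds. -/
def ScaledAntitone {α : Type*} [LE α] (a : ℕ → ℕ) (g : ℕ → ℕ → α) : Prop :=
  ∀ i ≥ 1, ∀ N ≥ 1, g (i + 1) (a i * N) ≤ g i N

namespace ScaledAntitone

variable {α : Type*} {a : ℕ → ℕ} {g : ℕ → ℕ → α} {c : α}

theorem le_of_le_later [Preorder α] (hg : ScaledAntitone a g) (ha : ∀ i, 0 < a i) {i m : ℕ}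
    (hi : 1 ≤ i) (him : i ≤ m) (hm : ∀ N ≥ 1, c ≤ g m N) : ∀ N ≥ 1, c ≤ g i N := by
  induction him using Nat.decreasingInduction with
  | self => exact hm
  | of_succ k _ ih =>
    intro N hN
    exact (ih k.succ_pos (a k * N) (Nat.mul_pos (ha k) hN)).trans (hg k hi N hN)

theorem le_of_not_dvd_le [Preorder α] (hg : ScaledAntitone a g)
    (hone : ∀ N ≥ 1, g 1 N ≤ c) (hndvd : ∀ i ≥ 1, ∀ N, ¬ a i ∣ N → g (i + 1) N ≤ c)
    {i : ℕ} (hi : 1 ≤ i) : ∀ N ≥ 1, g i N ≤ c := by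
  induction i, hi using Nat.le_induction with
  | base => exact hone
  | succ i hi ih =>
    intro N hN
    by_cases hdvd : a i ∣ N
    · obtain ⟨M, rfl⟩ := hdvd
      have hM : 1 ≤ M := Nat.pos_of_mul_pos_left hN
      exact (hg i hi M hM).trans (ih M hM)
    · exact hndvd i hi N hdvd

theorem eq_of_periodic [PartialOrder α] (hg : ScaledAntitone a g) (ha : ∀ i, 0 < a i)
    {p : ℕ} (hp : 0 < p) (hper : ∀ N ≥ 1, Function.Periodic (fun i ↦ g (i + 1) N) p)
    (hone : ∀ N ≥ 1, g 1 N = c) (hndvd : ∀ i ≥ 1, ∀ N, ¬ a i ∣ N → g (i + 1) N ≤ c)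
    {i N : ℕ} (hi : 1 ≤ i) (hN : 1 ≤ N) : g i N = c := by
  have hlater : ∀ N ≥ 1, g (i * p + 1) N = c := fun N hN ↦
    ((hper N hN).nat_mul_eq i).trans (hone N hN)
  have hle : i ≤ i * p + 1 := (Nat.le_mul_of_pos_right i hp).trans (Nat.le_succ _)
  exact le_antisymm (hg.le_of_not_dvd_le (fun N hN ↦ (hone N hN).le) hndvd hi N hN)
    (hg.le_of_le_later ha hi hle (fun N hN ↦ (hlater N hN).ge) N hN)

end ScaledAntitone

theorem hrA_pos (i : ℕ) : 0 < hrA i := by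
  unfold hrA
  split_ifs <;> norm_num

theorem hrA_periodic : Function.Periodic hrA 8 := fun i ↦ by
  simp only [hrA, Nat.add_mod_right]

theorem hrB_pos (i : ℕ) : 0 < hrB i := by
  induction i with
  | zero => exact Nat.one_pos
  | succ i ih => exact Nat.mul_pos (hrA_pos i) ih

theorem hrB_add_eight (i : ℕ) : hrB (i + 8) = 16 * hrB i := by
  induction i with
  | zero => rfl
  | succ i ih =>
    calc hrB (i + 1 + 8) = hrA (i + 8) * hrB (i + 8) := by rw [Nat.add_right_comm, hrB]
      _ = 16 * hrB (i + 1) := by rw [hrA_periodic, ih, hrB, Nat.mul_left_comm]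

theorem padicValRat_div_pow_self {p : ℕ} [Fact p.Prime] {t : ℚ} (ht : t ≠ 0) (k : ℕ) :
    padicValRat p (t / (p : ℚ) ^ k) = padicValRat p t - k := by
  have hp : (p : ℚ) ≠ 0 := mod_cast (Fact.out : p.Prime).ne_zero
  rw [padicValRat.div ht (pow_ne_zero k hp), padicValRat.pow,
    padicValRat.self (Fact.out : p.Prime).one_lt, mul_one]

theorem hrRho_div_sixteen {t : ℚ} (ht : t ≠ 0) : hrRho (t / 16) = hrRho t - 8 := by
  have hval : padicValRat 2 (t / 16) = padicValRat 2 t - 4 := by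
    have h := padicValRat_div_pow_self (p := 2) ht 4
    norm_num at h
    exact h
  have hdiv : (padicValRat 2 t - 4) / 4 = padicValRat 2 t / 4 - 1 := by lia
  have hmod : (padicValRat 2 t - 4) % 4 = padicValRat 2 t % 4 := by lia
  rw [hrRho, hrRho, hval, hdiv, hmod]
  ring

theorem hrRho_div_two_pow_of_odd {N : ℕ} (hN : Odd N) (k : ℕ) :
    hrRho ((N : ℚ) / 2 ^ k) = 8 * (-(k : ℤ) / 4) + 2 ^ (-(k : ℤ) % 4).toNat := by
  have hval : padicValRat 2 ((N : ℚ) / 2 ^ k) = -k := by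
    have h := padicValRat_div_pow_self (p := 2) (Nat.cast_ne_zero.mpr hN.pos.ne') k
    rwa [padicValRat.of_nat, padicValNat.eq_zero_of_not_dvd hN.not_two_dvd_nat, Nat.cast_zero,
      zero_sub] at h
  rw [hrRho, hval]

/-- The value `ρ(N / b_i) + i - 1` which the theorem predicts for `f(i, N)`. -/
noncomputable def hrTarget (i N : ℕ) : ℤ := hrRho ((N : ℚ) / (hrB i : ℚ)) + (i : ℤ) - 1

theorem hrTarget_one (N : ℕ) : hrTarget 1 N = hrRho N := by
  have hB : hrB 1 = 1 := rfl
  simp [hrTarget, hB]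

theorem hrTarget_succ (i N : ℕ) : hrTarget (i + 1) (hrA i * N) = hrTarget i N + 1 := by
  have hA : (hrA i : ℚ) ≠ 0 := mod_cast (hrA_pos i).ne'
  rw [hrTarget, hrTarget, hrB]
  push_cast
  rw [mul_div_mul_left _ _ hA]
  ring

theorem hrTarget_periodic {N : ℕ} (hN : 1 ≤ N) : Function.Periodic (hrTarget · N) 8 := by
  intro i
  have hquot : (N : ℚ) / (hrB i : ℚ) ≠ 0 :=
    div_ne_zero (Nat.cast_ne_zero.mpr (Nat.one_le_iff_ne_zero.mp hN)) (mod_cast (hrB_pos i).ne')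
  have hsplit : (N : ℚ) / (hrB (i + 8) : ℚ) = (N : ℚ) / (hrB i : ℚ) / 16 := by
    rw [hrB_add_eight, Nat.cast_mul, Nat.cast_ofNat, mul_comm, div_mul_eq_div_div]
  simp only [hrTarget, hsplit, hrRho_div_sixteen hquot]
  push_cast
  ring

theorem hrTarget_of_odd {i k N : ℕ} (hB : hrB i = 2 ^ k) (hN : Odd N) :
    hrTarget i N = 8 * (-(k : ℤ) / 4) + 2 ^ (-(k : ℤ) % 4).toNat + i - 1 := by
  rw [hrTarget, hB, Nat.cast_pow, Nat.cast_ofNat, hrRho_div_two_pow_of_odd hN]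

/-- The amount by which `f(i, N)` falls short of its predicted value; the theorem says that it
vanishes. -/
noncomputable def hrDefect (f : ℕ → ℕ → ℕ) (i N : ℕ) : ℤ := hrTarget i N - f i N

section Defect

variable {f : ℕ → ℕ → ℕ}

theorem hrDefect_scaledAntitone
    (hstep : ∀ i ≥ 1, ∀ N ≥ 1, f i N + 1 ≤ f (i + 1) (hrA i * N)) :
    ScaledAntitone hrA (hrDefect f) := by
  intro i hi N hN
  have hf : (f i N : ℤ) + 1 ≤ f (i + 1) (hrA i * N) := mod_cast hstep i hi N hN
  rw [hrDefect, hrDefect, hrTarget_succ]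
  linarith

theorem hrDefect_periodic {N : ℕ} (hper : ∀ i ≥ 1, f (i + 8) N = f i N) (hN : 1 ≤ N) :
    Function.Periodic (fun i ↦ hrDefect f (i + 1) N) 8 := by
  intro i
  have hT : hrTarget (i + 1 + 8) N = hrTarget (i + 1) N := hrTarget_periodic hN (i + 1)
  simp only [hrDefect, Nat.add_right_comm i 8 1, hT, hper (i + 1) i.succ_pos]

theorem hrDefect_one {N : ℕ} (hbase : (f 1 N : ℤ) = hrRho (N : ℚ)) : hrDefect f 1 N = 0 := by
  rw [hrDefect, hrTarget_one, hbase, sub_self]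

theorem hrDefect_nonpos_of_odd {N : ℕ} (hpos : 1 ≤ f 2 N ∧ 1 ≤ f 6 N) (hN : Odd N) :
    hrDefect f 2 N ≤ 0 ∧ hrDefect f 6 N ≤ 0 ∧ hrDefect f 7 N ≤ 0 ∧ hrDefect f 8 N ≤ 0 := by
  have target_two : hrTarget 2 N = 1 := hrTarget_of_odd (k := 1) rfl hN
  have target_six : hrTarget 6 N = 1 := hrTarget_of_odd (k := 2) rfl hN
  have target_seven : hrTarget 7 N = 0 := hrTarget_of_odd (k := 3) rfl hN
  have target_eight : hrTarget 8 N = 0 := hrTarget_of_odd (k := 4) rfl hN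
  simp only [hrDefect, target_two, target_six, target_seven, target_eight]
  lia

theorem hrDefect_succ_nonpos_of_not_dvd (hper : ∀ i ≥ 1, ∀ N ≥ 1, f (i + 8) N = f i N)
    (hpos : ∀ N ≥ 1, 1 ≤ f 2 N ∧ 1 ≤ f 6 N) {i N : ℕ} (hndvd : ¬ hrA i ∣ N) :
    hrDefect f (i + 1) N ≤ 0 := by
  unfold hrA at hndvd
  split_ifs at hndvd with hi
  · have hN : Odd N := Nat.not_even_iff_odd.mp (mt Even.two_dvd hndvd)
    obtain ⟨nonpos_two, nonpos_six, nonpos_seven, nonpos_eight⟩ :=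
      hrDefect_nonpos_of_odd (hpos N hN.pos) hN
    rw [← (hrDefect_periodic (fun i hi ↦ hper i hi N hN.pos) hN.pos).map_mod_nat i]
    rcases hi with hi | hi | hi | hi <;> simpa only [hi]
  · exact absurd (one_dvd N) hndvd

end Defect

theorem hurwitzRadon_eight_periodic_lemma (f : ℕ → ℕ → ℕ)
    (h1 : ∀ i ≥ 1, ∀ N ≥ 1, f i N + 1 ≤ f (i + 1) (hrA i * N))
    (h2 : ∀ i ≥ 1, ∀ N ≥ 1, f (i + 8) N = f i N)
    (h3 : ∀ N ≥ 1, 1 ≤ f 2 N ∧ 1 ≤ f 6 N)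
    (h4 : ∀ N ≥ 1, (f 1 N : ℤ) = hrRho (N : ℚ)) :
    ∀ i ≥ 1, ∀ N ≥ 1,
      (f i N : ℤ) = hrRho ((N : ℚ) / (hrB i : ℚ)) + (i : ℤ) - 1 := by
  intro i hi N hN
  have hdefect : hrDefect f i N = 0 :=
    (hrDefect_scaledAntitone h1).eq_of_periodic hrA_pos (by norm_num : 0 < 8)
      (fun N hN ↦ hrDefect_periodic (fun i hi ↦ h2 i hi N hN) hN)
      (fun N hN ↦ hrDefect_one (h4 N hN))
      (fun _ _ _ ↦ hrDefect_succ_nonpos_of_not_dvd h2 h3) hi hN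
  exact (sub_eq_zero.mp hdefect).symm
end

section
/- Let k ∈ ℕ and suppose a function f : ℕ₊ → ℕ satisfies, for every N ≥ 1: (i) f(N) + 2 ≤ f(2N); (ii) f(N) ≤ ρ(N) + k; (iii) f(N) ≥ k. Then f(N) = 2·ord₂(N) + k for every N ≥ 1, where ord₂(N) is the 2-adic valuation of N. -/
/-!
The function `N ↦ f N - 2 ord₂ N` does not decrease under doubling, so it is at least its value at
the odd part of `N`, hence at least `k`. Doubling `N` until `ord₂ ≡ 1 (mod 4)`, where `ρ = 2 ord₂`
exactly, shows that it is also at most `k`.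
-/

section Growth

variable {R : Type*} [AddCommMonoid R] [PartialOrder R] {p : ℕ} {c k : R} {f : ℕ → R}

theorem add_nsmul_le_apply_pow_mul [IsOrderedAddMonoid R] (hp : p ≠ 0)
    (hstep : ∀ N ≠ 0, f N + c ≤ f (p * N)) {N : ℕ} (hN : N ≠ 0) (j : ℕ) :
    f N + j • c ≤ f (p ^ j * N) := by
  induction j with
  | zero => simp
  | succ j ih =>
    calc f N + (j + 1) • c = f N + j • c + c := by rw [succ_nsmul, add_assoc]
      _ ≤ f (p ^ j * N) + c := by gcongr
      _ ≤ f (p * (p ^ j * N)) := hstep _ (mul_ne_zero (pow_ne_zero j hp) hN)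
      _ = f (p ^ (j + 1) * N) := by rw [pow_succ', mul_assoc]

theorem apply_divMaxPow_add_nsmul_le [IsOrderedAddMonoid R] (hp : p ≠ 0)
    (hstep : ∀ N ≠ 0, f N + c ≤ f (p * N)) {N : ℕ} (hN : N ≠ 0) :
    f (N.divMaxPow p) + padicValNat p N • c ≤ f N := by
  have hfactor : p ^ padicValNat p N * N.divMaxPow p = N := Nat.pow_padicValNat_mul_divMaxPow p N
  have hpart : N.divMaxPow p ≠ 0 := right_ne_zero_of_mul (hfactor ▸ hN)
  simpa only [hfactor] using add_nsmul_le_apply_pow_mul hp hstep hpart (padicValNat p N)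

theorem apply_le_padicValNat_nsmul_add [IsOrderedCancelAddMonoid R] (hp : 1 < p)
    (hstep : ∀ N ≠ 0, f N + c ≤ f (p * N)) {N : ℕ} (hN : N ≠ 0) {j : ℕ}
    (hupper : f (p ^ j * N) ≤ padicValNat p (p ^ j * N) • c + k) :
    f N ≤ padicValNat p N • c + k := by
  refine le_of_add_le_add_right (a := j • c) ?_
  calc f N + j • c ≤ f (p ^ j * N) := add_nsmul_le_apply_pow_mul (by lia) hstep hN j
    _ ≤ padicValNat p (p ^ j * N) • c + k := hupper
    _ = padicValNat p N • c + k + j • c := by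
      rw [padicValNat_base_pow_mul hp hN, add_nsmul, add_right_comm]

end Growth

theorem hrRho_eq_two_mul_padicValRat {t : ℚ} (ht : padicValRat 2 t % 4 = 1) :
    hrRho t = 2 * padicValRat 2 t := by
  rw [hrRho, ht, Int.toNat_one, pow_one]
  lia

theorem hurwitzRadon_two_periodic_lemma_general {R : Type*} [Ring R] [PartialOrder R]
    [IsOrderedAddMonoid R] (k : R) (f : ℕ → R)
    (hdouble : ∀ N ≠ 0, f N + 2 ≤ f (2 * N))
    (hupper : ∀ N : ℕ, padicValNat 2 N % 4 = 1 → f N ≤ hrRho N + k)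
    (hlower : ∀ N, Odd N → k ≤ f N) {N : ℕ} (hN : N ≠ 0) :
    f N = 2 * padicValNat 2 N + k := by
  rw [← nsmul_eq_mul']
  apply le_antisymm
  · obtain ⟨j, hj⟩ : ∃ j, (padicValNat 2 N + j) % 4 = 1 := ⟨3 * padicValNat 2 N + 1, by lia⟩
    rw [← padicValNat_base_pow_mul one_lt_two hN] at hj
    have hrho : hrRho (2 ^ j * N : ℕ) = 2 * padicValNat 2 (2 ^ j * N) := by
      simpa only [padicValRat.of_nat] using
        hrRho_eq_two_mul_padicValRat (t := (2 ^ j * N : ℕ)) (by exact_mod_cast hj)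
    refine apply_le_padicValNat_nsmul_add one_lt_two hdouble hN (j := j) ?_
    simpa only [hrho, Int.cast_mul, Int.cast_ofNat, Int.cast_natCast, nsmul_eq_mul'] using
      hupper _ hj
  · have hodd : Odd (N.divMaxPow 2) :=
      Nat.not_even_iff_odd.mp (even_iff_two_dvd.not.mpr (Nat.not_dvd_divMaxPow one_lt_two hN))
    calc padicValNat 2 N • 2 + k = k + padicValNat 2 N • 2 := add_comm _ _
      _ ≤ f (N.divMaxPow 2) + padicValNat 2 N • 2 := by gcongr; exact hlower _ hodd
      _ ≤ f N := apply_divMaxPow_add_nsmul_le two_ne_zero hdouble hN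

theorem hurwitzRadon_two_periodic_lemma (k : ℕ) (f : ℕ → ℕ)
    (h1 : ∀ N ≥ 1, f N + 2 ≤ f (2 * N))
    (h2 : ∀ N ≥ 1, (f N : ℤ) ≤ hrRho (N : ℚ) + (k : ℤ))
    (h3 : ∀ N ≥ 1, k ≤ f N) :
    ∀ N ≥ 1, f N = 2 * padicValNat 2 N + k := by
  intro N hN
  exact_mod_cast hurwitzRadon_two_periodic_lemma_general (k : ℤ) (fun N ↦ (f N : ℤ))
    (fun N hN ↦ mod_cast h1 N (Nat.pos_of_ne_zero hN))
    (fun N hval ↦ h2 N (Nat.pos_of_ne_zero (by rintro rfl; simp at hval)))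
    (fun N hN ↦ mod_cast h3 N hN.pos) (Nat.ne_of_gt hN)
end

section
/- For every N ≥ 1 and every n ∈ ℕ, the following are equivalent: (1) there exists an ℝ-linear map f : ℝⁿ → M(N,ℝ) with f(v)ᵀ f(v) = ‖v‖² I_N for all v ∈ ℝⁿ; (2) there exists an ℝ-linear map f : ℝⁿ → M(N,ℝ) such that f(v) is invertible for every nonzero v ∈ ℝⁿ; (3) n ≤ ρ(N). (This is the reformulation ρ(N) = ρ⁽¹⁾(𝔰𝔬(N,N),ι) = ρ⁽²⁾(𝔰𝔬(N,N),ι) of the Hurwitz–Radon–Eckmann–Adams theorem, where ι is the standard representation.) -/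
open Matrix

/-!
Let `F` be a linear family of invertible matrices in `n` variables. Tensored with a Clifford system
`E₁, …, Eₙ`, its hermitization becomes a potential, linear in `x`, for the Dirac operator
`∑ Eᵢ ∂ᵢ` on `ℝⁿ`. Truncating the harmonic oscillators and adding a multiple of the parity yields a
finite invertible symmetric matrix, the spectral localizer, whose positive index of inertia `k` is
stable under homotopies of invertible families. After stabilization the potential can be deformed to
that of the Bott–Dirac operator, whose kernel is explicit, so that `2ⁿ k = D (2ⁿ o + 1)` for some
integer `o`, where `D` is the dimension of the fibre. A quaternionic symmetry of the Clifford system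
makes `k` divisible by `4`, whence `4 · 2ⁿ ∣ D`; for the smallest quaternionic Clifford modules this
bounds `n` by the Hurwitz–Radon number.

Conversely, quaternion multiplication and the eightfold periodicity of real Clifford algebras
produce `ρ(N) - 1` anticommuting orthogonal complex structures `Eᵢ` on `ℝ^N`, and `x₀ + ∑ xᵢ Eᵢ` is
a family of similarities.
-/

namespace HurwitzRadon

section QuadForm

variable {κ ι : Type*} [Fintype κ] [Fintype ι]

/-- The value `uᵀ A u` of the quadratic form of a square matrix at a fixed vector `u`. It is bundled
as a linear functional of the matrix, so that operator identities can be evaluated term by term. -/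
def quadForm (u : κ → ℝ) : Matrix κ κ ℝ →ₗ[ℝ] ℝ where
  toFun A := u ⬝ᵥ A *ᵥ u
  map_add' A B := by rw [add_mulVec, dotProduct_add]
  map_smul' c A := by rw [smul_mulVec, dotProduct_smul, RingHom.id_apply]

lemma quadForm_apply (u : κ → ℝ) (A : Matrix κ κ ℝ) : quadForm u A = u ⬝ᵥ A *ᵥ u := rfl

lemma quadForm_one [DecidableEq κ] (u : κ → ℝ) : quadForm u 1 = u ⬝ᵥ u := by
  rw [quadForm_apply, one_mulVec]

lemma quadForm_transpose_mul (u : κ → ℝ) (A B : Matrix κ κ ℝ) :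
    quadForm u (Aᵀ * B) = (A *ᵥ u) ⬝ᵥ (B *ᵥ u) := by
  rw [quadForm_apply, ← mulVec_mulVec, dotProduct_mulVec, vecMul_transpose]

lemma quadForm_mulVec (u : κ → ℝ) (A B : Matrix κ κ ℝ) :
    quadForm (B *ᵥ u) A = quadForm u (Bᵀ * A * B) := by
  rw [mul_assoc, quadForm_transpose_mul, ← mulVec_mulVec, quadForm_apply]

lemma quadForm_smul_vec (c : ℝ) (u : κ → ℝ) (A : Matrix κ κ ℝ) :
    quadForm (c • u) A = c ^ 2 * quadForm u A := by
  simp only [quadForm_apply, mulVec_smul, smul_dotProduct, dotProduct_smul, smul_eq_mul]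
  ring

lemma quadForm_submatrix_equiv (e : ι ≃ κ) (A : Matrix κ κ ℝ) (u : κ → ℝ) :
    quadForm (u ∘ e) (A.submatrix e e) = quadForm u A := by
  rw [quadForm_apply, submatrix_mulVec_equiv, Function.comp_assoc, Equiv.self_comp_symm,
    Function.comp_id, comp_equiv_dotProduct_comp_equiv, quadForm_apply]

lemma quadForm_blockDiagonal [DecidableEq κ] (B : κ → Matrix ι ι ℝ) (u : ι × κ → ℝ) :
    quadForm u (blockDiagonal B) = ∑ b, quadForm (fun i => u (i, b)) (B b) := by
  simp only [quadForm_apply, dotProduct, mulVec, blockDiagonal_apply, Fintype.sum_prod_type,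
    ite_mul, zero_mul, Finset.sum_ite_eq, Finset.mem_univ, if_true]
  exact Finset.sum_comm

lemma quadForm_diagonal [DecidableEq κ] (d u : κ → ℝ) :
    quadForm u (diagonal d) = ∑ k, d k * u k ^ 2 := by
  simp only [quadForm_apply, dotProduct, mulVec_diagonal]
  exact Finset.sum_congr rfl fun k _ => by ring

lemma dotProduct_self_nonneg (u : κ → ℝ) : 0 ≤ u ⬝ᵥ u :=
  Finset.sum_nonneg fun i _ => mul_self_nonneg (u i)

lemma dotProduct_self_pos {u : κ → ℝ} (hu : u ≠ 0) : 0 < u ⬝ᵥ u :=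
  (dotProduct_self_nonneg u).lt_of_ne' fun h => hu (dotProduct_self_eq_zero.1 h)

lemma abs_dotProduct_le {a : ℝ} (ha : 0 < a) (u v : κ → ℝ) :
    |u ⬝ᵥ v| ≤ a / 2 * (u ⬝ᵥ u) + 1 / (2 * a) * (v ⬝ᵥ v) := by
  have expand (ε : ℝ) : (a • u - ε • v) ⬝ᵥ (a • u - ε • v) =
      a ^ 2 * (u ⬝ᵥ u) - 2 * a * ε * (u ⬝ᵥ v) + ε ^ 2 * (v ⬝ᵥ v) := by
    simp only [sub_dotProduct, dotProduct_sub, smul_dotProduct, dotProduct_smul, smul_eq_mul,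
      dotProduct_comm v u]
    ring
  have hsum : a / 2 * (u ⬝ᵥ u) + 1 / (2 * a) * (v ⬝ᵥ v) =
      (a ^ 2 * (u ⬝ᵥ u) + v ⬝ᵥ v) / (2 * a) := by field_simp
  rw [hsum, le_div_iff₀ (by positivity)]
  have hpos := expand 1 ▸ dotProduct_self_nonneg (a • u - (1 : ℝ) • v)
  have hneg := expand (-1) ▸ dotProduct_self_nonneg (a • u - (-1 : ℝ) • v)
  rcases abs_cases (u ⬝ᵥ v) with ⟨h, -⟩ | ⟨h, -⟩ <;> rw [h] <;> linarith

lemma isUnit_of_mulVec_eq_zero [DecidableEq κ] {A : Matrix κ κ ℝ}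
    (h : ∀ u, A *ᵥ u = 0 → u = 0) : IsUnit A :=
  mulVec_injective_iff_isUnit.1 <| (injective_iff_map_eq_zero (mulVecLin A)).2 h

end QuadForm

section PosIndex

variable {κ ι : Type*} [Fintype κ] [Fintype ι] {A B : Matrix κ κ ℝ} {k l : ℕ}

/-- `HasPosIndex A k`: the quadratic form of `A` is nondegenerate with positive index of inertia
`k`, witnessed by a `k`-dimensional subspace on which it is positive definite and a subspace of
complementary dimension on which it is negative definite. -/
def HasPosIndex (A : Matrix κ κ ℝ) (k : ℕ) : Prop :=
  ∃ U V : Submodule ℝ (κ → ℝ), Module.finrank ℝ U = k ∧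
    Module.finrank ℝ U + Module.finrank ℝ V = Fintype.card κ ∧
    (∀ u ∈ U, u ≠ 0 → 0 < quadForm u A) ∧ ∀ v ∈ V, v ≠ 0 → quadForm v A < 0

namespace HasPosIndex

lemma le (hk : HasPosIndex A k) (hl : HasPosIndex A l) : k ≤ l := by
  obtain ⟨U, _, rfl, -, hU, -⟩ := hk
  obtain ⟨_, V, rfl, hdim, -, hV⟩ := hl
  have hdisj : Disjoint U V := Submodule.disjoint_def.2 fun u hu hv => by
    by_contra h0
    exact lt_asymm (hU u hu h0) (hV u hv h0)
  have hle := Submodule.finrank_add_finrank_le_of_disjoint hdisj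
  rw [Module.finrank_fintype_fun_eq_card] at hle
  lia

lemma unique (hk : HasPosIndex A k) (hl : HasPosIndex A l) : k = l :=
  le_antisymm (hk.le hl) (hl.le hk)

lemma of_posDef (h : ∀ u ≠ 0, 0 < quadForm u A) : HasPosIndex A (Fintype.card κ) :=
  ⟨⊤, ⊥, by simp, by simp, fun u _ => h u, fun v hv h0 => absurd ((Submodule.mem_bot ℝ).1 hv) h0⟩

lemma of_negDef (h : ∀ u ≠ 0, quadForm u A < 0) : HasPosIndex A 0 :=
  ⟨⊥, ⊤, by simp, by simp, fun v hv h0 => absurd ((Submodule.mem_bot ℝ).1 hv) h0, fun u _ => h u⟩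

lemma congr {C : Matrix ι ι ℝ} (hA : HasPosIndex A k) (Ψ : (κ → ℝ) ≃ₗ[ℝ] (ι → ℝ))
    (hΨ : ∀ u, quadForm (Ψ u) C = quadForm u A) : HasPosIndex C k := by
  obtain ⟨U, V, hk, hdim, hU, hV⟩ := hA
  have hcard : Fintype.card κ = Fintype.card ι := by simpa using Ψ.finrank_eq
  refine ⟨U.map Ψ.toLinearMap, V.map Ψ.toLinearMap, ?_, ?_, ?_, ?_⟩
  · rw [LinearEquiv.finrank_map_eq, hk]
  · rw [LinearEquiv.finrank_map_eq, LinearEquiv.finrank_map_eq, hdim, hcard]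
  · rintro _ ⟨u, hu, rfl⟩ h0
    exact (hU u hu (by rintro rfl; simp at h0)).trans_eq (hΨ u).symm
  · rintro _ ⟨u, hu, rfl⟩ h0
    exact (hΨ u).trans_lt (hV u hu (by rintro rfl; simp at h0))

lemma submatrix_equiv (hA : HasPosIndex A k) (e : ι ≃ κ) : HasPosIndex (A.submatrix e e) k :=
  hA.congr (LinearEquiv.funCongrLeft ℝ ℝ e) (quadForm_submatrix_equiv e A)

lemma conj [DecidableEq κ] (hA : HasPosIndex A k) {P Q : Matrix κ κ ℝ} (hPQ : P * Q = 1) :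
    HasPosIndex (Qᵀ * A * Q) k := by
  have hQP : Q * P = 1 := mul_eq_one_comm.1 hPQ
  refine hA.congr (LinearEquiv.ofLinearMap (mulVecLin P) (mulVecLin Q)
    (by rw [← mulVecLin_mul, hPQ, mulVecLin_one]) (by rw [← mulVecLin_mul, hQP, mulVecLin_one])) ?_
  intro u
  change quadForm (P *ᵥ u) _ = _
  rw [← quadForm_mulVec, mulVec_mulVec, hQP, one_mulVec]

lemma blockDiagonal [DecidableEq κ] {B : κ → Matrix ι ι ℝ} {k : κ → ℕ}
    (h : ∀ b, HasPosIndex (B b) (k b)) : HasPosIndex (blockDiagonal B) (∑ b, k b) := by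
  choose U V hk hdim hU hV using h
  let assemble (S : κ → Submodule ℝ (ι → ℝ)) : (∀ b, S b) →ₗ[ℝ] (ι × κ → ℝ) :=
    { toFun := fun w p => (w p.2 : ι → ℝ) p.1, map_add' _ _ := rfl, map_smul' _ _ := rfl }
  have finrank_assemble (S : κ → Submodule ℝ (ι → ℝ)) :
      Module.finrank ℝ (assemble S).range = ∑ b, Module.finrank ℝ (S b) := by
    rw [LinearMap.finrank_range_of_inj, Module.finrank_pi_fintype]
    exact fun w w' hw => funext fun b => Subtype.ext <| funext fun i => congrFun hw (i, b)
  have exists_block_ne {S : κ → Submodule ℝ (ι → ℝ)} {w : ∀ b, S b} (h0 : assemble S w ≠ 0) :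
      ∃ b, (w b : ι → ℝ) ≠ 0 := by
    contrapose! h0
    exact funext fun p => congrFun (h0 p.2) p.1
  refine ⟨(assemble U).range, (assemble V).range, ?_, ?_, ?_, ?_⟩
  · rw [finrank_assemble]
    exact Finset.sum_congr rfl fun b _ => hk b
  · rw [finrank_assemble, finrank_assemble, ← Finset.sum_add_distrib,
      Finset.sum_congr rfl fun b _ => hdim b]
    simp [mul_comm]
  · rintro _ ⟨w, rfl⟩ h0
    obtain ⟨b, hb⟩ := exists_block_ne h0
    rw [quadForm_blockDiagonal]
    refine Finset.sum_pos' (fun b _ => ?_) ⟨b, Finset.mem_univ b, hU b _ (w b).2 hb⟩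
    rcases eq_or_ne (w b : ι → ℝ) 0 with h | h
    · exact (congrArg (fun v => quadForm v (B b)) h).trans (by simp [quadForm_apply]) |>.ge
    · exact (hU b _ (w b).2 h).le
  · rintro _ ⟨w, rfl⟩ h0
    obtain ⟨b, hb⟩ := exists_block_ne h0
    rw [quadForm_blockDiagonal]
    refine Finset.sum_neg' (fun b _ => ?_) ⟨b, Finset.mem_univ b, hV b _ (w b).2 hb⟩
    rcases eq_or_ne (w b : ι → ℝ) 0 with h | h
    · exact (congrArg (fun v => quadForm v (B b)) h).trans (by simp [quadForm_apply]) |>.le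
    · exact (hV b _ (w b).2 h).le

lemma diagonal [DecidableEq κ] {d : κ → ℝ} (hd : ∀ i, d i ≠ 0) :
    HasPosIndex (diagonal d) (Fintype.card {i // 0 < d i}) := by
  have hblock (i : κ) : HasPosIndex (Matrix.diagonal fun _ : Unit => d i)
      (if 0 < d i then 1 else 0) := by
    have hval (u : Unit → ℝ) : quadForm u (Matrix.diagonal fun _ => d i) = d i * u () ^ 2 := by
      rw [quadForm_diagonal, Fintype.sum_unique]
    have hsq {u : Unit → ℝ} (hu : u ≠ 0) : 0 < u () ^ 2 := by
      have : u () ≠ 0 := fun h => hu (funext fun _ => h)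
      positivity
    split_ifs with hpos
    · exact of_posDef fun u hu => hval u ▸ mul_pos hpos (hsq hu)
    · have hneg : d i < 0 := lt_of_le_of_ne (not_lt.1 hpos) (hd i)
      exact of_negDef fun u hu => hval u ▸ mul_neg_of_neg_of_pos hneg (hsq hu)
  have h := (blockDiagonal hblock).submatrix_equiv (Equiv.punitProd κ).symm
  rw [blockDiagonal_diagonal, submatrix_diagonal_equiv] at h
  rw [Fintype.card_subtype, Finset.card_filter]
  exact h

end HasPosIndex

end PosIndex

section Quaternionic

/-- `a` and `b` behave like the quaternion units `i` and `j`. -/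
structure IsQuaternionicPair {R : Type*} [Ring R] (a b : R) : Prop where
  mul_self_left : a * a = -1
  mul_self_right : b * b = -1
  anticomm : a * b = -(b * a)

lemma IsQuaternionicPair.map {R S F : Type*} [Ring R] [Ring S] [FunLike F R S]
    [RingHomClass F R S] {a b : R} (h : IsQuaternionicPair a b) (f : F) :
    IsQuaternionicPair (f a) (f b) where
  mul_self_left := by rw [← map_mul, h.mul_self_left, map_neg, map_one]
  mul_self_right := by rw [← map_mul, h.mul_self_right, map_neg, map_one]
  anticomm := by rw [← map_mul, h.anticomm, map_neg, map_mul]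

variable {κ : Type*} [Fintype κ] [DecidableEq κ] {K₁ K₂ : Matrix κ κ ℝ}

lemma IsQuaternionicPair.four_dvd_card (hK : IsQuaternionicPair K₁ K₂) :
    4 ∣ Fintype.card κ := by
  let basis : QuaternionAlgebra.Basis (Matrix κ κ ℝ) (-1 : ℝ) 0 (-1) :=
    { i := K₁, j := K₂, k := K₁ * K₂
      i_mul_i := by simp [hK.mul_self_left]
      j_mul_j := by simp [hK.mul_self_right]
      i_mul_j := rfl
      j_mul_i := by simp [hK.anticomm] }
  let action : Quaternion ℝ →ₐ[ℝ] Module.End ℝ (κ → ℝ) :=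
    (toLinAlgEquiv' (R := ℝ) (n := κ)).toAlgHom.comp basis.liftHom
  let _ : Module (Quaternion ℝ) (κ → ℝ) := Module.compHom (κ → ℝ) action.toRingHom
  have _ : IsScalarTower ℝ (Quaternion ℝ) (κ → ℝ) :=
    ⟨fun c x v => congrArg (fun f : Module.End ℝ (κ → ℝ) => f v) (map_smul action c x)⟩
  have h := Module.finrank_mul_finrank ℝ (Quaternion ℝ) (κ → ℝ)
  rw [Module.finrank_fintype_fun_eq_card, Quaternion.finrank_eq_four] at h
  exact Dvd.intro _ h

lemma apply_eq_zero_of_commute_diagonal {K : Matrix κ κ ℝ} {d : κ → ℝ}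
    (h : Commute K (diagonal d)) {i j : κ} (hij : d i ≠ d j) : K i j = 0 := by
  have hent : K i j * d j = d i * K i j := by
    simpa only [mul_diagonal, diagonal_mul] using congrFun₂ h.eq i j
  have hprod : (d i - d j) * K i j = 0 := by linear_combination -hent
  exact (mul_eq_zero.1 hprod).resolve_left (sub_ne_zero.2 hij)

lemma IsQuaternionicPair.four_dvd_card_pos {d : κ → ℝ} (hK : IsQuaternionicPair K₁ K₂)
    (h₁ : Commute K₁ (diagonal d)) (h₂ : Commute K₂ (diagonal d)) :
    4 ∣ Fintype.card {i // 0 < d i} := by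
  let block (A : Matrix κ κ ℝ) := A.toBlock (fun i => 0 < d i) fun i => 0 < d i
  have block_mul (A : Matrix κ κ ℝ) {B : Matrix κ κ ℝ} (hB : Commute B (diagonal d)) :
      block A * block B = block (A * B) := by
    have hoff : B.toBlock (fun i => ¬0 < d i) (fun i => 0 < d i) = 0 := by
      ext i j
      exact apply_eq_zero_of_commute_diagonal hB fun h => i.2 (h ▸ j.2)
    simp only [block]
    rw [toBlock_mul_eq_add _ (fun i => 0 < d i), hoff, Matrix.mul_zero, add_zero]
  have block_neg (A : Matrix κ κ ℝ) : block (-A) = -block A := rfl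
  have block_one : block 1 = 1 := toBlock_one_self _
  refine IsQuaternionicPair.four_dvd_card (K₁ := block K₁) (K₂ := block K₂) ⟨?_, ?_, ?_⟩
  · rw [block_mul _ h₁, hK.mul_self_left, block_neg, block_one]
  · rw [block_mul _ h₂, hK.mul_self_right, block_neg, block_one]
  · rw [block_mul _ h₂, block_mul _ h₁, hK.anticomm, block_neg]

end Quaternionic

section Stability

open Topology

variable {κ : Type*} [Fintype κ] {A : Matrix κ κ ℝ} {k : ℕ}

lemma eventually_forall_quadForm_pos (U : Submodule ℝ (κ → ℝ))
    (hU : ∀ u ∈ U, u ≠ 0 → 0 < quadForm u A) :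
    ∀ᶠ B in 𝓝 A, ∀ u ∈ U, u ≠ 0 → 0 < quadForm u B := by
  have hcont : Continuous fun p : Matrix κ κ ℝ × (κ → ℝ) => quadForm p.2 p.1 :=
    continuous_snd.dotProduct (continuous_fst.matrix_mulVec continuous_snd)
  have hne {u : κ → ℝ} (hu : u ∈ Metric.sphere (0 : κ → ℝ) 1) : u ≠ 0 :=
    Metric.ne_of_mem_sphere hu one_ne_zero
  have hcompact : IsCompact (Metric.sphere (0 : κ → ℝ) 1 ∩ U) :=
    (isCompact_sphere 0 1).inter_right U.closed_of_finiteDimensional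
  have hsphere : ∀ᶠ B in 𝓝 A, ∀ u ∈ Metric.sphere (0 : κ → ℝ) 1 ∩ U, 0 < quadForm u B :=
    hcompact.eventually_forall_of_forall_eventually fun u hu =>
      (hcont.tendsto (A, u)).eventually_const_lt (hU u hu.2 (hne hu.1))
  filter_upwards [hsphere] with B hB u hu h0
  have h := hB (‖u‖⁻¹ • u) ⟨by simp [norm_smul, h0], U.smul_mem _ hu⟩
  rw [quadForm_smul_vec] at h
  exact (mul_pos_iff_of_pos_left (by positivity)).1 h

lemma HasPosIndex.eventually (hk : HasPosIndex A k) : ∀ᶠ B in 𝓝 A, HasPosIndex B k := by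
  obtain ⟨U, V, hdimU, hdim, hU, hV⟩ := hk
  have hV' : ∀ᶠ B in 𝓝 A, ∀ v ∈ V, v ≠ 0 → 0 < quadForm v (-B) :=
    continuous_neg.continuousAt.eventually <|
      eventually_forall_quadForm_pos V (A := -A) (by simpa using hV)
  filter_upwards [eventually_forall_quadForm_pos U hU, hV'] with B hBU hBV
  exact ⟨U, V, hdimU, hdim, hBU, by simpa using hBV⟩

end Stability

section PosIndexOfUnit

variable {κ : Type*} [Fintype κ] [DecidableEq κ] {A B : Matrix κ κ ℝ} {k : ℕ}

lemma exists_conjStarAlgAut_diagonal_eq (hA : A.IsSymm) :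
    ∃ (U : unitary (Matrix κ κ ℝ)) (d : κ → ℝ),
      Unitary.conjStarAlgAut ℝ _ U (diagonal d) = A := by
  have hH : A.IsHermitian := by rwa [IsHermitian, conjTranspose_eq_transpose_of_trivial]
  exact ⟨hH.eigenvectorUnitary, hH.eigenvalues, hH.spectral_theorem.symm⟩

lemma HasPosIndex.conjStarAlgAut (hA : HasPosIndex A k) (U : unitary (Matrix κ κ ℝ)) :
    HasPosIndex (Unitary.conjStarAlgAut ℝ _ U A) k := by
  have hconj := hA.conj (Unitary.mul_star_self_of_mem U.2)
  rwa [star_eq_conjTranspose, conjTranspose_eq_transpose_of_trivial,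
    transpose_transpose] at hconj

lemma exists_diagonalization_of_isUnit (hA : A.IsSymm) (hu : IsUnit A) :
    ∃ (U : unitary (Matrix κ κ ℝ)) (d : κ → ℝ),
      Unitary.conjStarAlgAut ℝ _ U (diagonal d) = A ∧
      HasPosIndex A (Fintype.card {i // 0 < d i}) := by
  obtain ⟨U, d, rfl⟩ := exists_conjStarAlgAut_diagonal_eq hA
  have hdiag : IsUnit (diagonal d) := (isUnit_map_iff (Unitary.conjStarAlgAut ℝ _ U) _).1 hu
  have hd (i : κ) : d i ≠ 0 := (Pi.isUnit_iff.1 (isUnit_diagonal.1 hdiag) i).ne_zero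
  exact ⟨U, d, rfl, (HasPosIndex.diagonal hd).conjStarAlgAut U⟩

lemma exists_hasPosIndex (hA : A.IsSymm) (hu : IsUnit A) : ∃ k, HasPosIndex A k := by
  obtain ⟨_, _, _, hk⟩ := exists_diagonalization_of_isUnit hA hu
  exact ⟨_, hk⟩

lemma HasPosIndex.four_dvd (hk : HasPosIndex A k) (hA : A.IsSymm) (hu : IsUnit A)
    {K₁ K₂ : Matrix κ κ ℝ} (hK : IsQuaternionicPair K₁ K₂) (h₁ : Commute K₁ A)
    (h₂ : Commute K₂ A) : 4 ∣ k := by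
  obtain ⟨U, d, rfl, hd⟩ := exists_diagonalization_of_isUnit hA hu
  rw [hk.unique hd]
  let φ := (Unitary.conjStarAlgAut ℝ _ U).symm
  have hφ : φ (Unitary.conjStarAlgAut ℝ _ U (Matrix.diagonal d)) = Matrix.diagonal d :=
    StarAlgEquiv.symm_apply_apply _ _
  exact (hK.map φ).four_dvd_card_pos (hφ ▸ h₁.map φ) (hφ ▸ h₂.map φ)

lemma HasPosIndex.of_continuous {X : Type*} [TopologicalSpace X] [PreconnectedSpace X]
    {f : X → Matrix κ κ ℝ} (hf : Continuous f) (hsymm : ∀ x, (f x).IsSymm)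
    (hunit : ∀ x, IsUnit (f x)) {x : X} (hk : HasPosIndex (f x) k) (y : X) :
    HasPosIndex (f y) k := by
  have isOpen_index (l : ℕ) : IsOpen {z | HasPosIndex (f z) l} :=
    isOpen_iff_mem_nhds.2 fun z hz => hf.continuousAt.eventually hz.eventually
  have hcompl : {z | HasPosIndex (f z) k}ᶜ = ⋃ l ≠ k, {z | HasPosIndex (f z) l} := by
    ext z
    obtain ⟨l, hl⟩ := exists_hasPosIndex (hsymm z) (hunit z)
    simp only [Set.mem_compl_iff, Set.mem_ofPred_eq, Set.mem_iUnion, exists_prop]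
    exact ⟨fun hz => ⟨l, by rintro rfl; exact hz hl, hl⟩,
      fun ⟨m, hm, hzm⟩ hz => hm (hzm.unique hz)⟩
  have hclopen : IsClopen {z | HasPosIndex (f z) k} :=
    ⟨⟨hcompl ▸ isOpen_biUnion fun l _ => isOpen_index l⟩, isOpen_index k⟩
  exact Set.eq_univ_iff_forall.1 (hclopen.eq_univ ⟨x, hk⟩) y

lemma HasPosIndex.of_segment (hA : A.IsSymm) (hB : B.IsSymm)
    (hunit : ∀ t ∈ Set.Icc (0 : ℝ) 1, IsUnit (A + t • B)) (hk : HasPosIndex A k) :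
    HasPosIndex (A + B) k := by
  have h := of_continuous (X := unitInterval) (f := fun t => A + (t : ℝ) • B) (x := 0) (k := k)
    (by fun_prop) (fun t => hA.add (hB.smul _)) (fun t => hunit t t.2) (by simpa using hk) 1
  simpa using h

end PosIndexOfUnit

section Oscillator

variable (M : ℕ)

/-- The annihilation operator of the harmonic oscillator, truncated to the levels `0, …, M - 1`. -/
noncomputable def lowering : Matrix (Fin M) (Fin M) ℝ :=
  of fun k l => if (l : ℕ) = k + 1 then √(l : ℝ) else 0

/-- The truncated position operator `x`, up to normalisation. -/
noncomputable def position : Matrix (Fin M) (Fin M) ℝ := lowering M + (lowering M)ᵀ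

/-- The truncated derivation `d/dx`, up to normalisation. -/
noncomputable def derivation : Matrix (Fin M) (Fin M) ℝ := lowering M - (lowering M)ᵀ

/-- The operator multiplying the `k`-th level by `k`. -/
def number : Matrix (Fin M) (Fin M) ℝ := diagonal fun k => (k : ℕ)

/-- The projection to the highest level `M - 1`, which carries the truncation error of the canonical
commutation relations. -/
def topLevel : Matrix (Fin M) (Fin M) ℝ := diagonal fun k => if (k : ℕ) + 1 = M then 1 else 0

/-- The parity operator `(-1)^k` of the oscillator. -/
def sign : Matrix (Fin M) (Fin M) ℝ := diagonal fun k => (-1) ^ (k : ℕ)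

lemma isSymm_position : (position M).IsSymm := by
  rw [IsSymm, position, transpose_add, transpose_transpose, add_comm]

lemma transpose_derivation : (derivation M)ᵀ = -derivation M := by
  rw [derivation, transpose_sub, transpose_transpose, neg_sub]

lemma transpose_lowering_mul_self : (lowering M)ᵀ * lowering M = number M := by
  ext k l
  simp only [mul_apply, transpose_apply, lowering, of_apply, number, diagonal_apply]
  split_ifs with hkl
  · subst hkl
    have hterm (m : ℕ) : (if (k : ℕ) = m + 1 then √(k : ℝ) else 0) *
        (if (k : ℕ) = m + 1 then √(k : ℝ) else 0) = if (k : ℕ) = m + 1 then (k : ℝ) else 0 := by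
      split_ifs <;> simp
    simp only [hterm]
    rw [Fin.sum_univ_eq_sum_range fun m => if (k : ℕ) = m + 1 then (k : ℝ) else 0]
    have hk := k.2
    generalize (k : ℕ) = j at hk
    cases j with
    | zero => simp
    | succ j => simp; lia
  · refine Finset.sum_eq_zero fun m _ => ?_
    have : ¬((k : ℕ) = m + 1 ∧ (l : ℕ) = m + 1) := by lia
    grind

lemma lowering_mul_transpose_self :
    lowering M * (lowering M)ᵀ = number M + 1 - (M : ℝ) • topLevel M := by
  ext k l
  simp only [mul_apply, transpose_apply, lowering, of_apply, number, topLevel, Matrix.sub_apply,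
    Matrix.add_apply, Matrix.smul_apply, diagonal_apply, one_apply]
  split_ifs with hkl htop
  · refine (Finset.sum_eq_zero fun m _ => ?_).trans ?_
    · rw [if_neg (by lia), zero_mul]
    · have : ((k : ℕ) : ℝ) + 1 = M := mod_cast htop
      simp [this]
  · subst hkl
    rw [Finset.sum_eq_single ⟨k + 1, by lia⟩]
    · rw [if_pos rfl, Real.mul_self_sqrt (by positivity)]
      simp
    · intro m _ hm
      rw [if_neg fun h => hm (Fin.ext h), zero_mul]
    · simp
  · simp only [sub_self, add_zero, smul_zero]
    refine Finset.sum_eq_zero fun m _ => ?_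
    grind

lemma lowering_mul_number : lowering M * number M - number M * lowering M = lowering M := by
  ext k l
  simp only [number, Matrix.sub_apply, mul_diagonal, diagonal_mul, lowering, of_apply]
  split_ifs with h
  · rw [h]
    push_cast
    ring
  · ring

lemma transpose_lowering_mul_number :
    (lowering M)ᵀ * number M - number M * (lowering M)ᵀ = -(lowering M)ᵀ := by
  have h := congrArg transpose (lowering_mul_number M)
  rw [transpose_sub, transpose_mul, transpose_mul, number, diagonal_transpose] at h
  rw [← number] at h
  linear_combination (norm := abel) -h

lemma position_mul_number : position M * number M - number M * position M = derivation M := by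
  rw [position, derivation]
  linear_combination (norm := noncomm_ring)
    lowering_mul_number M + transpose_lowering_mul_number M

lemma derivation_mul_number : derivation M * number M - number M * derivation M = position M := by
  rw [position, derivation]
  linear_combination (norm := noncomm_ring)
    lowering_mul_number M - transpose_lowering_mul_number M

lemma derivation_mul_position : derivation M * position M - position M * derivation M =
    (2 : ℝ) • (1 - (M : ℝ) • topLevel M) := by
  have hcomm : lowering M * (lowering M)ᵀ - (lowering M)ᵀ * lowering M =
      1 - (M : ℝ) • topLevel M := by
    rw [lowering_mul_transpose_self, transpose_lowering_mul_self]
    abel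
  rw [← hcomm, position, derivation, two_smul]
  noncomm_ring

lemma position_sq_sub_derivation_sq : position M * position M - derivation M * derivation M =
    (2 : ℝ) • ((2 : ℝ) • number M + 1 - (M : ℝ) • topLevel M) := by
  have hanti : lowering M * (lowering M)ᵀ + (lowering M)ᵀ * lowering M =
      (2 : ℝ) • number M + 1 - (M : ℝ) • topLevel M := by
    rw [lowering_mul_transpose_self, transpose_lowering_mul_self, two_smul]
    abel
  rw [← hanti, position, derivation, two_smul]
  noncomm_ring

lemma topLevel_mul_self : topLevel M * topLevel M = topLevel M := by
  simp [topLevel]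

lemma number_mul_topLevel : number M * topLevel M = ((M : ℝ) - 1) • topLevel M := by
  rw [number, topLevel, diagonal_mul_diagonal, ← diagonal_smul]
  congr 1
  ext k
  split_ifs with h
  · simp [← h]
  · simp [h]

lemma sign_mul_self : sign M * sign M = 1 := by
  simp [sign, ← mul_pow]

lemma sign_mul_lowering : sign M * lowering M = -(lowering M * sign M) := by
  ext k l
  simp only [sign, Matrix.neg_apply, mul_diagonal, diagonal_mul, lowering, of_apply]
  split_ifs with h
  · rw [h, pow_succ]
    ring
  · simp

lemma sign_mul_transpose_lowering : sign M * (lowering M)ᵀ = -((lowering M)ᵀ * sign M) := by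
  have h := congrArg transpose (sign_mul_lowering M)
  rw [transpose_neg, transpose_mul, transpose_mul, sign, diagonal_transpose, ← sign] at h
  rw [h, neg_neg]

lemma sign_mul_position : sign M * position M = -(position M * sign M) := by
  rw [position, mul_add, add_mul, sign_mul_lowering, sign_mul_transpose_lowering, neg_add]

lemma sign_mul_derivation : sign M * derivation M = -(derivation M * sign M) := by
  rw [derivation, mul_sub, sub_mul, sign_mul_lowering, sign_mul_transpose_lowering]
  abel

end Oscillator

section Kronecker

open scoped Kronecker

variable {m n : Type*} [Fintype m] [DecidableEq m] [Fintype n] [DecidableEq n]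

/-- The embedding `A ↦ A ⊗ 1` of the operators on the first tensor factor. -/
def leftHom : Matrix m m ℝ →ₐ[ℝ] Matrix (m × n) (m × n) ℝ where
  toFun A := A ⊗ₖ 1
  map_one' := one_kronecker_one
  map_mul' A B := by rw [← mul_kronecker_mul, one_mul]
  map_zero' := zero_kronecker _
  map_add' A B := add_kronecker A B _
  commutes' r := by
    rw [Algebra.algebraMap_eq_smul_one, smul_kronecker, one_kronecker_one,
      Algebra.algebraMap_eq_smul_one]

/-- The embedding `B ↦ 1 ⊗ B` of the operators on the second tensor factor. -/
def rightHom : Matrix n n ℝ →ₐ[ℝ] Matrix (m × n) (m × n) ℝ where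
  toFun B := 1 ⊗ₖ B
  map_one' := one_kronecker_one
  map_mul' A B := by rw [← mul_kronecker_mul, one_mul]
  map_zero' := kronecker_zero _
  map_add' := kronecker_add _
  commutes' r := by
    rw [Algebra.algebraMap_eq_smul_one, kronecker_smul, one_kronecker_one,
      Algebra.algebraMap_eq_smul_one]

lemma transpose_leftHom (A : Matrix m m ℝ) :
    (leftHom A : Matrix (m × n) (m × n) ℝ)ᵀ = leftHom Aᵀ := by
  change (A ⊗ₖ 1)ᵀ = Aᵀ ⊗ₖ 1
  rw [← kroneckerMap_transpose, transpose_one]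

lemma transpose_rightHom (B : Matrix n n ℝ) :
    (rightHom B : Matrix (m × n) (m × n) ℝ)ᵀ = rightHom Bᵀ := by
  change (1 ⊗ₖ B)ᵀ = 1 ⊗ₖ Bᵀ
  rw [← kroneckerMap_transpose, transpose_one]

lemma leftHom_mul_rightHom (A : Matrix m m ℝ) (B : Matrix n n ℝ) :
    leftHom A * rightHom B = A ⊗ₖ B := by
  change A ⊗ₖ 1 * 1 ⊗ₖ B = A ⊗ₖ B
  rw [← mul_kronecker_mul, mul_one, one_mul]

lemma commute_leftHom_rightHom (A : Matrix m m ℝ) (B : Matrix n n ℝ) :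
    Commute (leftHom A) (rightHom B) := by
  change A ⊗ₖ 1 * 1 ⊗ₖ B = 1 ⊗ₖ B * A ⊗ₖ 1
  rw [← mul_kronecker_mul, ← mul_kronecker_mul, mul_one, one_mul, mul_one, one_mul]

lemma leftHom_mul_rightHom_mul (A B : Matrix m m ℝ) (C D : Matrix n n ℝ) :
    leftHom A * rightHom C * (leftHom B * rightHom D) = leftHom (A * B) * rightHom (C * D) := by
  rw [(commute_leftHom_rightHom B C).symm.mul_mul_mul_comm, map_mul, map_mul]

lemma leftHom_mul_rightHom_anticomm {B C : Matrix n n ℝ} (h : B * C = -(C * B))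
    (A : Matrix m m ℝ) :
    leftHom A * rightHom B * rightHom C = -(rightHom C * (leftHom A * rightHom B)) := by
  rw [mul_assoc, ← map_mul, h, map_neg, map_mul, mul_neg, ← mul_assoc,
    (commute_leftHom_rightHom A C).eq, mul_assoc]

lemma leftHom_mul_rightHom_diagonal (A : Matrix m m ℝ) (f : n → ℝ) :
    leftHom A * rightHom (diagonal f) = blockDiagonal fun b => f b • A := by
  rw [leftHom_mul_rightHom, kronecker_diagonal]
  congr 1
  ext b : 1
  exact op_smul_eq_smul (f b) A

lemma leftHom_eq_blockDiagonal (A : Matrix m m ℝ) :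
    leftHom A = blockDiagonal fun _ : n => A :=
  kronecker_one A

lemma rightHom_diagonal (f : n → ℝ) :
    rightHom (diagonal f) = diagonal fun p : m × n => f p.2 := by
  change 1 ⊗ₖ diagonal f = _
  rw [← diagonal_one, diagonal_kronecker_diagonal]
  simp

lemma quadForm_leftHom (u : m × n → ℝ) (A : Matrix m m ℝ) :
    quadForm u (leftHom A) = ∑ b, quadForm (fun i => u (i, b)) A := by
  rw [leftHom_eq_blockDiagonal, quadForm_blockDiagonal]

end Kronecker

section PiKronecker

variable {s μ : Type*} [Fintype s] [DecidableEq s] [Fintype μ] [DecidableEq μ]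

/-- The tensor product over `s` of a family of operators. -/
def piKronecker : (s → Matrix μ μ ℝ) →* Matrix (s → μ) (s → μ) ℝ where
  toFun A := of fun α β => ∏ i, A i (α i) (β i)
  map_one' := by
    ext α β
    simp only [of_apply, Pi.one_apply, one_apply, Fintype.prod_ite_zero, Finset.prod_const_one,
      funext_iff]
  map_mul' A B := by
    ext α β
    simp only [of_apply, Pi.mul_apply, mul_apply, Finset.prod_univ_sum, Fintype.piFinset_univ,
      Finset.prod_mul_distrib]

lemma piKronecker_apply (A : s → Matrix μ μ ℝ) (α β : s → μ) :
    piKronecker A α β = ∏ i, A i (α i) (β i) := rfl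

lemma transpose_piKronecker (A : s → Matrix μ μ ℝ) :
    (piKronecker A)ᵀ = piKronecker fun i => (A i)ᵀ := rfl

lemma piKronecker_diagonal (d : s → μ → ℝ) :
    piKronecker (fun i => diagonal (d i)) = diagonal fun α => ∏ i, d i (α i) := by
  ext α β
  simp only [piKronecker_apply, diagonal_apply, Fintype.prod_ite_zero, funext_iff]

lemma piKronecker_mulSingle_apply (i : s) (A : Matrix μ μ ℝ) (α β : s → μ) :
    piKronecker (Pi.mulSingle i A) α β =
      A (α i) (β i) * ∏ j ∈ Finset.univ.erase i, (1 : Matrix μ μ ℝ) (α j) (β j) := by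
  rw [piKronecker_apply, ← Finset.mul_prod_erase _ _ (Finset.mem_univ i), Pi.mulSingle_eq_same]
  congr 1
  exact Finset.prod_congr rfl fun j hj => by rw [Pi.mulSingle_eq_of_ne (Finset.ne_of_mem_erase hj)]

/-- The embedding of the operators on the `i`-th factor of a tensor power. -/
def factorHom (i : s) : Matrix μ μ ℝ →ₐ[ℝ] Matrix (s → μ) (s → μ) ℝ :=
  AlgHom.ofLinearMap
    { toFun := fun A => piKronecker (Pi.mulSingle i A)
      map_add' := fun A B => by
        ext α β
        simp only [Matrix.add_apply, piKronecker_mulSingle_apply, add_mul]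
      map_smul' := fun c A => by
        ext α β
        simp only [Matrix.smul_apply, piKronecker_mulSingle_apply, smul_eq_mul, mul_assoc,
          RingHom.id_apply] }
    (by
      change piKronecker (Pi.mulSingle i 1) = 1
      rw [Pi.mulSingle_one, map_one])
    fun A B => by
      change piKronecker (Pi.mulSingle i (A * B)) = _
      rw [Pi.mulSingle_mul, map_mul]
      rfl

lemma factorHom_apply (i : s) (A : Matrix μ μ ℝ) :
    factorHom i A = piKronecker (Pi.mulSingle i A) := rfl

lemma transpose_factorHom (i : s) (A : Matrix μ μ ℝ) : (factorHom i A)ᵀ = factorHom i Aᵀ := by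
  rw [factorHom_apply, factorHom_apply, transpose_piKronecker]
  congr 1
  ext j : 1
  rw [Pi.apply_mulSingle (fun _ => transpose) fun _ => transpose_one]

lemma commute_factorHom {i j : s} (hij : i ≠ j) (A B : Matrix μ μ ℝ) :
    Commute (factorHom i A) (factorHom j B) := by
  have h : Commute (Pi.mulSingle i A : s → Matrix μ μ ℝ) (Pi.mulSingle j B) :=
    Pi.mulSingle_commute (f := fun _ => Matrix μ μ ℝ) hij A B
  exact h.map piKronecker

lemma factorHom_diagonal (i : s) (d : μ → ℝ) :
    factorHom i (diagonal d) = diagonal fun α => d (α i) := by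
  have hsingle : Pi.mulSingle i (diagonal d) =
      fun j => diagonal (Pi.mulSingle (M := fun _ : s => μ → ℝ) i d j) := by
    ext j : 1
    rw [Pi.apply_mulSingle (fun _ => diagonal) fun _ => diagonal_one]
  rw [factorHom_apply, hsingle, piKronecker_diagonal]
  congr 1
  ext α
  rw [Finset.prod_eq_single i]
  · rw [Pi.mulSingle_eq_same]
  · intro j _ hj
    rw [Pi.mulSingle_eq_of_ne hj, Pi.one_apply]
  · simp

lemma factorHom_conj (i : s) {U V : Matrix μ μ ℝ} (hUV : U * V = 1) (A : Matrix μ μ ℝ) :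
    factorHom i (U * A * V) =
      piKronecker (fun _ => U) * factorHom i A * piKronecker fun _ => V := by
  rw [factorHom_apply, factorHom_apply, ← map_mul, ← map_mul]
  congr 1
  ext j : 1
  rcases eq_or_ne j i with rfl | hj
  · simp only [Pi.mul_apply, Pi.mulSingle_eq_same]
  · simp only [Pi.mul_apply, Pi.mulSingle_eq_of_ne hj, mul_one, hUV]

lemma piKronecker_mul_factorHom {S A : Matrix μ μ ℝ} (h : S * A = -(A * S)) (i : s) :
    piKronecker (fun _ => S) * factorHom i A = -(factorHom i A * piKronecker fun _ => S) := by
  ext α β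
  rw [factorHom_apply, ← map_mul, ← map_mul, Matrix.neg_apply, piKronecker_apply,
    piKronecker_apply, ← Finset.mul_prod_erase _ _ (Finset.mem_univ i),
    ← Finset.mul_prod_erase _ _ (Finset.mem_univ i), ← neg_mul]
  simp only [Pi.mul_apply]
  congr 1
  · rw [Pi.mulSingle_eq_same, h, Matrix.neg_apply]
  · refine Finset.prod_congr rfl fun j hj => ?_
    rw [Pi.mulSingle_eq_of_ne (Finset.ne_of_mem_erase hj), mul_one, one_mul]

end PiKronecker

section Site

variable {ι s μ : Type*} [Fintype ι] [DecidableEq ι] [Fintype s] [DecidableEq s] [Fintype μ]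
  [DecidableEq μ]

/-- The operators on the `i`-th oscillator, embedded into the operators on a system of oscillators
indexed by `s` with internal degrees of freedom `ι`. The internal operators are embedded by
`leftHom`. -/
def siteHom (i : s) : Matrix μ μ ℝ →ₐ[ℝ] Matrix (ι × (s → μ)) (ι × (s → μ)) ℝ :=
  rightHom.comp (factorHom i)

lemma siteHom_apply (i : s) (A : Matrix μ μ ℝ) :
    (siteHom i A : Matrix (ι × (s → μ)) _ ℝ) = rightHom (factorHom i A) := rfl

lemma transpose_siteHom (i : s) (A : Matrix μ μ ℝ) :
    (siteHom i A : Matrix (ι × (s → μ)) _ ℝ)ᵀ = siteHom i Aᵀ := by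
  rw [siteHom_apply, transpose_rightHom, transpose_factorHom, siteHom_apply]

lemma commute_leftHom_siteHom (S : Matrix ι ι ℝ) (i : s) (A : Matrix μ μ ℝ) :
    Commute (leftHom S) (siteHom i A) :=
  commute_leftHom_rightHom _ _

lemma commute_siteHom {i j : s} (hij : i ≠ j) (A B : Matrix μ μ ℝ) :
    Commute (siteHom i A : Matrix (ι × (s → μ)) _ ℝ) (siteHom j B) :=
  (commute_factorHom hij A B).map rightHom

lemma siteHom_diagonal (i : s) (d : μ → ℝ) :
    (siteHom i (diagonal d) : Matrix (ι × (s → μ)) _ ℝ) =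
      rightHom (diagonal fun α => d (α i)) := by
  rw [siteHom_apply, factorHom_diagonal]

lemma sum_quadForm_siteHom_diagonal_le {Φ : s → Matrix ι ι ℝ} {c : ℝ}
    (hΦ : ∀ (y : s → ℝ) (w : ι → ℝ), c * (∑ i, y i ^ 2) * (w ⬝ᵥ w) ≤
      quadForm w ((∑ i, y i • Φ i) * ∑ i, y i • Φ i)) (d : μ → ℝ) (u : ι × (s → μ) → ℝ) :
    c * ∑ i, quadForm u (siteHom i (diagonal d) * siteHom i (diagonal d)) ≤
      quadForm u ((∑ i, leftHom (Φ i) * siteHom i (diagonal d)) *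
        ∑ i, leftHom (Φ i) * siteHom i (diagonal d)) := by
  have hsq (i : s) : (siteHom i (diagonal d) * siteHom i (diagonal d) :
      Matrix (ι × (s → μ)) _ ℝ) = blockDiagonal fun α => d (α i) ^ 2 • 1 := by
    rw [siteHom_diagonal, ← map_mul, diagonal_mul_diagonal, ← leftHom_mul_rightHom_diagonal,
      map_one, one_mul]
    simp only [sq]
  have hsum : ∑ i, leftHom (Φ i) * siteHom i (diagonal d) =
      blockDiagonal fun α : s → μ => ∑ i, d (α i) • Φ i := by
    simp only [siteHom_diagonal, leftHom_mul_rightHom_diagonal]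
    exact (map_sum (blockDiagonalAddMonoidHom ι ι (s → μ) ℝ)
      (fun i α => d (α i) • Φ i) Finset.univ).symm.trans
        (congrArg blockDiagonal (funext fun α => Finset.sum_apply α _ _))
  simp only [hsq, hsum, ← blockDiagonal_mul, quadForm_blockDiagonal]
  rw [Finset.sum_comm, Finset.mul_sum]
  refine Finset.sum_le_sum fun α _ => ?_
  simpa only [map_smul, quadForm_one, smul_eq_mul, ← Finset.sum_mul, mul_assoc]
    using hΦ (fun i => d (α i)) fun i => u (i, α)

lemma quadForm_conjStarAlgAut {κ : Type*} [Fintype κ] [DecidableEq κ]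
    (V : unitary (Matrix κ κ ℝ)) (A : Matrix κ κ ℝ) (u : κ → ℝ) :
    quadForm u (Unitary.conjStarAlgAut ℝ _ V A) = quadForm (star (V : Matrix κ κ ℝ) *ᵥ u) A := by
  rw [quadForm_mulVec, star_eq_conjTranspose, conjTranspose_eq_transpose_of_trivial,
    transpose_transpose]
  rfl

lemma exists_unitary_siteHom_diagonal {A : Matrix μ μ ℝ} (hA : A.IsSymm) :
    ∃ (V : unitary (Matrix (ι × (s → μ)) (ι × (s → μ)) ℝ)) (d : μ → ℝ),
      (∀ i, Unitary.conjStarAlgAut ℝ _ V (siteHom i (diagonal d)) = siteHom i A) ∧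
      ∀ S, Unitary.conjStarAlgAut ℝ _ V (leftHom S) = leftHom S := by
  obtain ⟨U, d, rfl⟩ := exists_conjStarAlgAut_diagonal_eq hA
  let power (B : Matrix μ μ ℝ) : Matrix (ι × (s → μ)) (ι × (s → μ)) ℝ :=
    rightHom (piKronecker fun _ => B)
  have hstar (B : Matrix μ μ ℝ) : star (power B) = power (star B) := by
    simp only [power, star_eq_conjTranspose, conjTranspose_eq_transpose_of_trivial,
      transpose_rightHom, transpose_piKronecker]
  have power_mul {B C : Matrix μ μ ℝ} (h : B * C = 1) : power B * power C = 1 := by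
    have hpi : (fun _ : s => B) * (fun _ => C) = 1 := funext fun _ => h
    rw [← map_mul, ← map_mul, hpi, map_one, map_one]
  have hV : power U * star (power U) = 1 := by
    rw [hstar, power_mul (Unitary.mul_star_self_of_mem U.2)]
  have hV' : star (power U) * power U = 1 := by
    rw [hstar, power_mul (Unitary.star_mul_self_of_mem U.2)]
  refine ⟨⟨power U, Unitary.mem_iff.2 ⟨hV', hV⟩⟩, d, fun i => ?_, fun S => ?_⟩
  · change power U * siteHom i (diagonal d) * star (power U) =
      rightHom (factorHom i ((U : Matrix μ μ ℝ) * diagonal d * star (U : Matrix μ μ ℝ)))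
    rw [factorHom_conj i (Unitary.mul_star_self_of_mem U.2), map_mul, map_mul, hstar]
    rfl
  · change power U * leftHom S * star (power U) = leftHom S
    rw [← (commute_leftHom_rightHom S _).eq, mul_assoc, hV, mul_one]

-- Joint diagonalisation of the commuting operators `siteHom i A` allows to replace the numbers
-- `y i` in the hypothesis by these operators.
lemma sum_quadForm_siteHom_le {Φ : s → Matrix ι ι ℝ} {c : ℝ}
    (hΦ : ∀ (y : s → ℝ) (w : ι → ℝ), c * (∑ i, y i ^ 2) * (w ⬝ᵥ w) ≤
      quadForm w ((∑ i, y i • Φ i) * ∑ i, y i • Φ i)) {A : Matrix μ μ ℝ} (hA : A.IsSymm)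
    (u : ι × (s → μ) → ℝ) :
    c * ∑ i, quadForm u (siteHom i A * siteHom i A) ≤
      quadForm u ((∑ i, leftHom (Φ i) * siteHom i A) * ∑ i, leftHom (Φ i) * siteHom i A) := by
  obtain ⟨V, d, hsite, hleft⟩ := exists_unitary_siteHom_diagonal (ι := ι) (s := s) hA
  have hterm (i : s) : leftHom (Φ i) * siteHom i A =
      Unitary.conjStarAlgAut ℝ _ V (leftHom (Φ i) * siteHom i (diagonal d)) := by
    rw [map_mul, hsite, hleft]
  have hsq (i : s) : siteHom i A * siteHom i A = Unitary.conjStarAlgAut ℝ _ V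
      (siteHom i (diagonal d) * siteHom i (diagonal d)) := by
    rw [map_mul, hsite]
  simp only [hterm, hsq, quadForm_conjStarAlgAut]
  rw [← map_sum (Unitary.conjStarAlgAut ℝ _ V), ← map_mul, quadForm_conjStarAlgAut]
  exact sum_quadForm_siteHom_diagonal_le hΦ d _

end Site

section Fock

variable {ι s : Type*} [Fintype ι] [DecidableEq ι] [Fintype s] [DecidableEq s] {M : ℕ}

/-- The parity `(-1)^(k₁ + k₂ + ⋯)` of the total level of a system of oscillators. -/
def parity : Matrix (ι × (s → Fin M)) (ι × (s → Fin M)) ℝ :=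
  rightHom (piKronecker fun _ => sign M)

/-- The total level of a system of oscillators. -/
def totalNumber : Matrix (ι × (s → Fin M)) (ι × (s → Fin M)) ℝ := ∑ i, siteHom i (number M)

lemma parity_eq_rightHom_diagonal : (parity : Matrix (ι × (s → Fin M)) _ ℝ) =
    rightHom (diagonal fun α => ∏ i, (-1) ^ (α i : ℕ)) := by
  simp only [parity, sign, piKronecker_diagonal]

lemma totalNumber_eq_rightHom_diagonal : (totalNumber : Matrix (ι × (s → Fin M)) _ ℝ) =
    rightHom (diagonal fun α => ∑ i, ((α i : ℕ) : ℝ)) := by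
  simp only [totalNumber, number, siteHom_diagonal, ← map_sum]
  congr 1
  exact (map_sum (diagonalAddMonoidHom (s → Fin M) ℝ) (fun i α => ((α i : ℕ) : ℝ))
    Finset.univ).symm.trans (congrArg diagonal (funext fun α => Finset.sum_apply α _ _))

lemma parity_mul_self : (parity * parity : Matrix (ι × (s → Fin M)) _ ℝ) = 1 := by
  have hpi : (fun _ : s => sign M) * (fun _ => sign M) = 1 := funext fun _ => sign_mul_self M
  rw [parity, ← map_mul, ← map_mul, hpi, map_one, map_one]

lemma isSymm_parity : (parity : Matrix (ι × (s → Fin M)) _ ℝ).IsSymm := by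
  rw [parity_eq_rightHom_diagonal, rightHom_diagonal]
  exact isSymm_diagonal _

lemma isSymm_totalNumber : (totalNumber : Matrix (ι × (s → Fin M)) _ ℝ).IsSymm := by
  rw [totalNumber_eq_rightHom_diagonal, rightHom_diagonal]
  exact isSymm_diagonal _

lemma commute_leftHom_parity (S : Matrix ι ι ℝ) :
    Commute (leftHom S) (parity : Matrix (ι × (s → Fin M)) _ ℝ) :=
  commute_leftHom_rightHom _ _

lemma commute_leftHom_totalNumber (S : Matrix ι ι ℝ) :
    Commute (leftHom S) (totalNumber : Matrix (ι × (s → Fin M)) _ ℝ) := by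
  rw [totalNumber_eq_rightHom_diagonal]
  exact commute_leftHom_rightHom _ _

lemma commute_parity_totalNumber :
    Commute (parity : Matrix (ι × (s → Fin M)) _ ℝ) totalNumber := by
  rw [parity_eq_rightHom_diagonal, totalNumber_eq_rightHom_diagonal]
  exact (commute_diagonal _ _).map rightHom

lemma parity_mul_siteHom {A : Matrix (Fin M) (Fin M) ℝ} (h : sign M * A = -(A * sign M))
    (i : s) : (parity * siteHom i A : Matrix (ι × (s → Fin M)) _ ℝ) = -(siteHom i A * parity) := by
  rw [parity, siteHom_apply, ← map_mul, piKronecker_mul_factorHom h, map_neg, map_mul]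

lemma siteHom_mul_totalNumber (i : s) (A : Matrix (Fin M) (Fin M) ℝ) :
    (siteHom i A * totalNumber - totalNumber * siteHom i A : Matrix (ι × (s → Fin M)) _ ℝ) =
      siteHom i (A * number M - number M * A) := by
  rw [totalNumber, Finset.mul_sum, Finset.sum_mul, ← Finset.sum_sub_distrib,
    Finset.sum_eq_single i]
  · rw [map_sub, map_mul, map_mul]
  · intro j _ hj
    rw [(commute_siteHom hj.symm A (number M)).eq, sub_self]
  · simp

end Fock

section DiracOperator

lemma sum_sum_eq_sum_diag {s V : Type*} [Fintype s] [AddCommGroup V] [Module ℝ V]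
    {g : s → s → V} (h : ∀ i j, i ≠ j → g i j = -g j i) : ∑ i, ∑ j, g i j = ∑ i, g i i := by
  classical
  have hdouble : (2 : ℝ) • ∑ i, ∑ j, g i j = (2 : ℝ) • ∑ i, g i i := by
    rw [two_smul]
    nth_rewrite 2 [Finset.sum_comm]
    rw [← Finset.sum_add_distrib, Finset.smul_sum]
    refine Finset.sum_congr rfl fun i _ => ?_
    rw [← Finset.sum_add_distrib, Finset.sum_eq_single i]
    · rw [two_smul]
    · intro j _ hj
      rw [h j i hj, add_neg_cancel]
    · simp
  exact smul_right_injective V two_ne_zero hdouble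

lemma sum_smul_mul_self {s R : Type*} [Fintype s] [Ring R] [Algebra ℝ R] {A : s → R}
    (h : ∀ i j, i ≠ j → A i * A j = -(A j * A i)) (y : s → ℝ) :
    (∑ i, y i • A i) * ∑ i, y i • A i = ∑ i, y i ^ 2 • (A i * A i) := by
  rw [Finset.sum_mul_sum, sum_sum_eq_sum_diag]
  · simp only [smul_mul_smul_comm, sq]
  · intro i j hij
    rw [smul_mul_smul_comm, smul_mul_smul_comm, h i j hij, smul_neg, mul_comm]

variable {ι s : Type*} [Fintype ι] [DecidableEq ι]

/-- Generators of a negative definite real Clifford algebra acting by orthogonal matrices: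
anticommuting skew-symmetric complex structures. -/
structure IsCliffordSystem (E : s → Matrix ι ι ℝ) : Prop where
  transpose_eq (i : s) : (E i)ᵀ = -E i
  mul_self (i : s) : E i * E i = -1
  anticomm (i j : s) : i ≠ j → E i * E j = -(E j * E i)

/-- Symmetric matrices anticommuting with `E`. The linear function `x ↦ ∑ i, x i • Φ i` is a
potential for the Dirac operator `∑ i, E i ∂ᵢ`. -/
structure IsDiracPotential (E Φ : s → Matrix ι ι ℝ) : Prop where
  isSymm (i : s) : (Φ i).IsSymm
  anticomm (i j : s) : E i * Φ j = -(Φ j * E i)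

/-- Quantitative invertibility of `∑ i, y i • Φ i` for `y ≠ 0`, together with a bound on the
coefficients. -/
structure IsElliptic [Fintype s] (Φ : s → Matrix ι ι ℝ) (c C : ℝ) : Prop where
  lower (y : s → ℝ) (w : ι → ℝ) :
    c * (∑ i, y i ^ 2) * (w ⬝ᵥ w) ≤ quadForm w ((∑ i, y i • Φ i) * ∑ i, y i • Φ i)
  upper (i : s) (w : ι → ℝ) : quadForm w (Φ i * Φ i) ≤ C * (w ⬝ᵥ w)

variable [Fintype s] [DecidableEq s]

/-- The Dirac operator `∑ i, E i ∂ᵢ` with the linear potential `∑ i, xᵢ • Φ i`, truncated to the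
levels below `M` of each oscillator. -/
noncomputable def dirac (M : ℕ) (E Φ : s → Matrix ι ι ℝ) :
    Matrix (ι × (s → Fin M)) (ι × (s → Fin M)) ℝ :=
  ∑ i, (leftHom (E i) * siteHom i (derivation M) + leftHom (Φ i) * siteHom i (position M))

/-- The spectral localizer of the Dirac operator: the term `(d - number) * parity` makes the
truncated operator invertible, and the signature of the sum computes the index. -/
noncomputable def localizer (M : ℕ) (E Φ : s → Matrix ι ι ℝ) (d : ℝ) :
    Matrix (ι × (s → Fin M)) (ι × (s → Fin M)) ℝ :=
  dirac M E Φ + (d • 1 - totalNumber) * parity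

variable {M : ℕ} {E Φ : s → Matrix ι ι ℝ}

lemma isSymm_dirac (hE : IsCliffordSystem E) (hΦ : IsDiracPotential E Φ) :
    (dirac M E Φ).IsSymm := by
  rw [IsSymm, dirac, transpose_sum]
  refine Finset.sum_congr rfl fun i _ => ?_
  rw [transpose_add, transpose_mul, transpose_mul, transpose_leftHom, transpose_leftHom,
    transpose_siteHom, transpose_siteHom, hE.transpose_eq, (hΦ.isSymm i).eq, transpose_derivation,
    (isSymm_position M).eq, map_neg, map_neg, neg_mul_neg, (commute_leftHom_siteHom _ _ _).eq,
    (commute_leftHom_siteHom _ _ _).eq]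

lemma isSymm_sub_totalNumber_mul_parity (d : ℝ) :
    ((d • 1 - totalNumber) * parity : Matrix (ι × (s → Fin M)) _ ℝ).IsSymm := by
  rw [IsSymm, transpose_mul, transpose_sub, transpose_smul, transpose_one, isSymm_parity.eq,
    isSymm_totalNumber.eq, mul_sub, sub_mul, commute_parity_totalNumber.eq, mul_smul_one,
    smul_one_mul]

lemma isSymm_localizer (hE : IsCliffordSystem E) (hΦ : IsDiracPotential E Φ) (d : ℝ) :
    (localizer M E Φ d).IsSymm :=
  (isSymm_dirac hE hΦ).add (isSymm_sub_totalNumber_mul_parity d)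

lemma parity_mul_dirac (M : ℕ) (E Φ : s → Matrix ι ι ℝ) :
    parity * dirac M E Φ = -(dirac M E Φ * parity) := by
  rw [dirac, Finset.mul_sum, Finset.sum_mul, ← Finset.sum_neg_distrib]
  refine Finset.sum_congr rfl fun i _ => ?_
  rw [mul_add, ← mul_assoc, ← mul_assoc, ← (commute_leftHom_parity _).eq,
    ← (commute_leftHom_parity _).eq, mul_assoc, mul_assoc,
    parity_mul_siteHom (sign_mul_derivation M), parity_mul_siteHom (sign_mul_position M)]
  noncomm_ring

lemma dirac_mul_totalNumber (M : ℕ) (E Φ : s → Matrix ι ι ℝ) :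
    dirac M E Φ * totalNumber - totalNumber * dirac M E Φ =
      ∑ i, (leftHom (E i) * siteHom i (position M) +
        leftHom (Φ i) * siteHom i (derivation M)) := by
  rw [dirac, Finset.mul_sum, Finset.sum_mul, ← Finset.sum_sub_distrib]
  refine Finset.sum_congr rfl fun i _ => ?_
  have hD := siteHom_mul_totalNumber (ι := ι) i (derivation M)
  have hX := siteHom_mul_totalNumber (ι := ι) i (position M)
  rw [derivation_mul_number] at hD
  rw [position_mul_number] at hX
  rw [mul_add totalNumber, ← mul_assoc totalNumber, ← mul_assoc totalNumber,
    ← (commute_leftHom_totalNumber _).eq, ← (commute_leftHom_totalNumber _).eq]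
  linear_combination (norm := noncomm_ring) leftHom (E i) * hD + leftHom (Φ i) * hX

lemma localizer_mul_self (M : ℕ) (E Φ : s → Matrix ι ι ℝ) (d : ℝ) :
    localizer M E Φ d * localizer M E Φ d =
      dirac M E Φ * dirac M E Φ + (d • 1 - totalNumber) * (d • 1 - totalNumber) -
      (∑ i, (leftHom (E i) * siteHom i (position M) +
        leftHom (Φ i) * siteHom i (derivation M))) * parity := by
  rw [← dirac_mul_totalNumber, localizer]
  set P := dirac M E Φ
  set R : Matrix (ι × (s → Fin M)) _ ℝ := parity
  set B : Matrix (ι × (s → Fin M)) _ ℝ := d • 1 - totalNumber with hB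
  have hRB : R * B = B * R := by
    rw [hB, mul_sub, sub_mul, commute_parity_totalNumber.eq, mul_smul_one, smul_one_mul]
  have hPB : P * B - B * P = -(P * totalNumber - totalNumber * P) := by
    rw [hB, mul_sub, sub_mul, mul_smul_one, smul_one_mul]
    abel
  calc (P + B * R) * (P + B * R)
      = P * P + B * (R * B) * R + P * B * R + B * (R * P) := by noncomm_ring
    _ = P * P + B * B * (R * R) + (P * B - B * P) * R := by
        rw [hRB, parity_mul_dirac]
        noncomm_ring
    _ = _ := by
        rw [parity_mul_self, hPB]
        noncomm_ring

lemma leftHom_mul_siteHom_mul (S S' : Matrix ι ι ℝ) (i j : s) (A B : Matrix (Fin M) (Fin M) ℝ) :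
    leftHom S * siteHom i A * (leftHom S' * siteHom j B) =
      leftHom (S * S') * (siteHom i A * siteHom j B) := by
  rw [map_mul, (commute_leftHom_siteHom S' i A).symm.mul_mul_mul_comm]

lemma sum_leftHom_mul_derivation_mul_self (hE : IsCliffordSystem E) :
    (∑ i, leftHom (E i) * siteHom i (derivation M)) *
        (∑ i, leftHom (E i) * siteHom i (derivation M)) =
      -∑ i, siteHom i (derivation M * derivation M) := by
  simp only [Finset.sum_mul_sum, leftHom_mul_siteHom_mul]
  rw [sum_sum_eq_sum_diag, ← Finset.sum_neg_distrib]
  · refine Finset.sum_congr rfl fun i _ => ?_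
    rw [hE.mul_self, map_neg, map_one, neg_one_mul, map_mul]
  · intro i j hij
    rw [hE.anticomm i j hij, map_neg, (commute_siteHom hij _ _).eq, neg_mul]

lemma sum_leftHom_mul_derivation_anticommutator (hΦ : IsDiracPotential E Φ) :
    (∑ i, leftHom (E i) * siteHom i (derivation M)) *
          (∑ i, leftHom (Φ i) * siteHom i (position M)) +
        (∑ i, leftHom (Φ i) * siteHom i (position M)) *
          (∑ i, leftHom (E i) * siteHom i (derivation M)) =
      (2 : ℝ) • ∑ i, leftHom (E i * Φ i) * (1 - (M : ℝ) • siteHom i (topLevel M)) := by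
  rw [Finset.sum_mul_sum, Finset.sum_mul_sum]
  nth_rewrite 2 [Finset.sum_comm]
  simp only [leftHom_mul_siteHom_mul, hΦ.anticomm, map_neg]
  rw [← Finset.sum_add_distrib, Finset.smul_sum]
  refine Finset.sum_congr rfl fun i _ => ?_
  rw [← Finset.sum_add_distrib, Finset.sum_eq_single i]
  · have hDX := congrArg (siteHom (ι := ι) i) (derivation_mul_position M)
    rw [map_sub, map_mul, map_mul, map_smul, map_sub, map_one, map_smul] at hDX
    rw [← mul_smul_comm, ← hDX]
    noncomm_ring
  · intro j _ hj
    rw [(commute_siteHom hj _ _).eq]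
    noncomm_ring
  · simp

lemma dirac_mul_self (hE : IsCliffordSystem E) (hΦ : IsDiracPotential E Φ) :
    dirac M E Φ * dirac M E Φ = -(∑ i, siteHom i (derivation M * derivation M)) +
      (∑ i, leftHom (Φ i) * siteHom i (position M)) *
        (∑ i, leftHom (Φ i) * siteHom i (position M)) +
      (2 : ℝ) • ∑ i, leftHom (E i * Φ i) * (1 - (M : ℝ) • siteHom i (topLevel M)) := by
  rw [dirac, Finset.sum_add_distrib, ← sum_leftHom_mul_derivation_mul_self hE,
    ← sum_leftHom_mul_derivation_anticommutator hΦ]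
  noncomm_ring

end DiracOperator

section Estimates

lemma abs_quadForm_transpose_mul_le {κ : Type*} [Fintype κ] {a : ℝ} (ha : 0 < a) (u : κ → ℝ)
    (A B : Matrix κ κ ℝ) : |quadForm u (Aᵀ * B)| ≤
      a / 2 * quadForm u (Aᵀ * A) + 1 / (2 * a) * quadForm u (Bᵀ * B) := by
  simp only [quadForm_transpose_mul]
  exact abs_dotProduct_le ha _ _

lemma quadForm_transpose_mul_self_nonneg {κ : Type*} [Fintype κ] (u : κ → ℝ)
    (A : Matrix κ κ ℝ) : 0 ≤ quadForm u (Aᵀ * A) :=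
  quadForm_transpose_mul u A A ▸ dotProduct_self_nonneg _

lemma dotProduct_self_eq_sum {ι n : Type*} [Fintype ι] [Fintype n] (u : ι × n → ℝ) :
    u ⬝ᵥ u = ∑ b, (fun i => u (i, b)) ⬝ᵥ fun i => u (i, b) := by
  simp only [dotProduct, Fintype.sum_prod_type]
  exact Finset.sum_comm

variable {ι s : Type*} [Fintype ι] [DecidableEq ι]

lemma quadForm_leftHom_le {n : Type*} [Fintype n] [DecidableEq n] {A : Matrix ι ι ℝ} {C : ℝ}
    (h : ∀ w, quadForm w A ≤ C * (w ⬝ᵥ w)) (u : ι × n → ℝ) :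
    quadForm u (leftHom A) ≤ C * (u ⬝ᵥ u) := by
  rw [quadForm_leftHom, dotProduct_self_eq_sum, Finset.mul_sum]
  exact Finset.sum_le_sum fun b _ => h _

lemma abs_quadForm_leftHom_mul_le {n : Type*} [Fintype n] [DecidableEq n] {S A : Matrix ι ι ℝ}
    {C : ℝ} (hS : Sᵀ = -S) (hSS : S * S = -1) (hA : A.IsSymm)
    (h : ∀ w, quadForm w (A * A) ≤ C * (w ⬝ᵥ w)) (u : ι × n → ℝ) :
    |quadForm u (leftHom (S * A))| ≤ (1 + C) / 2 * (u ⬝ᵥ u) := by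
  have hCS := abs_quadForm_transpose_mul_le one_pos u (leftHom S) (leftHom A)
  rw [transpose_leftHom, transpose_leftHom, hS, hA.eq, ← map_mul, ← map_mul, ← map_mul, neg_mul,
    neg_mul, hSS, neg_neg, map_one, quadForm_one, map_neg, map_neg, abs_neg] at hCS
  linarith [quadForm_leftHom_le h u]

variable [Fintype s] [DecidableEq s] {M : ℕ} {E Φ : s → Matrix ι ι ℝ} {c C : ℝ}

lemma siteHom_topLevel_mul_self (i : s) :
    (siteHom i (topLevel M) * siteHom i (topLevel M) : Matrix (ι × (s → Fin M)) _ ℝ) =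
      siteHom i (topLevel M) := by
  rw [← map_mul, topLevel_mul_self]

lemma transpose_siteHom_topLevel (i : s) :
    (siteHom i (topLevel M) : Matrix (ι × (s → Fin M)) _ ℝ)ᵀ = siteHom i (topLevel M) := by
  rw [transpose_siteHom, topLevel, diagonal_transpose]

lemma neg_le_quadForm_leftHom_mul_topLevel (hE : IsCliffordSystem E) (hΦ : IsDiracPotential E Φ)
    (hell : IsElliptic Φ c C) (i : s) (u : ι × (s → Fin M) → ℝ) :
    -((1 + C) / 2 * (u ⬝ᵥ u + M * quadForm u (siteHom i (topLevel M)))) ≤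
      quadForm u (leftHom (E i * Φ i) * (1 - (M : ℝ) • siteHom i (topLevel M))) := by
  set p : Matrix (ι × (s → Fin M)) _ ℝ := siteHom i (topLevel M) with hp
  have hpp : pᵀ * p = p := by rw [hp, transpose_siteHom_topLevel, siteHom_topLevel_mul_self]
  have hcompress : leftHom (E i * Φ i) * p = pᵀ * leftHom (E i * Φ i) * p := by
    rw [hp, transpose_siteHom_topLevel, ← (commute_leftHom_siteHom _ _ _).eq, mul_assoc,
      siteHom_topLevel_mul_self]
  have hbound := abs_quadForm_leftHom_mul_le (n := s → Fin M) (hE.transpose_eq i) (hE.mul_self i)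
    (hΦ.isSymm i) (hell.upper i)
  have hu := abs_le.1 (hbound u)
  have hpu := abs_le.1 (hbound (p *ᵥ u))
  rw [← quadForm_transpose_mul, hpp] at hpu
  rw [mul_sub, mul_one, mul_smul_comm, hcompress, map_sub, map_smul, ← quadForm_mulVec, smul_eq_mul]
  have := mul_le_mul_of_nonneg_left hpu.2 (Nat.cast_nonneg (α := ℝ) M)
  linarith [hu.1]

lemma abs_quadForm_leftHom_mul_siteHom_mul_parity_le {a : ℝ} (ha : 0 < a) (S : Matrix ι ι ℝ)
    {A : Matrix (Fin M) (Fin M) ℝ} (hA : sign M * A = -(A * sign M)) (i : s)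
    (u : ι × (s → Fin M) → ℝ) :
    |quadForm u (leftHom S * siteHom i A * parity)| ≤
      a / 2 * quadForm u (leftHom (S * Sᵀ)) + 1 / (2 * a) * quadForm u (siteHom i (Aᵀ * A)) := by
  have htr : (leftHom Sᵀ * parity : Matrix (ι × (s → Fin M)) _ ℝ)ᵀ = leftHom S * parity := by
    rw [transpose_mul, isSymm_parity.eq, transpose_leftHom, transpose_transpose,
      (commute_leftHom_parity S).eq]
  have hCS := abs_quadForm_transpose_mul_le ha u (leftHom Sᵀ * parity) (siteHom i A)
  have hswap : leftHom S * parity * siteHom i A = -(leftHom S * siteHom i A * parity) := by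
    rw [mul_assoc, parity_mul_siteHom hA, mul_neg, mul_assoc]
  have hnorm : (leftHom S * parity * (leftHom Sᵀ * parity) : Matrix (ι × (s → Fin M)) _ ℝ) =
      leftHom (S * Sᵀ) := by
    rw [(commute_leftHom_parity Sᵀ).symm.mul_mul_mul_comm, parity_mul_self, mul_one, map_mul]
  rwa [htr, hswap, hnorm, transpose_siteHom, ← map_mul, map_neg, abs_neg] at hCS

lemma localizer_estimate_site (hE : IsCliffordSystem E) (hΦ : IsDiracPotential E Φ)
    (hell : IsElliptic Φ c C) (hc : 0 < c) (hc1 : c ≤ 1) (i : s) (u : ι × (s → Fin M) → ℝ) :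
    2 * c * quadForm u (siteHom i (number M)) - (1 + C + 1 / (2 * c) + C / 2) * (u ⬝ᵥ u) -
        M * (1 + C + c) * quadForm u (siteHom i (topLevel M)) ≤
      -quadForm u (siteHom i (derivation M * derivation M)) +
        c * quadForm u (siteHom i (position M * position M)) +
        2 * quadForm u (leftHom (E i * Φ i) * (1 - (M : ℝ) • siteHom i (topLevel M))) -
        (quadForm u (leftHom (E i) * siteHom i (position M) * parity) +
          quadForm u (leftHom (Φ i) * siteHom i (derivation M) * parity)) := by
  have hCCR := congrArg (fun A => quadForm u (siteHom i A)) (position_sq_sub_derivation_sq M)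
  simp only [map_sub, map_smul, map_add, map_one, quadForm_one, smul_eq_mul] at hCCR
  have hEX := abs_quadForm_leftHom_mul_siteHom_mul_parity_le (one_div_pos.2 hc) (E i)
    (sign_mul_position M) i u
  rw [hE.transpose_eq, mul_neg, hE.mul_self, neg_neg, map_one, quadForm_one,
    (isSymm_position M).eq, mul_one_div, one_div_div, div_div, mul_comm c 2] at hEX
  have hΦD := abs_quadForm_leftHom_mul_siteHom_mul_parity_le one_pos (Φ i)
    (sign_mul_derivation M) i u
  rw [(hΦ.isSymm i).eq, transpose_derivation, neg_mul, map_neg, map_neg] at hΦD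
  have hD : 0 ≤ -quadForm u (siteHom i (derivation M * derivation M)) := by
    have h := quadForm_transpose_mul_self_nonneg u (siteHom i (derivation M))
    rwa [transpose_siteHom, transpose_derivation, ← map_mul, neg_mul, map_neg, map_neg] at h
  have hcD := mul_le_mul_of_nonneg_right hc1 hD
  have hcu : 0 ≤ c * (u ⬝ᵥ u) := mul_nonneg hc.le (dotProduct_self_nonneg u)
  have hcCCR := congrArg (c / 2 * ·) hCCR
  linarith [neg_le_quadForm_leftHom_mul_topLevel hE hΦ hell i u, le_of_abs_le hEX,
    le_of_abs_le hΦD, quadForm_leftHom_le (hell.upper i) u]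

lemma localizer_estimate (hE : IsCliffordSystem E) (hΦ : IsDiracPotential E Φ)
    (hell : IsElliptic Φ c C) (hc : 0 < c) (hc1 : c ≤ 1) (d : ℝ) (u : ι × (s → Fin M) → ℝ) :
    2 * c * quadForm u totalNumber + quadForm u ((d • 1 - totalNumber) * (d • 1 - totalNumber)) -
        Fintype.card s * (1 + C + 1 / (2 * c) + C / 2) * (u ⬝ᵥ u) -
        M * (1 + C + c) * quadForm u (∑ i, siteHom i (topLevel M)) ≤
      quadForm u (localizer M E Φ d * localizer M E Φ d) := by
  have hsum := Finset.sum_le_sum fun i (_ : i ∈ Finset.univ) =>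
    localizer_estimate_site hE hΦ hell hc hc1 i u
  have hpos := sum_quadForm_siteHom_le hell.lower (isSymm_position M) u
  simp only [localizer_mul_self, dirac_mul_self hE hΦ, totalNumber, Finset.sum_mul, add_mul,
    map_sub, map_add, map_neg, map_smul, map_sum, smul_eq_mul, ← map_mul] at hpos ⊢
  simp only [Finset.sum_add_distrib, Finset.sum_sub_distrib, ← Finset.mul_sum,
    Finset.sum_neg_distrib, Finset.sum_const, Finset.card_univ, nsmul_eq_mul] at hsum hpos ⊢
  linarith

lemma le_two_mul_add_sub_sq {c d B : ℝ} (hc : 0 ≤ c) (hd : 4 ≤ d) (hBd : B ≤ d) (hBc : B ≤ c * d)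
    {t : ℝ} (ht : 0 ≤ t) : B ≤ 2 * c * t + (d - t) ^ 2 := by
  rcases le_total t (d / 2) with h | h
  · have hsq : (d / 2) ^ 2 ≤ (d - t) ^ 2 := pow_le_pow_left₀ (by linarith) (by linarith) 2
    nlinarith [mul_nonneg hc ht]
  · nlinarith [mul_le_mul_of_nonneg_left h hc, sq_nonneg (d - t)]

lemma exists_le_sub_sq (d B : ℝ) {W : ℝ} (hW : 0 ≤ W) :
    ∃ M : ℕ, d < M ∧ ∀ t : ℝ, (M : ℝ) - 1 ≤ t → B + M * W ≤ (d - t) ^ 2 := by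
  obtain ⟨M, hM⟩ := exists_nat_ge (2 * (|d| + 1) + 4 * W + 4 * |B| + 4)
  have hd := le_abs_self d
  have hd0 := abs_nonneg d
  have hB := le_abs_self B
  have hB0 := abs_nonneg B
  refine ⟨M, by linarith, fun t ht => ?_⟩
  have hsq : ((M : ℝ) / 2) ^ 2 ≤ (t - d) ^ 2 := pow_le_pow_left₀ (by positivity) (by linarith) 2
  have hM2 : (4 * W + 4 * |B|) * M ≤ M * M :=
    mul_le_mul_of_nonneg_right (by linarith) (Nat.cast_nonneg M)
  nlinarith [mul_le_mul_of_nonneg_left (show (1 : ℝ) ≤ M by linarith) hB0]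

lemma exists_level_gap (s : Type*) [Fintype s] {c w : ℝ} (hc : 0 < c) (hw : 0 ≤ w) (B : ℝ) :
    ∃ (M : ℕ) (d : ℝ), 1 / 2 ≤ d ∧ d < M ∧ ∀ α : s → Fin M,
      B ≤ 2 * c * (∑ i, ((α i : ℕ) : ℝ)) + (d - ∑ i, ((α i : ℕ) : ℝ)) ^ 2 -
        M * w * ∑ i, if (α i : ℕ) + 1 = M then 1 else 0 := by
  let d := max 4 (max B (B / c))
  obtain ⟨M, hdM, hM⟩ := exists_le_sub_sq d B (W := w * Fintype.card s) (by positivity)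
  have hd : 4 ≤ d := le_max_left _ _
  refine ⟨M, d, by linarith, hdM, fun α => ?_⟩
  have hlevel : (0 : ℝ) ≤ ∑ i, ((α i : ℕ) : ℝ) := by positivity
  by_cases htop : ∃ i, (α i : ℕ) + 1 = M
  · obtain ⟨i, hi⟩ := htop
    have hMi : ((α i : ℕ) : ℝ) + 1 = M := mod_cast hi
    have hle : ((α i : ℕ) : ℝ) ≤ ∑ i, ((α i : ℕ) : ℝ) :=
      Finset.single_le_sum (f := fun i => ((α i : ℕ) : ℝ)) (fun _ _ => by positivity)
        (Finset.mem_univ i)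
    have hcount : (∑ i, if (α i : ℕ) + 1 = M then (1 : ℝ) else 0) ≤ Fintype.card s := by
      rw [Finset.sum_boole]
      exact mod_cast Finset.card_le_univ _
    have := hM (∑ i, ((α i : ℕ) : ℝ)) (by linarith)
    have := mul_le_mul_of_nonneg_left hcount (show 0 ≤ M * w by positivity)
    have : 0 ≤ 2 * c * ∑ i, ((α i : ℕ) : ℝ) := by positivity
    linarith
  · push Not at htop
    simp only [htop, if_false, Finset.sum_const_zero, mul_zero, sub_zero]
    exact le_two_mul_add_sub_sq hc.le hd ((le_max_left _ _).trans (le_max_right _ _))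
      ((div_le_iff₀' hc).1 ((le_max_right _ _).trans (le_max_right _ _))) hlevel

lemma quadForm_rightHom_diagonal {m n : Type*} [Fintype m] [DecidableEq m] [Fintype n]
    [DecidableEq n] (f : n → ℝ) (u : m × n → ℝ) :
    quadForm u (rightHom (diagonal f)) = ∑ p, f p.2 * u p ^ 2 := by
  rw [rightHom_diagonal, quadForm_diagonal]

theorem exists_localizer_gap (s : Type*) [Fintype s] [DecidableEq s] {c C : ℝ} (hc : 0 < c)
    (hc1 : c ≤ 1) (hC : 0 ≤ C) (Γ : ℝ) :
    ∃ (M : ℕ) (d : ℝ), 1 / 2 ≤ d ∧ d < M ∧ ∀ {ι : Type*} [Fintype ι] [DecidableEq ι]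
      {E Φ : s → Matrix ι ι ℝ}, IsCliffordSystem E → IsDiracPotential E Φ → IsElliptic Φ c C →
      ∀ u, Γ * (u ⬝ᵥ u) ≤ quadForm u (localizer M E Φ d * localizer M E Φ d) := by
  obtain ⟨M, d, hd, hdM, hgap⟩ := exists_level_gap s hc (w := 1 + C + c) (by positivity)
    (Γ + Fintype.card s * (1 + C + 1 / (2 * c) + C / 2))
  refine ⟨M, d, hd, hdM, fun {ι} _ _ E Φ hE hΦ hell u => ?_⟩
  refine le_trans ?_ (localizer_estimate hE hΦ hell hc hc1 d u)
  have hsub : (d • 1 - totalNumber : Matrix (ι × (s → Fin M)) _ ℝ) =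
      rightHom (diagonal fun α => d - ∑ i, ((α i : ℕ) : ℝ)) := by
    rw [totalNumber_eq_rightHom_diagonal, ← map_one (rightHom (m := ι)), ← map_smul, ← map_sub,
      smul_one_eq_diagonal, diagonal_sub]
  rw [hsub, ← map_mul, diagonal_mul_diagonal, totalNumber_eq_rightHom_diagonal, map_sum]
  simp only [topLevel, siteHom_diagonal, quadForm_rightHom_diagonal]
  rw [Finset.sum_comm, ← quadForm_one, ← diagonal_one, quadForm_diagonal]
  simp only [Finset.mul_sum, ← Finset.sum_add_distrib, ← Finset.sum_sub_distrib]
  refine Finset.sum_le_sum fun p _ => ?_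
  simp only [← Finset.mul_sum, ← Finset.sum_mul]
  linarith [mul_le_mul_of_nonneg_right (hgap p.2) (sq_nonneg (u p))]

end Estimates

section Occupation

lemma quadForm_le_of_isIdempotentElem {κ : Type*} [Fintype κ] {P : Matrix κ κ ℝ} (hP : P.IsSymm)
    (hPP : P * P = P) (w : κ → ℝ) : quadForm w P ≤ w ⬝ᵥ w := by
  classical
  have hsq : (1 - P)ᵀ * (1 - P) = 1 - P := by
    rw [transpose_sub, transpose_one, hP.eq, mul_sub, mul_one, sub_mul, one_mul, hPP, sub_self,
      sub_zero]
  have h := quadForm_transpose_mul_self_nonneg w (1 - P)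
  rw [hsq, map_sub, quadForm_one] at h
  linarith

lemma finrank_range_mulVecLin_of_isIdempotentElem {κ : Type*} [Fintype κ] {P : Matrix κ κ ℝ}
    (hPP : P * P = P) : (Module.finrank ℝ (LinearMap.range P.mulVecLin) : ℝ) = trace P := by
  classical
  have hproj : LinearMap.IsProj (LinearMap.range P.mulVecLin) P.mulVecLin :=
    ⟨fun x => ⟨x, rfl⟩, by
      rintro _ ⟨x, rfl⟩
      rw [mulVecLin_apply, mulVecLin_apply, mulVec_mulVec, hPP]⟩
  rw [← hproj.trace, ← toLin'_apply', trace_toLin'_eq]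

variable {ι s : Type*} [Fintype ι] [DecidableEq ι]

/-- A Dirac potential which is itself a system of generators of a positive definite Clifford
algebra. The corresponding Dirac operator is the Bott–Dirac operator, a supersymmetric harmonic
oscillator. -/
structure IsBottPotential (E C : s → Matrix ι ι ℝ) : Prop extends IsDiracPotential E C where
  mul_self (i : s) : C i * C i = 1
  anticomm_self (i j : s) : i ≠ j → C i * C j = -(C j * C i)

/-- The occupation number, with eigenvalues `0` and `1`, of the `i`-th fermion of the Bott–Dirac
operator. -/
noncomputable def occupation (E C : s → Matrix ι ι ℝ) (i : s) : Matrix ι ι ℝ :=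
  (1 / 2 : ℝ) • (1 + E i * C i)

variable {E C : s → Matrix ι ι ℝ}

lemma mul_eq_two_smul_occupation_sub_one (E C : s → Matrix ι ι ℝ) (i : s) :
    E i * C i = (2 : ℝ) • occupation E C i - 1 := by
  rw [occupation]
  module

lemma isSymm_occupation (hE : IsCliffordSystem E) (hC : IsBottPotential E C) (i : s) :
    (occupation E C i).IsSymm := by
  rw [IsSymm, occupation, transpose_smul, transpose_add, transpose_one, transpose_mul,
    hE.transpose_eq, (hC.isSymm i).eq, mul_neg, ← hC.anticomm]

lemma occupation_mul_self (hE : IsCliffordSystem E) (hC : IsBottPotential E C) (i : s) :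
    occupation E C i * occupation E C i = occupation E C i := by
  have hsq : E i * C i * (E i * C i) = 1 := by
    rw [mul_assoc, ← mul_assoc (C i), ← neg_eq_iff_eq_neg.2 (hC.anticomm i i), neg_mul, mul_neg,
      mul_assoc (E i) (C i), hC.mul_self, mul_one, hE.mul_self, neg_neg]
  rw [occupation, smul_mul_smul_comm, add_mul, mul_add, mul_add, hsq, one_mul, mul_one, one_mul]
  module

lemma commute_occupation_of_anticomm {A : Matrix ι ι ℝ} {i : s} (hE : A * E i = -(E i * A))
    (hC : A * C i = -(C i * A)) : Commute A (occupation E C i) := by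
  refine ((Commute.one_right A).add_right ?_).smul_right _
  rw [Commute, SemiconjBy, ← mul_assoc, hE, neg_mul, mul_assoc, hC, mul_neg, neg_neg, mul_assoc]

lemma commute_clifford_occupation (hE : IsCliffordSystem E) (hC : IsBottPotential E C) {i j : s}
    (hij : i ≠ j) : Commute (E i) (occupation E C j) :=
  commute_occupation_of_anticomm (hE.anticomm i j hij) (hC.anticomm i j)

lemma commute_potential_occupation (hC : IsBottPotential E C) {i j : s}
    (hij : i ≠ j) : Commute (C i) (occupation E C j) :=
  commute_occupation_of_anticomm (neg_eq_iff_eq_neg.2 (hC.anticomm j i)).symm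
    (hC.anticomm_self i j hij)

lemma commute_occupation (hE : IsCliffordSystem E) (hC : IsBottPotential E C) (i j : s) :
    Commute (occupation E C i) (occupation E C j) := by
  rcases eq_or_ne i j with rfl | hij
  · exact Commute.refl _
  · exact (((Commute.one_left _).add_left ((commute_clifford_occupation hE hC hij).mul_left
      (commute_potential_occupation hC hij))).smul_left _)

lemma clifford_mul_occupation (hE : IsCliffordSystem E) (hC : IsBottPotential E C) (i : s) :
    E i * occupation E C i - occupation E C i * E i = -C i := by
  have hl : E i * (E i * C i) = -C i := by rw [← mul_assoc, hE.mul_self, neg_one_mul]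
  have hr : E i * C i * E i = C i := by
    rw [hC.anticomm, neg_mul, mul_assoc, hE.mul_self, mul_neg_one, neg_neg]
  rw [occupation, mul_smul_comm, smul_mul_assoc, mul_add, add_mul, hl, hr, mul_one, one_mul]
  module

lemma potential_mul_occupation (hC : IsBottPotential E C) (i : s) :
    C i * occupation E C i - occupation E C i * C i = -E i := by
  have hr : E i * C i * C i = E i := by rw [mul_assoc, hC.mul_self, mul_one]
  have hl : C i * (E i * C i) = -E i := by
    rw [← mul_assoc, ← neg_eq_iff_eq_neg.2 (hC.anticomm i i), neg_mul, hr]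
  rw [occupation, mul_smul_comm, smul_mul_assoc, mul_add, add_mul, hl, hr, mul_one, one_mul]
  module

lemma potential_mul_occupation_mul_potential (hC : IsBottPotential E C) (i : s) :
    C i * occupation E C i * C i = 1 - occupation E C i := by
  rw [sub_eq_iff_eq_add.1 (potential_mul_occupation hC i), add_mul, neg_mul, mul_assoc,
    hC.mul_self, mul_one, mul_eq_two_smul_occupation_sub_one]
  module

lemma quadForm_occupation (hE : IsCliffordSystem E) (hC : IsBottPotential E C) (i : s)
    (w : ι → ℝ) : quadForm w (occupation E C i) =
      (occupation E C i *ᵥ w) ⬝ᵥ (occupation E C i *ᵥ w) := by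
  rw [← quadForm_transpose_mul, (isSymm_occupation hE hC i).eq, occupation_mul_self hE hC]

lemma quadForm_occupation_nonneg (hE : IsCliffordSystem E) (hC : IsBottPotential E C) (i : s)
    (w : ι → ℝ) : 0 ≤ quadForm w (occupation E C i) :=
  quadForm_occupation hE hC i w ▸ dotProduct_self_nonneg _

variable [Fintype s]

lemma IsBottPotential.sum_smul_mul_self (hC : IsBottPotential E C) (y : s → ℝ) :
    (∑ i, y i • C i) * ∑ i, y i • C i = (∑ i, y i ^ 2) • 1 := by
  rw [HurwitzRadon.sum_smul_mul_self hC.anticomm_self, Finset.sum_smul]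
  simp only [hC.mul_self]

lemma clifford_mul_sum_occupation (hE : IsCliffordSystem E) (hC : IsBottPotential E C) (i : s) :
    E i * (∑ j, occupation E C j) - (∑ j, occupation E C j) * E i = -C i := by
  rw [Finset.mul_sum, Finset.sum_mul, ← Finset.sum_sub_distrib, Fintype.sum_eq_single i,
    clifford_mul_occupation hE hC]
  exact fun j hj => sub_eq_zero.2 (commute_clifford_occupation hE hC hj.symm).eq

lemma potential_mul_sum_occupation (hC : IsBottPotential E C) (i : s) :
    C i * (∑ j, occupation E C j) - (∑ j, occupation E C j) * C i = -E i := by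
  rw [Finset.mul_sum, Finset.sum_mul, ← Finset.sum_sub_distrib, Fintype.sum_eq_single i,
    potential_mul_occupation hC]
  exact fun j hj => sub_eq_zero.2 (commute_potential_occupation hC hj.symm).eq

lemma isSymm_sum_occupation (hE : IsCliffordSystem E) (hC : IsBottPotential E C) :
    (∑ i, occupation E C i).IsSymm := by
  rw [IsSymm, transpose_sum]
  exact Finset.sum_congr rfl fun i _ => isSymm_occupation hE hC i

lemma dotProduct_sum_self_le {κ : Type*} [Fintype κ] (v : s → κ → ℝ) :
    (∑ i, v i) ⬝ᵥ (∑ i, v i) ≤ Fintype.card s * ∑ i, v i ⬝ᵥ v i := by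
  simp only [dotProduct, Finset.sum_apply]
  rw [Finset.sum_comm, Finset.mul_sum]
  refine Finset.sum_le_sum fun k _ => ?_
  simpa only [sq, Finset.card_univ] using
    sq_sum_le_card_mul_sum_sq (s := Finset.univ) (f := fun i => v i k)

lemma quadForm_sum_occupation_mul_self_le (hE : IsCliffordSystem E) (hC : IsBottPotential E C)
    (w : ι → ℝ) : quadForm w ((∑ i, occupation E C i) * ∑ i, occupation E C i) ≤
      Fintype.card s ^ 2 * (w ⬝ᵥ w) := by
  calc quadForm w ((∑ i, occupation E C i) * ∑ i, occupation E C i)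
      = (∑ i, occupation E C i *ᵥ w) ⬝ᵥ ∑ i, occupation E C i *ᵥ w := by
        nth_rewrite 1 [← (isSymm_sum_occupation hE hC).eq]
        rw [quadForm_transpose_mul, sum_mulVec]
    _ ≤ Fintype.card s * ∑ i, (occupation E C i *ᵥ w) ⬝ᵥ (occupation E C i *ᵥ w) :=
        dotProduct_sum_self_le _
    _ ≤ Fintype.card s * ∑ _i : s, w ⬝ᵥ w := by
        gcongr with i
        rw [← quadForm_occupation hE hC]
        exact quadForm_le_of_isIdempotentElem (isSymm_occupation hE hC i)
          (occupation_mul_self hE hC i) w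
    _ = Fintype.card s ^ 2 * (w ⬝ᵥ w) := by
        rw [Finset.sum_const, Finset.card_univ, nsmul_eq_mul, sq, mul_assoc]

lemma quadForm_smul_one_sub_sum_occupation_neg (hE : IsCliffordSystem E) (hC : IsBottPotential E C)
    {a : ℝ} (ha : a < 0) {w : ι → ℝ} (hw : w ≠ 0) :
    quadForm w (a • 1 - ∑ i, occupation E C i) < 0 := by
  rw [map_sub, map_smul, quadForm_one, map_sum, smul_eq_mul]
  linarith [mul_neg_of_neg_of_pos ha (dotProduct_self_pos hw),
    Finset.sum_nonneg fun i (_ : i ∈ Finset.univ) => quadForm_occupation_nonneg hE hC i w]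

end Occupation

section Vacuum

variable {ι s : Type*} [Fintype ι] [DecidableEq ι] {E C : s → Matrix ι ι ℝ}

/-- `Q` is the projection to the states in which no fermion of `t` is occupied. -/
structure IsVacuumProjection (E C : s → Matrix ι ι ℝ) (t : Finset s) (Q : Matrix ι ι ℝ) :
    Prop where
  isSymm : Q.IsSymm
  mul_self : Q * Q = Q
  commute_occupation (i : s) : Commute (occupation E C i) Q
  commute_potential (i : s) : i ∉ t → Commute (C i) Q
  occupation_mul (i : s) : i ∈ t → occupation E C i * Q = 0
  dotProduct_le (u : ι → ℝ) : u ⬝ᵥ u ≤ quadForm u Q + ∑ i ∈ t, quadForm u (occupation E C i)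
  trace_eq : (2 : ℝ) ^ t.card * trace Q = Fintype.card ι

lemma isVacuumProjection_empty (E C : s → Matrix ι ι ℝ) : IsVacuumProjection E C ∅ 1 where
  isSymm := isSymm_one
  mul_self := one_mul 1
  commute_occupation _ := Commute.one_right _
  commute_potential _ _ := Commute.one_right _
  occupation_mul _ h := absurd h (Finset.notMem_empty _)
  dotProduct_le u := by simp [quadForm_one]
  trace_eq := by simp

-- The potential `C k` exchanges the states in which `k` is occupied with those in which it is not.
lemma trace_one_sub_occupation_mul (hC : IsBottPotential E C) {k : s} {Q : Matrix ι ι ℝ}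
    (hQ : Commute (C k) Q) : 2 * trace ((1 - occupation E C k) * Q) = trace Q := by
  have hswap : trace ((1 - occupation E C k) * Q) = trace (occupation E C k * Q) := by
    rw [← potential_mul_occupation_mul_potential hC, mul_assoc, hQ.eq, mul_assoc, trace_mul_comm,
      mul_assoc, mul_assoc, hC.mul_self, mul_one]
  have hsub : trace ((1 - occupation E C k) * Q) = trace Q - trace (occupation E C k * Q) := by
    rw [sub_mul, one_mul, trace_sub]
  linarith

lemma quadForm_occupation_mul_le (hE : IsCliffordSystem E) (hC : IsBottPotential E C) {k : s}
    {Q : Matrix ι ι ℝ} (hQ : Q.IsSymm) (hQQ : Q * Q = Q) (hk : Commute (occupation E C k) Q)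
    (u : ι → ℝ) : quadForm u (occupation E C k * Q) ≤ quadForm u (occupation E C k) := by
  have hcompress : occupation E C k * Q = (occupation E C k)ᵀ * Q * occupation E C k := by
    rw [(isSymm_occupation hE hC k).eq, mul_assoc, ← hk.eq, ← mul_assoc, occupation_mul_self hE hC]
  rw [hcompress, ← quadForm_mulVec, quadForm_occupation hE hC]
  exact quadForm_le_of_isIdempotentElem hQ hQQ _

lemma IsVacuumProjection.insert [DecidableEq s] (hE : IsCliffordSystem E)
    (hC : IsBottPotential E C) {t : Finset s} {k : s} (hk : k ∉ t) {Q : Matrix ι ι ℝ}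
    (hQ : IsVacuumProjection E C t Q) :
    IsVacuumProjection E C (insert k t) ((1 - occupation E C k) * Q) := by
  have hcomm : Commute (1 - occupation E C k) Q :=
    (Commute.one_left _).sub_left (hQ.commute_occupation k)
  have hzero : occupation E C k * (1 - occupation E C k) = 0 := by
    rw [mul_sub, mul_one, occupation_mul_self hE hC, sub_self]
  have hidem : (1 - occupation E C k) * (1 - occupation E C k) = 1 - occupation E C k := by
    rw [sub_mul, hzero, one_mul, sub_zero]
  refine ⟨?_, ?_, fun i => ?_, fun i hi => ?_, fun i hi => ?_, fun u => ?_, ?_⟩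
  · rw [IsSymm, transpose_mul, hQ.isSymm.eq, transpose_sub, transpose_one,
      (isSymm_occupation hE hC k).eq, hcomm.eq]
  · rw [hcomm.symm.mul_mul_mul_comm, hidem, hQ.mul_self]
  · exact ((Commute.one_right _).sub_right (HurwitzRadon.commute_occupation hE hC i k)).mul_right
      (hQ.commute_occupation i)
  · rw [Finset.mem_insert, not_or] at hi
    exact ((Commute.one_right _).sub_right (commute_potential_occupation hC hi.1)).mul_right
      (hQ.commute_potential i hi.2)
  · rcases Finset.mem_insert.1 hi with rfl | hi
    · rw [← mul_assoc, hzero, zero_mul]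
    · rw [hcomm.eq, ← mul_assoc, hQ.occupation_mul i hi, zero_mul]
  · rw [Finset.sum_insert hk, sub_mul, one_mul, map_sub]
    linarith [hQ.dotProduct_le u,
      quadForm_occupation_mul_le hE hC hQ.isSymm hQ.mul_self (hQ.commute_occupation k) u]
  · rw [Finset.card_insert_of_notMem hk, pow_succ, mul_assoc,
      trace_one_sub_occupation_mul hC (hQ.commute_potential k hk), hQ.trace_eq]

lemma exists_isVacuumProjection (hE : IsCliffordSystem E) (hC : IsBottPotential E C)
    (t : Finset s) : ∃ Q, IsVacuumProjection E C t Q := by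
  classical
  induction t using Finset.induction_on with
  | empty => exact ⟨1, isVacuumProjection_empty E C⟩
  | insert k t hk ih =>
    obtain ⟨Q, hQ⟩ := ih
    exact ⟨_, hQ.insert hE hC hk⟩

lemma exists_hasPosIndex_half_sub_sum_occupation [Fintype s] (hE : IsCliffordSystem E)
    (hC : IsBottPotential E C) :
    ∃ r, HasPosIndex ((1 / 2 : ℝ) • 1 - ∑ i, occupation E C i) r ∧
      2 ^ Fintype.card s * r = Fintype.card ι := by
  obtain ⟨Q, hQ⟩ := exists_isVacuumProjection hE hC Finset.univ
  have hval (u : ι → ℝ) : quadForm u ((1 / 2 : ℝ) • 1 - ∑ i, occupation E C i) =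
      1 / 2 * (u ⬝ᵥ u) - ∑ i, quadForm u (occupation E C i) := by
    rw [map_sub, map_smul, quadForm_one, map_sum, smul_eq_mul]
  refine ⟨_, ⟨LinearMap.range Q.mulVecLin, LinearMap.ker Q.mulVecLin, rfl, ?_, ?_, ?_⟩, ?_⟩
  · rw [LinearMap.finrank_range_add_finrank_ker, Module.finrank_fintype_fun_eq_card]
  · rintro _ ⟨u, rfl⟩ h0
    have hvac (i : s) : quadForm (Q *ᵥ u) (occupation E C i) = 0 := by
      rw [quadForm_apply, mulVec_mulVec, hQ.occupation_mul i (Finset.mem_univ i), zero_mulVec,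
        dotProduct_zero]
    have hpos := dotProduct_self_pos h0
    rw [mulVecLin_apply] at hpos ⊢
    simp only [hval, hvac, Finset.sum_const_zero]
    linarith
  · intro u hu h0
    have hle := hQ.dotProduct_le u
    rw [quadForm_apply, show Q *ᵥ u = 0 from hu, dotProduct_zero] at hle
    rw [hval]
    linarith [dotProduct_self_pos h0]
  · have htrace := hQ.trace_eq
    rw [← finrank_range_mulVecLin_of_isIdempotentElem hQ.mul_self, Finset.card_univ] at htrace
    exact_mod_cast htrace

end Vacuum

section BottDirac

variable {ι s : Type*} [Fintype ι] [DecidableEq ι] [Fintype s] [DecidableEq s] {M : ℕ}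

/-- The level of the `i`-th supersymmetric oscillator, counting bosons and fermions. -/
noncomputable def siteLevel (M : ℕ) (E C : s → Matrix ι ι ℝ) (i : s) :
    Matrix (ι × (s → Fin M)) (ι × (s → Fin M)) ℝ :=
  siteHom i (number M) + leftHom (occupation E C i)

/-- The total level of the supersymmetric oscillators. It commutes with the Bott–Dirac operator. -/
noncomputable def totalLevel (M : ℕ) (E C : s → Matrix ι ι ℝ) :
    Matrix (ι × (s → Fin M)) (ι × (s → Fin M)) ℝ :=
  ∑ i, siteLevel M E C i

variable {E C : s → Matrix ι ι ℝ}

lemma totalLevel_eq (M : ℕ) (E C : s → Matrix ι ι ℝ) :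
    totalLevel M E C = totalNumber + leftHom (∑ i, occupation E C i) := by
  simp only [totalLevel, siteLevel, totalNumber, Finset.sum_add_distrib, map_sum]

lemma isSymm_totalLevel (hE : IsCliffordSystem E) (hC : IsBottPotential E C) :
    (totalLevel M E C).IsSymm := by
  rw [IsSymm, totalLevel_eq, transpose_add, isSymm_totalNumber.eq, transpose_leftHom,
    (isSymm_sum_occupation hE hC).eq]

lemma commute_parity_totalLevel (M : ℕ) (E C : s → Matrix ι ι ℝ) :
    Commute parity (totalLevel M E C) :=
  totalLevel_eq M E C ▸ commute_parity_totalNumber.add_right (commute_leftHom_parity _).symm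

lemma commute_dirac_totalLevel (hE : IsCliffordSystem E) (hC : IsBottPotential E C) :
    Commute (dirac M E C) (totalLevel M E C) := by
  have hocc : dirac M E C * leftHom (∑ i, occupation E C i) -
      leftHom (∑ i, occupation E C i) * dirac M E C =
        -∑ i, (leftHom (E i) * siteHom i (position M) +
          leftHom (C i) * siteHom i (derivation M)) := by
    rw [dirac, Finset.mul_sum, Finset.sum_mul, ← Finset.sum_sub_distrib,
      ← Finset.sum_neg_distrib]
    refine Finset.sum_congr rfl fun i _ => ?_
    have hEF := congrArg (leftHom (n := s → Fin M)) (clifford_mul_sum_occupation hE hC i)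
    have hCF := congrArg (leftHom (n := s → Fin M)) (potential_mul_sum_occupation hC i)
    rw [map_sub, map_mul, map_mul, map_neg] at hEF hCF
    rw [add_mul, mul_assoc, mul_assoc, ← (commute_leftHom_siteHom _ _ _).eq,
      ← (commute_leftHom_siteHom _ _ _).eq]
    linear_combination (norm := noncomm_ring) hEF * siteHom i (derivation M) +
      hCF * siteHom i (position M)
  refine sub_eq_zero.1 ?_
  rw [totalLevel_eq]
  linear_combination (norm := noncomm_ring) dirac_mul_totalNumber M E C + hocc

lemma commute_siteHom_diagonal_totalLevel (E C : s → Matrix ι ι ℝ) (i : s) (d : Fin M → ℝ) :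
    Commute (siteHom i (diagonal d)) (totalLevel M E C) := by
  rw [totalLevel_eq, totalNumber_eq_rightHom_diagonal, siteHom_diagonal]
  exact ((commute_diagonal _ _).map rightHom).add_right (commute_leftHom_rightHom _ _).symm

lemma commute_leftHom_occupation_totalLevel (hE : IsCliffordSystem E)
    (hC : IsBottPotential E C) (i : s) :
    Commute (leftHom (occupation E C i)) (totalLevel M E C) := by
  rw [totalLevel_eq]
  exact (commute_leftHom_totalNumber _).add_right
    ((Commute.sum_right _ _ _ fun j _ => commute_occupation hE hC i j).map leftHom)

lemma quadForm_siteHom_diagonal_nonneg {d : Fin M → ℝ} (hd : ∀ k, 0 ≤ d k) (i : s)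
    (u : ι × (s → Fin M) → ℝ) : 0 ≤ quadForm u (siteHom i (diagonal d)) := by
  rw [siteHom_diagonal, quadForm_rightHom_diagonal]
  exact Finset.sum_nonneg fun p _ => mul_nonneg (hd _) (sq_nonneg _)

lemma quadForm_siteHom_number_nonneg (i : s) (u : ι × (s → Fin M) → ℝ) :
    0 ≤ quadForm u (siteHom i (number M)) :=
  quadForm_siteHom_diagonal_nonneg (fun _ => Nat.cast_nonneg _) i u

lemma quadForm_leftHom_occupation_nonneg (hE : IsCliffordSystem E) (hC : IsBottPotential E C)
    (i : s) (u : ι × (s → Fin M) → ℝ) : 0 ≤ quadForm u (leftHom (occupation E C i)) := by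
  rw [quadForm_leftHom]
  exact Finset.sum_nonneg fun _ _ => quadForm_occupation_nonneg hE hC i _

lemma quadForm_siteLevel_le (hE : IsCliffordSystem E) (hC : IsBottPotential E C) (i : s)
    (u : ι × (s → Fin M) → ℝ) :
    quadForm u (siteLevel M E C i) ≤ quadForm u (totalLevel M E C) := by
  rw [totalLevel, map_sum]
  refine Finset.single_le_sum (f := fun i => quadForm u (siteLevel M E C i)) (fun j _ => ?_)
    (Finset.mem_univ i)
  rw [siteLevel, map_add]
  exact add_nonneg (quadForm_siteHom_number_nonneg j u)
    (quadForm_leftHom_occupation_nonneg hE hC j u)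

-- `A` preserves the eigenspace of the total level, which cannot contain a vector of higher level.
lemma mulVec_eq_zero_of_lt_siteLevel (hE : IsCliffordSystem E) (hC : IsBottPotential E C)
    {A : Matrix (ι × (s → Fin M)) (ι × (s → Fin M)) ℝ} (hA : Commute A (totalLevel M E C))
    {τ l : ℝ} (hτ : τ < l) {u : ι × (s → Fin M) → ℝ} (hu : totalLevel M E C *ᵥ u = τ • u) {i : s}
    (hl : l * (A *ᵥ u ⬝ᵥ A *ᵥ u) ≤ quadForm (A *ᵥ u) (siteLevel M E C i)) : A *ᵥ u = 0 := by
  have heig : totalLevel M E C *ᵥ A *ᵥ u = τ • A *ᵥ u := by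
    rw [mulVec_mulVec, ← hA.eq, ← mulVec_mulVec, hu, mulVec_smul]
  have hle := quadForm_siteLevel_le hE hC i (A *ᵥ u)
  rw [quadForm_apply _ (totalLevel M E C), heig, dotProduct_smul, smul_eq_mul] at hle
  by_contra h0
  nlinarith [dotProduct_self_pos h0]

lemma sum_leftHom_mul_position_mul_self (hC : IsBottPotential E C) :
    (∑ i, leftHom (C i) * siteHom i (position M)) *
        (∑ i, leftHom (C i) * siteHom i (position M)) =
      ∑ i, siteHom i (position M * position M) := by
  simp only [Finset.sum_mul_sum, leftHom_mul_siteHom_mul]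
  rw [sum_sum_eq_sum_diag]
  · refine Finset.sum_congr rfl fun i _ => ?_
    rw [hC.mul_self, map_one, one_mul, map_mul]
  · intro i j hij
    rw [hC.anticomm_self i j hij, map_neg, (commute_siteHom hij _ _).eq, neg_mul]

lemma bottDirac_mul_self (hE : IsCliffordSystem E) (hC : IsBottPotential E C) :
    dirac M E C * dirac M E C = (4 : ℝ) • (totalLevel M E C -
      (M : ℝ) • ∑ i, leftHom (occupation E C i) * siteHom i (topLevel M)) := by
  rw [dirac_mul_self hE hC.toIsDiracPotential, sum_leftHom_mul_position_mul_self hC, totalLevel,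
    Finset.smul_sum, Finset.smul_sum, ← Finset.sum_neg_distrib, ← Finset.sum_add_distrib,
    ← Finset.sum_add_distrib, ← Finset.sum_sub_distrib, Finset.smul_sum]
  refine Finset.sum_congr rfl fun i _ => ?_
  have hosc := congrArg (siteHom (ι := ι) i) (position_sq_sub_derivation_sq M)
  simp only [map_sub, map_add, map_smul, map_one] at hosc
  rw [neg_add_eq_sub, hosc, mul_eq_two_smul_occupation_sub_one, map_sub, map_smul, map_one,
    sub_mul, one_mul, smul_mul_assoc, mul_sub, mul_one, mul_smul_comm, siteLevel]
  module

end BottDirac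

section BottKernel

variable {ι s : Type*} [Fintype ι] [DecidableEq ι] [Fintype s] [DecidableEq s] {M : ℕ}
  {E C : s → Matrix ι ι ℝ}

lemma siteLevel_mul_occupation_mul_topLevel (hE : IsCliffordSystem E) (hC : IsBottPotential E C)
    (i : s) :
    siteLevel M E C i * (leftHom (occupation E C i) * siteHom i (topLevel M)) =
      (M : ℝ) • (leftHom (occupation E C i) * siteHom i (topLevel M)) := by
  rw [siteLevel, add_mul, ← mul_assoc, ← (commute_leftHom_siteHom _ _ _).eq, mul_assoc, ← map_mul,
    number_mul_topLevel, ← mul_assoc (leftHom _), ← map_mul, occupation_mul_self hE hC, map_smul,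
    mul_smul_comm]
  module

lemma eq_zero_of_bottDirac_mulVec_eq_zero (hE : IsCliffordSystem E) (hC : IsBottPotential E C)
    {τ : ℝ} (hτ : 0 < τ) (hτM : τ < M) {u : ι × (s → Fin M) → ℝ} (hD : dirac M E C *ᵥ u = 0)
    (hu : totalLevel M E C *ᵥ u = τ • u) : u = 0 := by
  have htop (i : s) : (leftHom (occupation E C i) * siteHom i (topLevel M)) *ᵥ u = 0 := by
    refine mulVec_eq_zero_of_lt_siteLevel hE hC (i := i) ?_ hτM hu ?_
    · exact (commute_leftHom_occupation_totalLevel hE hC i).mul_left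
        (commute_siteHom_diagonal_totalLevel E C i _)
    · rw [quadForm_apply, mulVec_mulVec, siteLevel_mul_occupation_mul_topLevel hE hC, smul_mulVec,
        dotProduct_smul, smul_eq_mul]
  have hsq : (dirac M E C * dirac M E C) *ᵥ u = (4 * τ) • u := by
    rw [bottDirac_mul_self hE hC, smul_mulVec, sub_mulVec, smul_mulVec, sum_mulVec,
      Finset.sum_eq_zero fun i _ => htop i, hu, smul_zero, sub_zero, smul_smul]
  rw [← mulVec_mulVec, hD, mulVec_zero] at hsq
  exact (smul_eq_zero.1 hsq.symm).resolve_left (by positivity)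

lemma dotProduct_siteHom_number_mulVec_le (i : s) (u : ι × (s → Fin M) → ℝ) :
    siteHom i (number M) *ᵥ u ⬝ᵥ siteHom i (number M) *ᵥ u ≤
      quadForm (siteHom i (number M) *ᵥ u) (siteHom i (number M)) := by
  have hle := quadForm_siteHom_diagonal_nonneg (ι := ι) (s := s) (M := M)
    (d := fun k => (k : ℝ) * k * k - k * k) (fun k => ?_) i u
  · have hdiag : diagonal (fun k : Fin M => (k : ℝ) * k * k - k * k) =
        number M * number M * number M - number M * number M := by
      rw [number, diagonal_mul_diagonal, diagonal_mul_diagonal, diagonal_sub]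
    rw [hdiag, map_sub, map_sub, map_mul (siteHom i), map_mul (siteHom i), sub_nonneg] at hle
    have hsymm : (siteHom i (number M) : Matrix (ι × (s → Fin M)) _ ℝ)ᵀ = siteHom i (number M) := by
      rw [transpose_siteHom, number, diagonal_transpose]
    rwa [quadForm_mulVec, ← quadForm_transpose_mul, hsymm]
  · rcases Nat.eq_zero_or_pos k with hk | hk
    · simp [hk]
    · have hk' : (1 : ℝ) ≤ k := by exact_mod_cast hk
      nlinarith [mul_nonneg (zero_le_one.trans hk') (zero_le_one.trans hk')]

lemma eq_zero_of_totalLevel_mulVec_eq_half (hE : IsCliffordSystem E) (hC : IsBottPotential E C)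
    {u : ι × (s → Fin M) → ℝ} (hu : totalLevel M E C *ᵥ u = (1 / 2 : ℝ) • u) : u = 0 := by
  have hocc (i : s) : leftHom (occupation E C i) *ᵥ u = 0 := by
    refine mulVec_eq_zero_of_lt_siteLevel hE hC (i := i)
      (commute_leftHom_occupation_totalLevel hE hC i) one_half_lt_one hu ?_
    have hproj : quadForm (leftHom (occupation E C i) *ᵥ u) (leftHom (occupation E C i)) =
        leftHom (occupation E C i) *ᵥ u ⬝ᵥ leftHom (occupation E C i) *ᵥ u := by
      rw [quadForm_apply, mulVec_mulVec, ← map_mul, occupation_mul_self hE hC]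
    rw [siteLevel, map_add, hproj, one_mul]
    exact le_add_of_nonneg_left (quadForm_siteHom_number_nonneg i _)
  have hnum (i : s) : siteHom i (number M) *ᵥ u = 0 := by
    refine mulVec_eq_zero_of_lt_siteLevel hE hC (i := i)
      (commute_siteHom_diagonal_totalLevel E C i _) one_half_lt_one hu ?_
    rw [siteLevel, map_add, one_mul]
    exact le_add_of_le_of_nonneg (dotProduct_siteHom_number_mulVec_le i u)
      (quadForm_leftHom_occupation_nonneg hE hC i _)
  have hlevel : totalLevel M E C *ᵥ u = 0 := by
    simp only [totalLevel, siteLevel, sum_mulVec, add_mulVec, hocc, hnum, add_zero,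
      Finset.sum_const_zero]
  exact (smul_eq_zero.1 (hu.symm.trans hlevel)).resolve_left (by norm_num)

end BottKernel

section BottHomotopy

lemma isUnit_add_smul_of_gap {κ : Type*} [Fintype κ] [DecidableEq κ] {A B : Matrix κ κ ℝ}
    {Γ γ : ℝ} (hA : A.IsSymm) (hγ : γ < Γ) (hgap : ∀ u, Γ * (u ⬝ᵥ u) ≤ quadForm u (A * A))
    (hB : ∀ u, quadForm u (Bᵀ * B) ≤ γ * (u ⬝ᵥ u)) {t : ℝ} (ht : t ∈ Set.Icc (0 : ℝ) 1) :
    IsUnit (A + t • B) := by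
  refine isUnit_of_mulVec_eq_zero fun u hu => ?_
  rw [add_mulVec, smul_mulVec, add_eq_zero_iff_eq_neg] at hu
  have hAu : quadForm u (A * A) = t ^ 2 * quadForm u (Bᵀ * B) := by
    nth_rewrite 1 [← hA.eq]
    rw [quadForm_transpose_mul, quadForm_transpose_mul, hu, neg_dotProduct_neg, smul_dotProduct,
      dotProduct_smul, smul_smul, sq, smul_eq_mul]
  have ht2 : t ^ 2 * quadForm u (Bᵀ * B) ≤ quadForm u (Bᵀ * B) :=
    mul_le_of_le_one_left (quadForm_transpose_mul_self_nonneg u B) (pow_le_one₀ ht.1 ht.2)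
  by_contra hne
  nlinarith [dotProduct_self_pos hne, hgap u, hB u]

lemma mulVec_eq_zero_and_of_add_mul_mulVec_eq_zero {κ : Type*} [Fintype κ] [DecidableEq κ]
    {P W R : Matrix κ κ ℝ} (hP : P.IsSymm) (hW : W.IsSymm) (hR : R * R = 1) (hPW : Commute P W)
    (hRW : Commute R W) (hRP : R * P = -(P * R)) {u : κ → ℝ} (hu : (P + W * R) *ᵥ u = 0) :
    P *ᵥ u = 0 ∧ W *ᵥ u = 0 := by
  have hsq : (P + W * R) * (P + W * R) = Pᵀ * P + Wᵀ * W := by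
    rw [hP.eq, hW.eq]
    linear_combination (norm := noncomm_ring) W * hRW.eq * R + W * W * hR + W * hRP + hPW.eq * R
  have hzero : quadForm u (Pᵀ * P) + quadForm u (Wᵀ * W) = 0 := by
    rw [← map_add, ← hsq, quadForm_apply, ← mulVec_mulVec, hu, mulVec_zero, dotProduct_zero]
  rw [add_eq_zero_iff_of_nonneg (quadForm_transpose_mul_self_nonneg u P)
    (quadForm_transpose_mul_self_nonneg u W), quadForm_transpose_mul, quadForm_transpose_mul,
    dotProduct_self_eq_zero, dotProduct_self_eq_zero] at hzero
  exact hzero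

variable {ι s : Type*} [Fintype ι] [DecidableEq ι] [Fintype s] [DecidableEq s] {M : ℕ}
  {E C : s → Matrix ι ι ℝ}

lemma isSymm_smul_one_sub_totalLevel (hE : IsCliffordSystem E) (hC : IsBottPotential E C) (d : ℝ) :
    (d • 1 - totalLevel M E C).IsSymm :=
  (isSymm_one.smul d).sub (isSymm_totalLevel hE hC)

lemma commute_parity_smul_one_sub_totalLevel (M : ℕ) (E C : s → Matrix ι ι ℝ) (d : ℝ) :
    Commute parity (d • 1 - totalLevel M E C) :=
  ((Commute.one_right _).smul_right d).sub_right (commute_parity_totalLevel M E C)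

lemma HasPosIndex.localizer_totalLevel (hE : IsCliffordSystem E) (hC : IsBottPotential E C)
    {d : ℝ} {k : ℕ} (hk : HasPosIndex (localizer M E C d) k)
    (hgap : ∀ u, ((Fintype.card s : ℝ) + 1) ^ 2 * (u ⬝ᵥ u) ≤
      quadForm u (localizer M E C d * localizer M E C d)) :
    HasPosIndex (dirac M E C + (d • 1 - totalLevel M E C) * parity) k := by
  set F := ∑ i, occupation E C i
  set B : Matrix (ι × (s → Fin M)) (ι × (s → Fin M)) ℝ := -(parity * leftHom F) with hB
  have hFt : (leftHom F : Matrix (ι × (s → Fin M)) _ ℝ)ᵀ = leftHom F := by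
    rw [transpose_leftHom, (isSymm_sum_occupation hE hC).eq]
  have hBsymm : B.IsSymm := by
    rw [IsSymm, hB, transpose_neg, transpose_mul, hFt, isSymm_parity.eq,
      (commute_leftHom_parity F).eq]
  have hBle (u : ι × (s → Fin M) → ℝ) :
      quadForm u (Bᵀ * B) ≤ (Fintype.card s : ℝ) ^ 2 * (u ⬝ᵥ u) := by
    have hBB : Bᵀ * B = leftHom (F * F) := by
      rw [hB, transpose_neg, neg_mul_neg, transpose_mul, hFt, isSymm_parity.eq, mul_assoc,
        ← mul_assoc parity, parity_mul_self, one_mul, map_mul]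
    rw [hBB]
    exact quadForm_leftHom_le (quadForm_sum_occupation_mul_self_le hE hC) u
  have hsum : dirac M E C + (d • 1 - totalLevel M E C) * parity = localizer M E C d + B := by
    rw [localizer, totalLevel_eq, hB, ← (commute_leftHom_parity F).eq]
    noncomm_ring
  rw [hsum]
  have hsymm := isSymm_localizer (M := M) hE hC.toIsDiracPotential d
  exact hk.of_segment hsymm hBsymm fun t ht =>
    isUnit_add_smul_of_gap hsymm (by gcongr; exact lt_add_one _) hgap hBle ht

lemma eq_zero_of_smul_bottDirac_add_mulVec_eq_zero (hE : IsCliffordSystem E)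
    (hC : IsBottPotential E C) {d t : ℝ} (hd : 1 / 2 ≤ d) (hM : d < M) (ht : t ∈ Set.Icc (0 : ℝ) 1)
    {u : ι × (s → Fin M) → ℝ}
    (hu : ((1 - t) • dirac M E C +
      ((d + t * (1 / 2 - d)) • 1 - totalLevel M E C) * parity) *ᵥ u = 0) : u = 0 := by
  set τ := d + t * (1 / 2 - d) with hτ
  have hPW : Commute (dirac M E C) (τ • 1 - totalLevel M E C) :=
    ((Commute.one_right _).smul_right τ).sub_right (commute_dirac_totalLevel hE hC)
  obtain ⟨hP, hW⟩ := mulVec_eq_zero_and_of_add_mul_mulVec_eq_zero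
    ((isSymm_dirac hE hC.toIsDiracPotential).smul (1 - t)) (isSymm_smul_one_sub_totalLevel hE hC τ)
    parity_mul_self (hPW.smul_left _) (commute_parity_smul_one_sub_totalLevel M E C τ)
    (by rw [mul_smul_comm, parity_mul_dirac, smul_neg, smul_mul_assoc]) hu
  rw [sub_mulVec, smul_mulVec, one_mulVec, sub_eq_zero] at hW
  rcases ht.2.eq_or_lt with rfl | ht1
  · refine eq_zero_of_totalLevel_mulVec_eq_half hE hC ?_
    rw [← hW, hτ, one_mul, add_sub_cancel]
  · have hτ0 : 0 < τ := by nlinarith [ht.1]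
    have hτM : τ < M := by nlinarith [ht.1]
    rw [smul_mulVec] at hP
    exact eq_zero_of_bottDirac_mulVec_eq_zero hE hC hτ0 hτM
      ((smul_eq_zero.1 hP).resolve_left (sub_ne_zero.2 ht1.ne')) hW.symm

lemma HasPosIndex.half_sub_totalLevel (hE : IsCliffordSystem E) (hC : IsBottPotential E C)
    {d : ℝ} (hd : 1 / 2 ≤ d) (hM : d < M) {k : ℕ}
    (hk : HasPosIndex (dirac M E C + (d • 1 - totalLevel M E C) * parity) k) :
    HasPosIndex (((1 / 2 : ℝ) • 1 - totalLevel M E C) * parity) k := by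
  have hP := isSymm_dirac (M := M) hE hC.toIsDiracPotential
  have hW : ((d • 1 - totalLevel M E C) * parity).IsSymm := by
    rw [IsSymm, transpose_mul, isSymm_parity.eq, (isSymm_smul_one_sub_totalLevel hE hC d).eq,
      (commute_parity_smul_one_sub_totalLevel M E C d).eq]
  have hsum (t : ℝ) : dirac M E C + (d • 1 - totalLevel M E C) * parity +
      t • ((1 / 2 - d) • parity - dirac M E C) = (1 - t) • dirac M E C +
        ((d + t * (1 / 2 - d)) • 1 - totalLevel M E C) * parity := by
    rw [sub_mul, sub_mul, smul_one_mul, smul_one_mul]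
    module
  have hend := hk.of_segment (hP.add hW) ((isSymm_parity.smul (1 / 2 - d)).sub hP) fun t ht =>
    isUnit_of_mulVec_eq_zero fun u hu =>
      eq_zero_of_smul_bottDirac_add_mulVec_eq_zero hE hC hd hM ht (hsum t ▸ hu)
  have hone := hsum 1
  rw [one_smul, sub_self, zero_smul, zero_add, one_mul, add_sub_cancel] at hone
  rwa [hone] at hend

lemma half_sub_totalLevel_mul_parity_eq_blockDiagonal (M : ℕ) (E C : s → Matrix ι ι ℝ) :
    ((1 / 2 : ℝ) • 1 - totalLevel M E C) * parity =
      blockDiagonal fun α : s → Fin M => (∏ i, (-1 : ℝ) ^ (α i : ℕ)) •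
        ((1 / 2 - ∑ i, ((α i : ℕ) : ℝ)) • 1 - ∑ i, occupation E C i) := by
  set ε : (s → Fin M) → ℝ := fun α => ∏ i, (-1) ^ (α i : ℕ)
  set m : (s → Fin M) → ℝ := fun α => ∑ i, ((α i : ℕ) : ℝ)
  have hblock : (fun α => ε α • ((1 / 2 - m α) • (1 : Matrix ι ι ℝ) - ∑ i, occupation E C i)) =
      (fun α => ((1 / 2 - m α) * ε α) • 1) - fun α => ε α • ∑ i, occupation E C i := by
    ext1 α
    simp only [Pi.sub_apply, smul_sub, smul_smul, mul_comm (ε α)]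
  have hdiag : (diagonal fun α => (1 / 2 - m α) * ε α) =
      ((1 / 2 : ℝ) • 1 - diagonal m) * diagonal ε := by
    rw [smul_one_eq_diagonal, diagonal_sub, diagonal_mul_diagonal]
  rw [hblock, blockDiagonal_sub, ← leftHom_mul_rightHom_diagonal, ← leftHom_mul_rightHom_diagonal,
    hdiag, map_one, one_mul, map_mul, map_sub, map_smul, map_one, ← parity_eq_rightHom_diagonal,
    ← totalNumber_eq_rightHom_diagonal, ← sub_mul, totalLevel_eq, sub_sub]

-- Only the block without excitations sees the vacuum; the others are definite.
lemma exists_hasPosIndex_half_sub_totalLevel [NeZero M] (hE : IsCliffordSystem E)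
    (hC : IsBottPotential E C) :
    ∃ o r, HasPosIndex (((1 / 2 : ℝ) • 1 - totalLevel M E C) * parity) (Fintype.card ι * o + r) ∧
      2 ^ Fintype.card s * r = Fintype.card ι := by
  obtain ⟨r, hr, hcard⟩ := exists_hasPosIndex_half_sub_sum_occupation hE hC
  have hblock (α : s → Fin M) : ∃ o, HasPosIndex ((∏ i, (-1 : ℝ) ^ (α i : ℕ)) •
      ((1 / 2 - ∑ i, ((α i : ℕ) : ℝ)) • 1 - ∑ i, occupation E C i))
      (Fintype.card ι * o + if α = 0 then r else 0) := by
    rcases eq_or_ne α 0 with rfl | hα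
    · exact ⟨0, by simpa using hr⟩
    · obtain ⟨i, hi⟩ := Function.ne_iff.1 hα
      have hone : (1 : ℝ) ≤ ∑ i, ((α i : ℕ) : ℝ) := by
        refine le_trans ?_ (Finset.single_le_sum (f := fun i => ((α i : ℕ) : ℝ))
          (fun j _ => Nat.cast_nonneg _) (Finset.mem_univ i))
        exact_mod_cast Nat.one_le_iff_ne_zero.2 fun h => hi (Fin.ext h)
      have hneg {w : ι → ℝ} := quadForm_smul_one_sub_sum_occupation_neg hE hC (w := w)
        (show 1 / 2 - ∑ i, ((α i : ℕ) : ℝ) < 0 by linarith)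
      rw [if_neg hα, Finset.prod_pow_eq_pow_sum]
      rcases neg_one_pow_eq_or ℝ (∑ i, (α i : ℕ)) with hε | hε
      · exact ⟨0, by simpa only [hε, one_smul] using .of_negDef fun w hw => hneg hw⟩
      · refine ⟨1, ?_⟩
        rw [mul_one, add_zero, hε, neg_one_smul]
        refine .of_posDef fun w hw => ?_
        rw [map_neg, neg_pos]
        exact hneg hw
  choose o ho using hblock
  refine ⟨∑ α, o α, r, ?_, hcard⟩
  have hsum := HasPosIndex.blockDiagonal ho
  rwa [Finset.sum_add_distrib, ← Finset.mul_sum, Finset.sum_ite_eq' Finset.univ 0,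
    if_pos (Finset.mem_univ _), ← half_sub_totalLevel_mul_parity_eq_blockDiagonal] at hsum

lemma HasPosIndex.exists_of_bottLocalizer (hE : IsCliffordSystem E) (hC : IsBottPotential E C)
    {d : ℝ} (hd : 1 / 2 ≤ d) (hM : d < M) {k : ℕ} (hk : HasPosIndex (localizer M E C d) k)
    (hgap : ∀ u, ((Fintype.card s : ℝ) + 1) ^ 2 * (u ⬝ᵥ u) ≤
      quadForm u (localizer M E C d * localizer M E C d)) :
    ∃ o, 2 ^ Fintype.card s * k = Fintype.card ι * (2 ^ Fintype.card s * o + 1) := by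
  have hMpos : (0 : ℝ) < M := by linarith
  have : NeZero M := ⟨by exact_mod_cast hMpos.ne'⟩
  obtain ⟨o, r, hor, hr⟩ := exists_hasPosIndex_half_sub_totalLevel (M := M) hE hC
  obtain rfl := ((hk.localizer_totalLevel hE hC hgap).half_sub_totalLevel hE hC hd hM).unique hor
  exact ⟨o, by linear_combination hr⟩

end BottHomotopy

section Twist

variable {ι μ : Type*} [Fintype ι] [DecidableEq ι] [Fintype μ] [DecidableEq μ]

/-- The operator `A ⊗ diagonal σ`; for signs `σ` it acts as `±A` on each copy of the space. -/
def twist (σ : μ → ℝ) : Matrix ι ι ℝ →ₗ[ℝ] Matrix (ι × μ) (ι × μ) ℝ :=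
  LinearMap.mulRight ℝ (rightHom (diagonal σ)) ∘ₗ leftHom.toLinearMap

lemma twist_apply (σ : μ → ℝ) (A : Matrix ι ι ℝ) :
    twist σ A = leftHom A * rightHom (diagonal σ) :=
  rfl

lemma diagonal_mul_self {σ : μ → ℝ} (hσ : ∀ m, σ m * σ m = 1) : diagonal σ * diagonal σ = 1 := by
  simp only [diagonal_mul_diagonal, hσ, diagonal_one]

lemma twist_mul_twist {σ : μ → ℝ} (hσ : ∀ m, σ m * σ m = 1) (A B : Matrix ι ι ℝ) :
    twist σ A * twist σ B = leftHom (A * B) := by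
  rw [twist_apply, twist_apply, leftHom_mul_rightHom_mul, diagonal_mul_self hσ, map_one, mul_one]

lemma transpose_twist (σ : μ → ℝ) (A : Matrix ι ι ℝ) : (twist σ A)ᵀ = twist σ Aᵀ := by
  rw [twist_apply, twist_apply, transpose_mul, transpose_leftHom, transpose_rightHom,
    diagonal_transpose, (commute_leftHom_rightHom _ _).eq]

lemma twist_mul_rightHom {σ : μ → ℝ} {B : Matrix μ μ ℝ}
    (h : diagonal σ * B = -(B * diagonal σ)) (A : Matrix ι ι ℝ) :
    twist σ A * rightHom B = -(rightHom B * twist σ A) :=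
  leftHom_mul_rightHom_anticomm h A

end Twist

section Exchange

variable {ι μ ν : Type*}

/-- Exchange of the last two factors of a product. -/
def prodExchange (ι μ ν : Type*) : (ι × μ) × ν ≃ (ι × ν) × μ where
  toFun p := ((p.1.1, p.2), p.1.2)
  invFun p := ((p.1.1, p.2), p.1.2)

variable [Fintype ι] [DecidableEq ι] [Fintype μ] [DecidableEq μ] [Fintype ν] [DecidableEq ν]

/-- The isomorphism of operator algebras exchanging the last two tensor factors. -/
def exchange (ι μ ν : Type*) [Fintype ι] [DecidableEq ι] [Fintype μ] [DecidableEq μ] [Fintype ν]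
    [DecidableEq ν] :
    Matrix ((ι × μ) × ν) ((ι × μ) × ν) ℝ ≃ₐ[ℝ] Matrix ((ι × ν) × μ) ((ι × ν) × μ) ℝ :=
  reindexAlgEquiv ℝ ℝ (prodExchange ι μ ν)

lemma exchange_leftHom_leftHom (A : Matrix ι ι ℝ) :
    exchange ι μ ν (leftHom (leftHom A)) = leftHom (leftHom A) := by
  ext ⟨⟨i, b⟩, a⟩ ⟨⟨j, b'⟩, a'⟩
  exact mul_right_comm (A i j) ((1 : Matrix μ μ ℝ) a a') ((1 : Matrix ν ν ℝ) b b')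

lemma exchange_leftHom_rightHom (B : Matrix μ μ ℝ) :
    exchange ι μ ν (leftHom (rightHom B)) = rightHom B := by
  ext ⟨⟨i, b⟩, a⟩ ⟨⟨j, b'⟩, a'⟩
  change (1 : Matrix ι ι ℝ) i j * B a a' * (1 : Matrix ν ν ℝ) b b' =
    (1 : Matrix (ι × ν) (ι × ν) ℝ) (i, b) (j, b') * B a a'
  rw [mul_right_comm, ← one_kronecker_one, kronecker_apply]

lemma exchange_rightHom (B : Matrix ν ν ℝ) :
    exchange ι μ ν (rightHom B) = leftHom (rightHom B) := by
  rw [← exchange_leftHom_rightHom]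
  rfl

end Exchange

section Stabilization

variable {ι μ s : Type*} [Fintype ι] [DecidableEq ι] [Fintype μ] [DecidableEq μ] {σ : μ → ℝ}
  {C : s → Matrix μ μ ℝ} {E Φ : s → Matrix ι ι ℝ}

/-- Generators of a positive definite real Clifford algebra acting by symmetric matrices that are
odd for the grading given by the signs `σ`. -/
structure IsGradedCliffordSystem (σ : μ → ℝ) (C : s → Matrix μ μ ℝ) : Prop where
  grading_mul_self (m : μ) : σ m * σ m = 1
  isSymm (i : s) : (C i).IsSymm
  mul_self (i : s) : C i * C i = 1
  anticomm (i j : s) : i ≠ j → C i * C j = -(C j * C i)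
  grading_mul (i : s) : diagonal σ * C i = -(C i * diagonal σ)

lemma IsCliffordSystem.mul_rightHom (hE : IsCliffordSystem E) {Z : Matrix μ μ ℝ}
    (hZ : Z.IsSymm) (hZ2 : Z * Z = 1) : IsCliffordSystem fun i => leftHom (E i) * rightHom Z where
  transpose_eq i := by
    rw [transpose_mul, transpose_leftHom, transpose_rightHom, hE.transpose_eq, hZ.eq,
      (commute_leftHom_rightHom _ _).symm.eq, map_neg, neg_mul]
  mul_self i := by
    rw [leftHom_mul_rightHom_mul, hE.mul_self, hZ2, map_one, mul_one, map_neg, map_one]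
  anticomm i j hij := by
    rw [leftHom_mul_rightHom_mul, leftHom_mul_rightHom_mul, hE.anticomm i j hij, map_neg, neg_mul]

lemma IsCliffordSystem.twist (hE : IsCliffordSystem E) (hσ : ∀ m, σ m * σ m = 1) :
    IsCliffordSystem fun i => twist σ (E i) :=
  hE.mul_rightHom (isSymm_diagonal σ) (diagonal_mul_self hσ)

lemma IsDiracPotential.twist (hΦ : IsDiracPotential E Φ) (hσ : ∀ m, σ m * σ m = 1) :
    IsDiracPotential (fun i => twist σ (E i)) fun i => twist σ (Φ i) where
  isSymm i := by rw [IsSymm, transpose_twist, (hΦ.isSymm i).eq]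
  anticomm i j := by rw [twist_mul_twist hσ, twist_mul_twist hσ, hΦ.anticomm, map_neg]

lemma IsGradedCliffordSystem.isBottPotential_twist (hC : IsGradedCliffordSystem σ C)
    (E : s → Matrix ι ι ℝ) :
    IsBottPotential (fun i => twist σ (E i)) fun i => rightHom (C i) where
  isSymm i := by rw [IsSymm, transpose_rightHom, (hC.isSymm i).eq]
  anticomm i j := twist_mul_rightHom (hC.grading_mul j) (E i)
  mul_self i := by rw [← map_mul, hC.mul_self, map_one]
  anticomm_self i j hij := by rw [← map_mul, hC.anticomm i j hij, map_neg, map_mul]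

lemma le_quadForm_leftHom {A : Matrix ι ι ℝ} {c : ℝ} (h : ∀ w, c * (w ⬝ᵥ w) ≤ quadForm w A)
    (u : ι × μ → ℝ) : c * (u ⬝ᵥ u) ≤ quadForm u (leftHom A) := by
  have := quadForm_leftHom_le (A := -A) (C := -c) (fun w => by
    rw [map_neg, neg_mul]; exact neg_le_neg (h w)) u
  rw [map_neg, map_neg, neg_mul] at this
  exact neg_le_neg_iff.1 this

lemma IsDiracPotential.lineMap {ι : Type*} [Fintype ι] {E Φ Ψ : s → Matrix ι ι ℝ}
    (hΦ : IsDiracPotential E Φ) (hΨ : IsDiracPotential E Ψ) (t : ℝ) :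
    IsDiracPotential E fun i => (1 - t) • Φ i + t • Ψ i where
  isSymm i := ((hΦ.isSymm i).smul _).add ((hΨ.isSymm i).smul _)
  anticomm i j := by
    simp only [mul_add, add_mul, mul_smul_comm, smul_mul_assoc, hΦ.anticomm, hΨ.anticomm]
    module

variable [Fintype s]

lemma IsElliptic.twist {c B : ℝ} (hΦ : IsElliptic Φ c B) (hσ : ∀ m, σ m * σ m = 1) :
    IsElliptic (fun i => twist σ (Φ i)) c B where
  lower y u := by
    have hsum : ∑ i, y i • HurwitzRadon.twist σ (Φ i) =
        HurwitzRadon.twist σ (∑ i, y i • Φ i) := by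
      simp only [map_sum, map_smul]
    rw [hsum, twist_mul_twist hσ]
    exact le_quadForm_leftHom (hΦ.lower y) u
  upper i u := by
    rw [twist_mul_twist hσ]
    exact quadForm_leftHom_le (hΦ.upper i) u

lemma IsBottPotential.isElliptic {C : s → Matrix ι ι ℝ} (hC : IsBottPotential E C) :
    IsElliptic C 1 1 where
  lower y w := by
    rw [hC.sum_smul_mul_self, map_smul, quadForm_one, smul_eq_mul, one_mul]
  upper i w := by rw [hC.mul_self, quadForm_one, one_mul]

lemma smul_add_smul_mul_self {R : Type*} [Ring R] [Algebra ℝ R] {P Q : R}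
    (h : P * Q = -(Q * P)) (a b : ℝ) :
    (a • P + b • Q) * (a • P + b • Q) = a ^ 2 • (P * P) + b ^ 2 • (Q * Q) := by
  simp only [add_mul, mul_add, smul_mul_smul_comm, h, sq]
  module

lemma IsElliptic.lineMap {C : s → Matrix ι ι ℝ} {c B : ℝ}
    (hΦ : IsElliptic Φ c B) (hC : IsBottPotential E C)
    (hΦC : ∀ i j, Φ i * C j = -(C j * Φ i)) (hc0 : 0 ≤ c) (hc1 : c ≤ 1) (hB : 0 ≤ B) {t : ℝ}
    (ht : t ∈ Set.Icc (0 : ℝ) 1) :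
    IsElliptic (fun i => (1 - t) • Φ i + t • C i) (c / 2) (B + 1) where
  lower y w := by
    have hsum : ∑ i, y i • ((1 - t) • Φ i + t • C i) =
        (1 - t) • (∑ i, y i • Φ i) + t • ∑ i, y i • C i := by
      simp only [smul_add, Finset.sum_add_distrib, Finset.smul_sum, smul_comm (y _)]
    have hanti : (∑ i, y i • Φ i) * (∑ i, y i • C i) =
        -((∑ i, y i • C i) * ∑ i, y i • Φ i) := by
      rw [Finset.sum_mul_sum, Finset.sum_mul_sum, Finset.sum_comm]
      simp only [smul_mul_smul_comm, hΦC, smul_neg, Finset.sum_neg_distrib, mul_comm]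
    rw [hsum, smul_add_smul_mul_self hanti, hC.sum_smul_mul_self, map_add, map_smul, map_smul,
      map_smul, quadForm_one, smul_eq_mul, smul_eq_mul, smul_eq_mul]
    have hyw : 0 ≤ (∑ i, y i ^ 2) * (w ⬝ᵥ w) :=
      mul_nonneg (by positivity) (dotProduct_self_nonneg w)
    have hcoef : c / 2 ≤ (1 - t) ^ 2 * c + t ^ 2 := by
      nlinarith [mul_nonneg hc0 (sq_nonneg (2 * t - 1)),
        mul_nonneg (sub_nonneg.2 hc1) (sq_nonneg t)]
    nlinarith [mul_le_mul_of_nonneg_left (hΦ.lower y w) (sq_nonneg (1 - t)),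
      mul_le_mul_of_nonneg_right hcoef hyw]
  upper i w := by
    rw [smul_add_smul_mul_self (hΦC i i), hC.mul_self, map_add, map_smul, map_smul, quadForm_one,
      smul_eq_mul, smul_eq_mul]
    have hw := dotProduct_self_nonneg w
    have ht1 : (1 - t) ^ 2 ≤ 1 := pow_le_one₀ (sub_nonneg.2 ht.2) (sub_le_self 1 ht.1)
    have ht2 : t ^ 2 ≤ 1 := pow_le_one₀ ht.1 ht.2
    calc (1 - t) ^ 2 * quadForm w (Φ i * Φ i) + t ^ 2 * (w ⬝ᵥ w)
        ≤ (1 - t) ^ 2 * (B * (w ⬝ᵥ w)) + t ^ 2 * (w ⬝ᵥ w) := by gcongr; exact hΦ.upper i w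
      _ ≤ 1 * (B * (w ⬝ᵥ w)) + 1 * (w ⬝ᵥ w) := by gcongr
      _ = (B + 1) * (w ⬝ᵥ w) := by ring

variable [DecidableEq s] {M : ℕ} {d : ℝ}

lemma localizer_lineMap (M : ℕ) (E Φ Ψ : s → Matrix ι ι ℝ) (d t : ℝ) :
    localizer M E (fun i => (1 - t) • Φ i + t • Ψ i) d =
      localizer M E Φ d + t • (localizer M E Ψ d - localizer M E Φ d) := by
  have hdirac : dirac M E (fun i => (1 - t) • Φ i + t • Ψ i) =
      (1 - t) • dirac M E Φ + t • dirac M E Ψ := by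
    simp only [dirac, Finset.smul_sum, ← Finset.sum_add_distrib, map_add, map_smul, add_mul,
      smul_mul_assoc]
    exact Finset.sum_congr rfl fun i _ => by module
  rw [localizer, localizer, localizer, hdirac]
  module

lemma localizer_twist_eq_submatrix (M : ℕ) (E Φ : s → Matrix ι ι ℝ) (d : ℝ) (σ : μ → ℝ) :
    localizer M (fun i => twist σ (E i)) (fun i => twist σ (Φ i)) d =
      (blockDiagonal fun m => σ m • dirac M E Φ + (d • 1 - totalNumber) * parity).submatrix
        (prodExchange ι μ (s → Fin M)) (prodExchange ι μ (s → Fin M)) := by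
  have hblock : (blockDiagonal fun m => σ m • dirac M E Φ + (d • 1 - totalNumber) * parity) =
      leftHom (dirac M E Φ) * rightHom (diagonal σ) + leftHom ((d • 1 - totalNumber) * parity) := by
    rw [leftHom_mul_rightHom_diagonal, leftHom_eq_blockDiagonal, ← blockDiagonal_add]
    rfl
  suffices exchange ι μ (s → Fin M)
      (localizer M (fun i => twist σ (E i)) (fun i => twist σ (Φ i)) d) =
      blockDiagonal fun m => σ m • dirac M E Φ + (d • 1 - totalNumber) * parity by
    rw [← this]
    simp [exchange]
  rw [hblock]
  have hmove (X Y : Matrix (ι × (s → Fin M)) (ι × (s → Fin M)) ℝ) :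
      leftHom Y * rightHom (diagonal σ) * leftHom X =
        leftHom Y * leftHom X * rightHom (diagonal σ) := by
    rw [mul_assoc, mul_assoc, (commute_leftHom_rightHom X (diagonal σ)).eq]
  simp only [localizer, dirac, totalNumber, parity, twist_apply, siteHom_apply, map_add, map_sum,
    map_mul, map_sub, map_smul, map_one, exchange_leftHom_leftHom, exchange_leftHom_rightHom,
    exchange_rightHom, Finset.sum_mul, add_mul, hmove]

lemma neg_dirac_add_eq_conj_parity (M : ℕ) (E Φ : s → Matrix ι ι ℝ) (d : ℝ) :
    -dirac M E Φ + (d • 1 - totalNumber) * parity = parityᵀ * localizer M E Φ d * parity := by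
  have hcomm : Commute (d • 1 - totalNumber) (parity : Matrix (ι × (s → Fin M)) _ ℝ) :=
    ((Commute.one_left _).smul_left d).sub_left commute_parity_totalNumber.symm
  rw [localizer, isSymm_parity.eq, mul_add, parity_mul_dirac, add_mul, neg_mul, mul_assoc,
    parity_mul_self, mul_one, mul_assoc, mul_assoc, parity_mul_self, mul_one, hcomm.eq]

lemma HasPosIndex.localizer_twist {k : ℕ} (hk : HasPosIndex (localizer M E Φ d) k)
    (hσ : ∀ m, σ m * σ m = 1) :
    HasPosIndex (localizer M (fun i => twist σ (E i)) (fun i => twist σ (Φ i)) d)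
      (Fintype.card μ * k) := by
  have hblock (m : μ) :
      HasPosIndex (σ m • dirac M E Φ + (d • 1 - totalNumber) * parity) k := by
    rcases mul_self_eq_one_iff.1 (hσ m) with hm | hm
    · rwa [hm, one_smul]
    · rw [hm, neg_one_smul, neg_dirac_add_eq_conj_parity]
      exact hk.conj parity_mul_self
  have hsum := (HasPosIndex.blockDiagonal hblock).submatrix_equiv (prodExchange ι μ (s → Fin M))
  rwa [← localizer_twist_eq_submatrix, Finset.sum_const, Finset.card_univ, smul_eq_mul] at hsum

end Stabilization

section Ellipticity

lemma exists_pos_mul_norm_sq_le {V W : Type*} [NormedAddCommGroup V] [NormedSpace ℝ V]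
    [ProperSpace V] [NormedAddCommGroup W] [NormedSpace ℝ W] [ProperSpace W] {f : V × W → ℝ}
    (hf : Continuous f) (hsmul : ∀ a b v w, f (a • v, b • w) = a ^ 2 * b ^ 2 * f (v, w))
    (hpos : ∀ v w, v ≠ 0 → w ≠ 0 → 0 < f (v, w)) :
    ∃ c > 0, ∀ v w, c * ‖v‖ ^ 2 * ‖w‖ ^ 2 ≤ f (v, w) := by
  obtain ⟨c, hc, hle⟩ := ((isCompact_sphere (0 : V) 1).prod
    (isCompact_sphere (0 : W) 1)).exists_forall_le' hf.continuousOn fun p hp =>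
      hpos p.1 p.2 (Metric.ne_of_mem_sphere hp.1 one_ne_zero)
        (Metric.ne_of_mem_sphere hp.2 one_ne_zero)
  refine ⟨c, hc, fun v w => ?_⟩
  rcases eq_or_ne v 0 with rfl | hv
  · simpa using (hsmul 0 1 0 w).ge
  rcases eq_or_ne w 0 with rfl | hw
  · simpa using (hsmul 1 0 v 0).ge
  have hunit := hle (‖v‖⁻¹ • v, ‖w‖⁻¹ • w) ⟨by simp [norm_smul, hv], by simp [norm_smul, hw]⟩
  calc c * ‖v‖ ^ 2 * ‖w‖ ^ 2 ≤ f (‖v‖⁻¹ • v, ‖w‖⁻¹ • w) * ‖v‖ ^ 2 * ‖w‖ ^ 2 := by gcongr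
    _ = f (v, w) := by
      rw [hsmul]
      have := norm_ne_zero_iff.2 hv
      have := norm_ne_zero_iff.2 hw
      field_simp

variable {ι s : Type*} [Fintype ι] [Fintype s] {Φ : s → Matrix ι ι ℝ}

lemma IsElliptic.mono {c c' B B' : ℝ} (hΦ : IsElliptic Φ c B) (hc : c' ≤ c) (hB : B ≤ B') :
    IsElliptic Φ c' B' where
  lower y w := by
    have := dotProduct_self_nonneg w
    exact le_trans (by gcongr) (hΦ.lower y w)
  upper i w := by
    have := dotProduct_self_nonneg w
    exact (hΦ.upper i w).trans (by gcongr)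

variable [DecidableEq ι]

lemma dotProduct_self_eq_norm_sq {κ : Type*} [Fintype κ] (w : κ → ℝ) :
    w ⬝ᵥ w = ‖WithLp.toLp 2 w‖ ^ 2 := by
  rw [EuclideanSpace.real_norm_sq_eq]
  simp only [dotProduct, sq]

open scoped Matrix.Norms.L2Operator in
lemma exists_quadForm_mul_self_le {ι s : Type*} [Fintype ι] [Finite s] {Φ : s → Matrix ι ι ℝ}
    (hΦ : ∀ i, (Φ i).IsSymm) :
    ∃ B, 0 ≤ B ∧ ∀ i w, quadForm w (Φ i * Φ i) ≤ B * (w ⬝ᵥ w) := by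
  classical
  cases nonempty_fintype s
  refine ⟨∑ i, ‖Φ i‖ ^ 2, by positivity, fun i w => ?_⟩
  have hnorm := l2_opNorm_mulVec (Φ i) (WithLp.toLp 2 w)
  nth_rewrite 1 [← (hΦ i).eq]
  rw [quadForm_transpose_mul, dotProduct_self_eq_norm_sq, dotProduct_self_eq_norm_sq]
  calc ‖WithLp.toLp 2 (Φ i *ᵥ w)‖ ^ 2 ≤ (‖Φ i‖ * ‖WithLp.toLp 2 w‖) ^ 2 := by gcongr; exact hnorm
    _ = ‖Φ i‖ ^ 2 * ‖WithLp.toLp 2 w‖ ^ 2 := mul_pow _ _ _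
    _ ≤ (∑ i, ‖Φ i‖ ^ 2) * ‖WithLp.toLp 2 w‖ ^ 2 := by
      gcongr
      exact Finset.single_le_sum (f := fun i => ‖Φ i‖ ^ 2) (fun _ _ => by positivity)
        (Finset.mem_univ i)

lemma exists_pos_mul_le_quadForm_sum_smul (hΦ : ∀ i, (Φ i).IsSymm)
    (hunit : ∀ y : s → ℝ, y ≠ 0 → IsUnit (∑ i, y i • Φ i)) :
    ∃ c > 0, ∀ (y : s → ℝ) (w : ι → ℝ),
      c * (∑ i, y i ^ 2) * (w ⬝ᵥ w) ≤ quadForm w ((∑ i, y i • Φ i) * ∑ i, y i • Φ i) := by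
  have hsymm (y : s → ℝ) : (∑ i, y i • Φ i)ᵀ = ∑ i, y i • Φ i := by
    simp only [transpose_sum, transpose_smul, (hΦ _).eq]
  let f (p : EuclideanSpace ℝ s × EuclideanSpace ℝ ι) : ℝ :=
    quadForm p.2.ofLp ((∑ i, p.1 i • Φ i) * ∑ i, p.1 i • Φ i)
  have hf : Continuous f := by
    refine Continuous.dotProduct (by fun_prop) (Continuous.matrix_mulVec ?_ (by fun_prop))
    fun_prop
  have hsmul (a b : ℝ) (y : EuclideanSpace ℝ s) (w : EuclideanSpace ℝ ι) :
      f (a • y, b • w) = a ^ 2 * b ^ 2 * f (y, w) := by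
    have hsum : ∑ i, (a • y) i • Φ i = a • ∑ i, y i • Φ i := by
      simp only [PiLp.smul_apply, smul_assoc, Finset.smul_sum]
    simp only [f]
    rw [hsum, WithLp.ofLp_smul, quadForm_smul_vec, smul_mul_smul_comm, map_smul, smul_eq_mul]
    ring
  have hpos (y : EuclideanSpace ℝ s) (w : EuclideanSpace ℝ ι) (hy : y ≠ 0) (hw : w ≠ 0) :
      0 < f (y, w) := by
    have hinj := mulVec_injective_of_isUnit (hunit y.ofLp (by simpa using hy))
    have hne : (∑ i, y i • Φ i) *ᵥ w.ofLp ≠ 0 := fun h =>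
      hw (by simpa using hinj (h.trans (mulVec_zero _).symm))
    have := dotProduct_self_pos hne
    rwa [← quadForm_transpose_mul, hsymm] at this
  obtain ⟨c, hc, hle⟩ := exists_pos_mul_norm_sq_le hf hsmul hpos
  refine ⟨c, hc, fun y w => ?_⟩
  have := hle (WithLp.toLp 2 y) (WithLp.toLp 2 w)
  rwa [EuclideanSpace.real_norm_sq_eq, ← dotProduct_self_eq_norm_sq] at this

lemma exists_isElliptic (hΦ : ∀ i, (Φ i).IsSymm)
    (hunit : ∀ y : s → ℝ, y ≠ 0 → IsUnit (∑ i, y i • Φ i)) :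
    ∃ c B, 0 < c ∧ c ≤ 1 ∧ 0 ≤ B ∧ IsElliptic Φ c B := by
  obtain ⟨c, hc, hlower⟩ := exists_pos_mul_le_quadForm_sum_smul hΦ hunit
  obtain ⟨B, hB, hupper⟩ := exists_quadForm_mul_self_le hΦ
  have hell : IsElliptic Φ c B := ⟨hlower, hupper⟩
  exact ⟨min c 1, B, lt_min hc one_pos, min_le_right c 1, hB,
    hell.mono (min_le_left c 1) le_rfl⟩

end Ellipticity

section PauliMatrices

/-- The real Pauli matrix `iσ_y`. -/
def pauliY : Matrix (Fin 2) (Fin 2) ℝ := !![0, 1; -1, 0]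

/-- The Pauli matrix `σ_x`. -/
def pauliX : Matrix (Fin 2) (Fin 2) ℝ := !![0, 1; 1, 0]

/-- The Pauli matrix `σ_z`. -/
def pauliZ : Matrix (Fin 2) (Fin 2) ℝ := !![1, 0; 0, -1]

lemma transpose_pauliY : pauliYᵀ = -pauliY := by
  simp [pauliY, ← Matrix.ext_iff, Fin.forall_fin_two]

lemma transpose_pauliX : pauliXᵀ = pauliX := by
  simp [pauliX, ← Matrix.ext_iff, Fin.forall_fin_two]

lemma transpose_pauliZ : pauliZᵀ = pauliZ := by
  simp [pauliZ, ← Matrix.ext_iff, Fin.forall_fin_two]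

lemma pauliY_mul_self : pauliY * pauliY = -1 := by
  simp [pauliY, one_fin_two]

lemma pauliX_mul_self : pauliX * pauliX = 1 := by
  simp [pauliX, one_fin_two]

lemma pauliZ_mul_self : pauliZ * pauliZ = 1 := by
  simp [pauliZ, one_fin_two]

lemma pauliZ_mul_pauliX : pauliZ * pauliX = -(pauliX * pauliZ) := by
  simp [pauliZ, pauliX]

lemma pauliX_mul_pauliY : pauliX * pauliY = -(pauliY * pauliX) := by
  simp [pauliX, pauliY]

lemma pauliZ_mul_pauliY : pauliZ * pauliY = -(pauliY * pauliZ) := by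
  simp [pauliZ, pauliY]

lemma exists_isGradedCliffordSystem {ι s : Type*} [Fintype ι] [DecidableEq ι]
    {E : s → Matrix ι ι ℝ} (hE : IsCliffordSystem E) :
    ∃ (σ : (ι × Fin 2) × Fin 2 → ℝ) (C : s → Matrix ((ι × Fin 2) × Fin 2) _ ℝ),
      IsGradedCliffordSystem σ C := by
  have hσ : diagonal (fun p : (ι × Fin 2) × Fin 2 => ![1, -1] p.2) = rightHom pauliZ := by
    rw [← rightHom_diagonal]
    congr 1
    simp [pauliZ, ← Matrix.ext_iff, Fin.forall_fin_two]
  refine ⟨fun p => ![1, -1] p.2,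
    fun i => leftHom (leftHom (E i) * rightHom pauliY) * rightHom pauliX,
    ⟨fun p => ?_, fun i => ?_, fun i => ?_, fun i j hij => ?_, fun i => ?_⟩⟩
  · obtain ⟨_, a⟩ := p
    fin_cases a <;> simp
  · have hY : (leftHom (E i) * rightHom pauliY).IsSymm := by
      rw [IsSymm, transpose_mul, transpose_leftHom, transpose_rightHom, hE.transpose_eq,
        transpose_pauliY, map_neg, map_neg, neg_mul_neg, (commute_leftHom_rightHom _ _).eq]
    rw [IsSymm, transpose_mul, transpose_leftHom, transpose_rightHom, hY.eq, transpose_pauliX,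
      (commute_leftHom_rightHom (leftHom (E i) * rightHom pauliY) pauliX).eq]
  · simp only [leftHom_mul_rightHom_mul, hE.mul_self, pauliY_mul_self, pauliX_mul_self, map_neg,
      map_one, neg_mul_neg, mul_one]
  · simp only [leftHom_mul_rightHom_mul, hE.anticomm i j hij, map_neg, neg_mul]
  · rw [hσ, ← mul_assoc, ← (commute_leftHom_rightHom _ pauliZ).eq, mul_assoc, mul_assoc,
      ← map_mul, ← map_mul, pauliZ_mul_pauliX, map_neg, mul_neg]

end PauliMatrices

section Index

variable {ι μ s : Type*} [Fintype ι] [DecidableEq ι] [Fintype μ] [DecidableEq μ] [Fintype s]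
  [DecidableEq s] {E Φ Ψ : s → Matrix ι ι ℝ} {M k : ℕ} {d c B : ℝ}

lemma isUnit_of_gap {κ : Type*} [Fintype κ] [DecidableEq κ] {A : Matrix κ κ ℝ} {Γ : ℝ}
    (hΓ : 0 < Γ) (hgap : ∀ u, Γ * (u ⬝ᵥ u) ≤ quadForm u (A * A)) : IsUnit A := by
  refine isUnit_of_mulVec_eq_zero fun u hu => ?_
  have h := hgap u
  rw [quadForm_apply, ← mulVec_mulVec, hu, mulVec_zero, dotProduct_zero] at h
  by_contra hne
  exact h.not_gt (mul_pos hΓ (dotProduct_self_pos hne))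

lemma HasPosIndex.localizer_of_gap (hE : IsCliffordSystem E) (hΦ : IsDiracPotential E Φ)
    (hΨ : IsDiracPotential E Ψ) (hk : HasPosIndex (localizer M E Φ d) k) {Γ : ℝ} (hΓ : 0 < Γ)
    (hgap : ∀ t ∈ Set.Icc (0 : ℝ) 1, ∀ u, Γ * (u ⬝ᵥ u) ≤
      quadForm u (localizer M E (fun i => (1 - t) • Φ i + t • Ψ i) d *
        localizer M E (fun i => (1 - t) • Φ i + t • Ψ i) d)) :
    HasPosIndex (localizer M E Ψ d) k := by
  have hsymm := isSymm_localizer (M := M) hE hΦ d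
  have := hk.of_segment hsymm ((isSymm_localizer (M := M) hE hΨ d).sub hsymm) fun t ht => by
    rw [← localizer_lineMap]
    exact isUnit_of_gap hΓ (hgap t ht)
  rwa [add_sub_cancel] at this

theorem exists_hasPosIndex_localizer (hE : IsCliffordSystem E) (hΦ : IsDiracPotential E Φ)
    (hunit : ∀ y : s → ℝ, y ≠ 0 → IsUnit (∑ i, y i • Φ i)) :
    ∃ (M : ℕ) (d : ℝ) (k o : ℕ), IsUnit (localizer M E Φ d) ∧
      HasPosIndex (localizer M E Φ d) k ∧
      2 ^ Fintype.card s * k = Fintype.card ι * (2 ^ Fintype.card s * o + 1) := by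
  obtain ⟨c, B, hc, hc1, hB, hell⟩ := exists_isElliptic hΦ.isSymm hunit
  have hΓ : (0 : ℝ) < ((Fintype.card s : ℝ) + 1) ^ 2 := by positivity
  obtain ⟨M, d, hd, hdM, hgap⟩ := exists_localizer_gap s (half_pos hc) (by linarith)
    (by linarith : 0 ≤ B + 1) (((Fintype.card s : ℝ) + 1) ^ 2)
  have hL : IsUnit (localizer M E Φ d) :=
    isUnit_of_gap hΓ (hgap hE hΦ (hell.mono (by linarith) (by linarith)))
  obtain ⟨k, hk⟩ := exists_hasPosIndex (isSymm_localizer hE hΦ d) hL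
  rcases isEmpty_or_nonempty ι with hι | hι
  · refine ⟨M, d, k, 0, hL, hk, ?_⟩
    rw [hk.unique (.of_negDef fun u hu => (hu (Subsingleton.elim u 0)).elim),
      Fintype.card_eq_zero (α := ι), mul_zero, zero_mul]
  obtain ⟨σ, C, hC⟩ := exists_isGradedCliffordSystem hE
  have hσ := hC.grading_mul_self
  have hbott := hC.isBottPotential_twist E
  have hkC := (hk.localizer_twist hσ).localizer_of_gap (hE.twist hσ) (hΦ.twist hσ)
    hbott.toIsDiracPotential hΓ fun t ht => hgap (hE.twist hσ)
      ((hΦ.twist hσ).lineMap hbott.toIsDiracPotential t)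
      ((hell.twist hσ).lineMap hbott (fun i j => twist_mul_rightHom (hC.grading_mul j) (Φ i))
        hc.le hc1 hB ht)
  obtain ⟨o, ho⟩ := hkC.exists_of_bottLocalizer (hE.twist hσ) hbott hd hdM
    (hgap (hE.twist hσ) hbott.toIsDiracPotential
      (hbott.isElliptic.mono (by linarith) (by linarith)))
  refine ⟨M, d, k, o, hL, hk, ?_⟩
  rw [Fintype.card_prod ι] at ho
  refine Nat.eq_of_mul_eq_mul_left (Fintype.card_pos (α := (ι × Fin 2) × Fin 2)) ?_
  linear_combination ho

end Index

section QuaternionicSymmetry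

/-- A quaternionic structure whose units `K₁`, `K₂` commute with all `A i` if `e` is even and
anticommute with all `A i` if `e` is odd. -/
structure IsQuaternionicSymmetry {R s : Type*} [Ring R] (e : ℕ) (K₁ K₂ : R) (A : s → R) : Prop
    extends IsQuaternionicPair K₁ K₂ where
  semiconj_left (i : s) : SemiconjBy K₁ (A i) ((-1) ^ e * A i)
  semiconj_right (i : s) : SemiconjBy K₂ (A i) ((-1) ^ e * A i)

lemma IsQuaternionicSymmetry.map {R S F s : Type*} [Ring R] [Ring S] [FunLike F R S]
    [RingHomClass F R S] {e : ℕ} {K₁ K₂ : R} {A : s → R} (h : IsQuaternionicSymmetry e K₁ K₂ A)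
    (f : F) : IsQuaternionicSymmetry e (f K₁) (f K₂) fun i => f (A i) := by
  have hmap {K : R} (i : s) (hK : SemiconjBy K (A i) ((-1) ^ e * A i)) :
      SemiconjBy (f K) (f (A i)) ((-1) ^ e * f (A i)) := by
    simpa only [map_mul, map_pow, map_neg, map_one] using hK.map f
  exact ⟨h.toIsQuaternionicPair.map f, fun i => hmap i (h.semiconj_left i),
    fun i => hmap i (h.semiconj_right i)⟩

lemma IsQuaternionicSymmetry.comp {R s t : Type*} [Ring R] {e : ℕ} {K₁ K₂ : R} {A : s → R}
    (h : IsQuaternionicSymmetry e K₁ K₂ A) (f : t → s) :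
    IsQuaternionicSymmetry e K₁ K₂ fun i => A (f i) :=
  ⟨h.toIsQuaternionicPair, fun i => h.semiconj_left (f i), fun i => h.semiconj_right (f i)⟩

lemma IsQuaternionicSymmetry.sumElim {R s t : Type*} [Ring R] {e : ℕ} {K₁ K₂ : R} {A : s → R}
    {B : t → R} (hA : IsQuaternionicSymmetry e K₁ K₂ A) (hB : IsQuaternionicSymmetry e K₁ K₂ B) :
    IsQuaternionicSymmetry e K₁ K₂ (Sum.elim A B) :=
  ⟨hA.toIsQuaternionicPair, Sum.rec hA.semiconj_left hB.semiconj_left,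
    Sum.rec hA.semiconj_right hB.semiconj_right⟩

section Ring

variable {R s : Type*} [Ring R] {K₁ K₂ Z : R} {A : s → R} {e : ℕ}

lemma IsQuaternionicPair.mul_pow (hK : IsQuaternionicPair K₁ K₂) (hZ : Z * Z = 1)
    (h₁ : Commute K₁ Z) (h₂ : Commute K₂ Z) (e : ℕ) :
    IsQuaternionicPair (K₁ * Z ^ e) (K₂ * Z ^ e) := by
  have hZe : Z ^ e * Z ^ e = 1 := by rw [← pow_add, ← two_mul, pow_mul, sq, hZ, one_pow]
  have hmul {a b : R} (hb : Commute b Z) : a * Z ^ e * (b * Z ^ e) = a * b := by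
    rw [mul_assoc, ← mul_assoc (Z ^ e), ← (hb.pow_right e).eq, mul_assoc b, hZe, mul_one]
  exact ⟨by rw [hmul h₁, hK.mul_self_left], by rw [hmul h₂, hK.mul_self_right],
    by rw [hmul h₂, hmul h₁, hK.anticomm]⟩

lemma semiconjBy_pow_of_anticomm {a : R} (h : Z * a = -(a * Z)) (e : ℕ) :
    SemiconjBy (Z ^ e) a ((-1) ^ e * a) := by
  induction e with
  | zero => simp
  | succ e ih =>
    have hZ : SemiconjBy Z a (-1 * a) := by rw [SemiconjBy, h, neg_one_mul, neg_mul]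
    have hsign : SemiconjBy (Z ^ e) (-1) (-1) := (Commute.neg_one_right _)
    rw [pow_succ, pow_succ', mul_assoc]
    exact (hsign.mul_right ih).mul_left hZ

lemma neg_one_pow_mul_neg_one_pow_mul (e : ℕ) (a : R) : (-1) ^ e * ((-1) ^ e * a) = a := by
  rw [← mul_assoc, ← pow_add, Even.neg_one_pow ⟨e, rfl⟩, one_mul]

lemma commute_mul_of_semiconjBy {K W a : R} (hK : SemiconjBy K a ((-1) ^ e * a))
    (hW : SemiconjBy W a ((-1) ^ e * a)) : Commute (K * W) a := by
  have hsign : SemiconjBy K ((-1) ^ e) ((-1) ^ e) := (Commute.neg_one_right K).pow_right e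
  have := (hsign.mul_right hK).mul_left hW
  rwa [neg_one_pow_mul_neg_one_pow_mul] at this

lemma IsQuaternionicSymmetry.mul_grading (hK : IsQuaternionicSymmetry e K₁ K₂ A)
    (hZ : Z * Z = 1) (h₁ : Commute K₁ Z) (h₂ : Commute K₂ Z) (hA : ∀ i, Commute (A i) Z) :
    IsQuaternionicSymmetry e (K₁ * Z ^ e) (K₂ * Z ^ e) fun i => A i * Z := by
  have hsemi {K : R} (h : Commute K Z) (i : s) (hKA : SemiconjBy K (A i) ((-1) ^ e * A i)) :
      SemiconjBy (K * Z ^ e) (A i * Z) ((-1) ^ e * (A i * Z)) := by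
    rw [← mul_assoc]
    exact (hKA.mul_right h).mul_left (((hA i).symm.mul_right (Commute.refl Z)).pow_left e)
  exact ⟨hK.toIsQuaternionicPair.mul_pow hZ h₁ h₂ e, fun i => hsemi h₁ i (hK.semiconj_left i),
    fun i => hsemi h₂ i (hK.semiconj_right i)⟩

lemma IsQuaternionicPair.isQuaternionicSymmetry_mul_grading (hK : IsQuaternionicPair K₁ K₂)
    (hZ : Z * Z = 1) (h₁ : Commute K₁ Z) (h₂ : Commute K₂ Z) (hA₁ : ∀ i, Commute K₁ (A i))
    (hA₂ : ∀ i, Commute K₂ (A i)) (hA : ∀ i, Z * A i = -(A i * Z)) (e : ℕ) :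
    IsQuaternionicSymmetry e (K₁ * Z ^ e) (K₂ * Z ^ e) A := by
  have hsemi {K : R} (i : s) (h : Commute K (A i)) :
      SemiconjBy (K * Z ^ e) (A i) ((-1) ^ e * A i) :=
    SemiconjBy.mul_left (((Commute.neg_one_right K).pow_right e).mul_right h)
      (semiconjBy_pow_of_anticomm (hA i) e)
  exact ⟨hK.mul_pow hZ h₁ h₂ e, fun i => hsemi i (hA₁ i), fun i => hsemi i (hA₂ i)⟩

end Ring

section Kronecker

variable {ι κ s : Type*} [Fintype ι] [DecidableEq ι] [Fintype κ] [DecidableEq κ]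
  {K₁ K₂ : Matrix ι ι ℝ} {Z : Matrix κ κ ℝ} {e : ℕ}

lemma IsQuaternionicSymmetry.leftHom_mul_rightHom {E : s → Matrix ι ι ℝ}
    (hK : IsQuaternionicSymmetry e K₁ K₂ E) (hZ : Z * Z = 1) :
    IsQuaternionicSymmetry e (leftHom K₁ * rightHom Z ^ e) (leftHom K₂ * rightHom Z ^ e)
      fun i => leftHom (E i) * rightHom Z :=
  (hK.map (leftHom (n := κ))).mul_grading (by rw [← map_mul, hZ, map_one])
    (commute_leftHom_rightHom _ _) (commute_leftHom_rightHom _ _)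
    fun _ => commute_leftHom_rightHom _ _

lemma IsQuaternionicPair.isQuaternionicSymmetry_rightHom {G : s → Matrix κ κ ℝ}
    (hK : IsQuaternionicPair K₁ K₂) (hZ : Z * Z = 1) (hG : ∀ i, Z * G i = -(G i * Z)) (e : ℕ) :
    IsQuaternionicSymmetry e (leftHom K₁ * rightHom Z ^ e) (leftHom K₂ * rightHom Z ^ e)
      fun i => rightHom (G i) :=
  (hK.map (leftHom (n := κ))).isQuaternionicSymmetry_mul_grading (by rw [← map_mul, hZ, map_one])
    (commute_leftHom_rightHom _ _) (commute_leftHom_rightHom _ _)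
    (fun _ => commute_leftHom_rightHom _ _) (fun _ => commute_leftHom_rightHom _ _)
    (fun i => by rw [← map_mul, hG, map_neg, map_mul]) e

end Kronecker

variable {ι s : Type*} [Fintype ι] [DecidableEq ι] [Fintype s]
  {E Φ : s → Matrix ι ι ℝ} {K : Matrix ι ι ℝ} {e : ℕ}

section Localizer

variable [DecidableEq s]

lemma semiconjBy_leftHom_dirac (M : ℕ) (hE : ∀ i, SemiconjBy K (E i) ((-1) ^ e * E i))
    (hΦ : ∀ i, SemiconjBy K (Φ i) ((-1) ^ e * Φ i)) :
    SemiconjBy (leftHom K) (dirac M E Φ) ((-1) ^ e * dirac M E Φ) := by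
  have hsite {S : Matrix ι ι ℝ} (hS : SemiconjBy K S ((-1) ^ e * S)) (i : s)
      (A : Matrix (Fin M) (Fin M) ℝ) : SemiconjBy (leftHom K) (leftHom S * siteHom i A)
        ((-1) ^ e * (leftHom S * siteHom i A)) := by
    have := (hS.map leftHom).mul_right (commute_leftHom_siteHom K i A)
    rwa [map_mul, map_pow, map_neg, map_one, mul_assoc] at this
  simp only [SemiconjBy, dirac, Finset.mul_sum, Finset.sum_mul]
  refine Finset.sum_congr rfl fun i _ => ?_
  have := (hsite (hE i) i (derivation M)).add_right (hsite (hΦ i) i (position M))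
  rwa [← mul_add] at this

lemma commute_leftHom_mul_parity_pow_localizer (M : ℕ) (d : ℝ)
    (hE : ∀ i, SemiconjBy K (E i) ((-1) ^ e * E i))
    (hΦ : ∀ i, SemiconjBy K (Φ i) ((-1) ^ e * Φ i)) :
    Commute (leftHom K * parity ^ e) (localizer M E Φ d) := by
  have hdirac : Commute (leftHom K * parity ^ e) (dirac M E Φ) :=
    commute_mul_of_semiconjBy (semiconjBy_leftHom_dirac M hE hΦ)
      (semiconjBy_pow_of_anticomm (parity_mul_dirac M E Φ) e)
  have hpot : Commute (leftHom K * parity ^ e)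
      ((d • 1 - totalNumber) * parity : Matrix (ι × (s → Fin M)) _ ℝ) := by
    have hone (X : Matrix (ι × (s → Fin M)) (ι × (s → Fin M)) ℝ) : Commute X (d • 1) :=
      (Commute.one_right X).smul_right d
    refine Commute.mul_left ?_ (Commute.pow_left ?_ e)
    · exact ((hone _).sub_right (commute_leftHom_totalNumber K)).mul_right
        (commute_leftHom_parity K)
    · exact ((hone _).sub_right commute_parity_totalNumber).mul_right (Commute.refl _)
  exact hdirac.add_right hpot

end Localizer

theorem four_mul_two_pow_card_dvd [Nonempty s] {K₁ K₂ : Matrix ι ι ℝ} (hE : IsCliffordSystem E)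
    (hΦ : IsDiracPotential E Φ) (hunit : ∀ y : s → ℝ, y ≠ 0 → IsUnit (∑ i, y i • Φ i))
    (hKE : IsQuaternionicSymmetry e K₁ K₂ E) (hKΦ : IsQuaternionicSymmetry e K₁ K₂ Φ) :
    4 * 2 ^ Fintype.card s ∣ Fintype.card ι := by
  classical
  obtain ⟨M, d, k, o, hL, hk, hcard⟩ := exists_hasPosIndex_localizer hE hΦ hunit
  have hpair : IsQuaternionicPair (leftHom K₁ * parity ^ e)
      (leftHom K₂ * parity ^ e : Matrix (ι × (s → Fin M)) _ ℝ) :=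
    (hKE.toIsQuaternionicPair.map (leftHom (n := s → Fin M))).mul_pow parity_mul_self
      (commute_leftHom_parity K₁) (commute_leftHom_parity K₂) e
  have hk4 : 4 ∣ k := hk.four_dvd (isSymm_localizer hE hΦ d) hL hpair
    (commute_leftHom_mul_parity_pow_localizer M d hKE.semiconj_left hKΦ.semiconj_left)
    (commute_leftHom_mul_parity_pow_localizer M d hKE.semiconj_right hKΦ.semiconj_right)
  have hdvd : 4 * 2 ^ Fintype.card s ∣ Fintype.card ι * (2 ^ Fintype.card s * o + 1) := by
    rw [← hcard, mul_comm]
    exact mul_dvd_mul_left _ hk4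
  have hodd : Odd (2 ^ Fintype.card s * o + 1) :=
    ((Nat.even_pow.2 ⟨even_two, Fintype.card_ne_zero⟩).mul_right o).add_one
  refine Nat.Coprime.dvd_of_dvd_mul_right ?_ hdvd
  rw [show 4 * 2 ^ Fintype.card s = 2 ^ (Fintype.card s + 2) by ring]
  exact (Nat.coprime_two_left.2 hodd).pow_left _

end QuaternionicSymmetry

section Hermitization

variable {κ s : Type*}

/-- The symmetric matrix `[[0, Aᵀ], [A, 0]]`, which is invertible if and only if `A` is. -/
def hermitize : Matrix κ κ ℝ →ₗ[ℝ] Matrix (κ ⊕ κ) (κ ⊕ κ) ℝ where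
  toFun A := fromBlocks 0 Aᵀ A 0
  map_add' A B := by rw [fromBlocks_add, transpose_add, add_zero]
  map_smul' r A := by rw [RingHom.id_apply, fromBlocks_smul, transpose_smul, smul_zero]

lemma hermitize_apply (A : Matrix κ κ ℝ) : hermitize A = fromBlocks 0 Aᵀ A 0 := rfl

/-- The grading of `ℝ^κ ⊕ ℝ^κ`, with respect to which `hermitize A` is odd. -/
def sumGrading [DecidableEq κ] : Matrix (κ ⊕ κ) (κ ⊕ κ) ℝ := fromBlocks 1 0 0 (-1)

lemma isSymm_hermitize (A : Matrix κ κ ℝ) : (hermitize A).IsSymm := by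
  simp [IsSymm, hermitize_apply, fromBlocks_transpose]

lemma isSymm_sumGrading [DecidableEq κ] : (sumGrading : Matrix (κ ⊕ κ) _ ℝ).IsSymm := by
  simp [IsSymm, sumGrading, fromBlocks_transpose]

variable [Fintype κ] [DecidableEq κ]

lemma sumGrading_mul_self : (sumGrading * sumGrading : Matrix (κ ⊕ κ) _ ℝ) = 1 := by
  simp [sumGrading, fromBlocks_multiply]

lemma sumGrading_mul_hermitize (A : Matrix κ κ ℝ) :
    sumGrading * hermitize A = -(hermitize A * sumGrading) := by
  simp [sumGrading, hermitize_apply, fromBlocks_multiply, fromBlocks_neg]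

lemma isUnit_hermitize {A : Matrix κ κ ℝ} (hA : IsUnit A) : IsUnit (hermitize A) := by
  obtain ⟨B, hB⟩ := hA.exists_right_inv
  refine IsUnit.of_mul_eq_one (fromBlocks 0 B Bᵀ 0) ?_
  have hB' : Aᵀ * Bᵀ = 1 := by rw [← transpose_mul, mul_eq_one_comm.1 hB, transpose_one]
  simp [hermitize_apply, fromBlocks_multiply, hB, hB']

variable {ι : Type*} [Fintype ι] [DecidableEq ι] {E : s → Matrix ι ι ℝ} {K₁ K₂ : Matrix ι ι ℝ}
  {e : ℕ}

lemma isDiracPotential_hermitize (E : s → Matrix ι ι ℝ) (F : s → Matrix κ κ ℝ) :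
    IsDiracPotential (fun i => leftHom (E i) * rightHom sumGrading)
      fun i => rightHom (hermitize (F i)) where
  isSymm i := by rw [IsSymm, transpose_rightHom, (isSymm_hermitize _).eq]
  anticomm i j := leftHom_mul_rightHom_anticomm (sumGrading_mul_hermitize (F j)) (E i)

theorem four_mul_two_pow_card_dvd_of_isUnit [Fintype s] [Nonempty s] (hE : IsCliffordSystem E)
    (hK : IsQuaternionicSymmetry e K₁ K₂ E) {F : s → Matrix κ κ ℝ}
    (hF : ∀ y : s → ℝ, y ≠ 0 → IsUnit (∑ i, y i • F i)) :
    4 * 2 ^ Fintype.card s ∣ Fintype.card ι * (2 * Fintype.card κ) := by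
  classical
  have hΦ : ∀ y : s → ℝ, y ≠ 0 → IsUnit
      (∑ i, y i • (rightHom (hermitize (F i)) : Matrix (ι × (κ ⊕ κ)) _ ℝ)) := fun y hy => by
    simp only [← map_smul, ← map_sum]
    exact (isUnit_hermitize (hF y hy)).map rightHom
  rw [two_mul, ← Fintype.card_sum, ← Fintype.card_prod]
  exact four_mul_two_pow_card_dvd (hE.mul_rightHom isSymm_sumGrading sumGrading_mul_self)
    (isDiracPotential_hermitize E F) hΦ
    (hK.leftHom_mul_rightHom sumGrading_mul_self)
    (hK.toIsQuaternionicPair.isQuaternionicSymmetry_rightHom sumGrading_mul_self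
      (fun i => sumGrading_mul_hermitize (F i)) e)

end Hermitization

section CliffordSystems

variable {ι κ s t : Type*} [Fintype ι] [DecidableEq ι] [Fintype κ] [DecidableEq κ]
  {E L : s → Matrix ι ι ℝ} {F R : t → Matrix ι ι ℝ}

lemma IsCliffordSystem.comp_injective (hE : IsCliffordSystem E) {f : t → s}
    (hf : Function.Injective f) : IsCliffordSystem fun i => E (f i) where
  transpose_eq i := hE.transpose_eq (f i)
  mul_self i := hE.mul_self (f i)
  anticomm _ _ hij := hE.anticomm _ _ (hf.ne hij)

lemma IsCliffordSystem.map (hE : IsCliffordSystem E) {φ : Matrix ι ι ℝ →ₐ[ℝ] Matrix κ κ ℝ}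
    (hφ : ∀ A, (φ A)ᵀ = φ Aᵀ) : IsCliffordSystem fun i => φ (E i) where
  transpose_eq i := by rw [hφ, hE.transpose_eq, map_neg]
  mul_self i := by rw [← map_mul, hE.mul_self, map_neg, map_one]
  anticomm i j hij := by rw [← map_mul, hE.anticomm i j hij, map_neg, map_mul]

lemma IsCliffordSystem.reindex (hE : IsCliffordSystem E) (e : ι ≃ κ) :
    IsCliffordSystem fun i => reindexAlgEquiv ℝ ℝ e (E i) :=
  hE.map (φ := (reindexAlgEquiv ℝ ℝ e : Matrix ι ι ℝ →ₐ[ℝ] Matrix κ κ ℝ)) fun _ => rfl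

lemma IsCliffordSystem.sumElim (hE : IsCliffordSystem E) (hF : IsCliffordSystem F)
    (h : ∀ i j, E i * F j = -(F j * E i)) : IsCliffordSystem (Sum.elim E F) where
  transpose_eq := Sum.rec hE.transpose_eq hF.transpose_eq
  mul_self := Sum.rec hE.mul_self hF.mul_self
  anticomm
    | .inl i, .inl j, hij => hE.anticomm i j (Sum.inl_injective.ne_iff.1 hij)
    | .inr i, .inr j, hij => hF.anticomm i j (Sum.inr_injective.ne_iff.1 hij)
    | .inl i, .inr j, _ => h i j
    | .inr i, .inl j, _ => by rw [Sum.elim_inl, Sum.elim_inr, h, neg_neg]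

lemma IsCliffordSystem.isQuaternionicPair (hE : IsCliffordSystem E) {a b : s} (hab : a ≠ b) :
    IsQuaternionicPair (E a) (E b) :=
  ⟨hE.mul_self a, hE.mul_self b, hE.anticomm a b hab⟩

lemma isCliffordSystem_pauliY : IsCliffordSystem fun _ : Unit => pauliY where
  transpose_eq _ := transpose_pauliY
  mul_self _ := pauliY_mul_self
  anticomm _ _ h := (h (Subsingleton.elim _ _)).elim

/-- The Clifford system on `ℝ^ι ⊗ ℝ²` obtained from two commuting Clifford systems `L` and `R` on
`ℝ^ι`. -/
def double (L : s → Matrix ι ι ℝ) (R : t → Matrix ι ι ℝ) :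
    (s ⊕ t) ⊕ Unit → Matrix (ι × Fin 2) (ι × Fin 2) ℝ :=
  Sum.elim (Sum.elim (fun i => leftHom (L i) * rightHom pauliX)
    fun j => leftHom (R j) * rightHom pauliZ) fun _ => rightHom pauliY

lemma IsCliffordSystem.double (hL : IsCliffordSystem L) (hR : IsCliffordSystem R)
    (h : ∀ i j, Commute (L i) (R j)) : IsCliffordSystem (double L R) := by
  refine ((hL.mul_rightHom transpose_pauliX pauliX_mul_self).sumElim
    (hR.mul_rightHom transpose_pauliZ pauliZ_mul_self) fun i j => ?_).sumElim
    (isCliffordSystem_pauliY.map transpose_rightHom) fun i _ => ?_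
  · rw [leftHom_mul_rightHom_mul, leftHom_mul_rightHom_mul, pauliZ_mul_pauliX, map_neg, mul_neg,
      neg_neg, (h i j).eq]
  · obtain i | j := i
    · exact leftHom_mul_rightHom_anticomm pauliX_mul_pauliY (L i)
    · exact leftHom_mul_rightHom_anticomm pauliZ_mul_pauliY (R j)

lemma reindex_prodComm_leftHom (A : Matrix ι ι ℝ) :
    reindexAlgEquiv ℝ ℝ (Equiv.prodComm ι κ) (leftHom A) = rightHom A := by
  ext ⟨i, j⟩ ⟨i', j'⟩
  exact mul_comm _ _

lemma reindex_prodComm_rightHom (A : Matrix κ κ ℝ) :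
    reindexAlgEquiv ℝ ℝ (Equiv.prodComm ι κ) (rightHom A) = leftHom A := by
  ext ⟨i, j⟩ ⟨i', j'⟩
  exact mul_comm _ _

/-- Left multiplication by the imaginary units on the quaternions. -/
def quaternionLeft : (Unit ⊕ Unit) ⊕ Unit → Matrix (Fin 2 × Fin 2) (Fin 2 × Fin 2) ℝ :=
  double (fun _ => pauliY) fun _ => pauliY

/-- Right multiplication by the imaginary units on the quaternions. -/
def quaternionRight (i : (Unit ⊕ Unit) ⊕ Unit) : Matrix (Fin 2 × Fin 2) (Fin 2 × Fin 2) ℝ :=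
  reindexAlgEquiv ℝ ℝ (Equiv.prodComm _ _) (quaternionLeft i)

lemma isCliffordSystem_quaternionLeft : IsCliffordSystem quaternionLeft :=
  isCliffordSystem_pauliY.double isCliffordSystem_pauliY fun _ _ => Commute.refl _

lemma isCliffordSystem_quaternionRight : IsCliffordSystem quaternionRight :=
  isCliffordSystem_quaternionLeft.reindex _

lemma commute_leftHom_mul_rightHom {A B : Matrix ι ι ℝ} {C D : Matrix κ κ ℝ}
    (hAB : A * B = -(B * A)) (hCD : C * D = -(D * C)) :
    Commute (leftHom A * rightHom C) (rightHom D * leftHom B) := by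
  rw [(commute_leftHom_rightHom B D).symm.eq, commute_iff_eq, leftHom_mul_rightHom_mul,
    leftHom_mul_rightHom_mul, hAB, hCD, map_neg, map_neg, neg_mul_neg]

lemma commute_quaternionLeft_quaternionRight (i j : (Unit ⊕ Unit) ⊕ Unit) :
    Commute (quaternionLeft i) (quaternionRight j) := by
  have hYX : pauliY * pauliX = -(pauliX * pauliY) := by rw [pauliX_mul_pauliY, neg_neg]
  have hYZ : pauliY * pauliZ = -(pauliZ * pauliY) := by rw [pauliZ_mul_pauliY, neg_neg]
  obtain (i | i) | i := i <;> obtain (j | j) | j := j <;>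
    simp only [quaternionLeft, quaternionRight, HurwitzRadon.double, Sum.elim_inl, Sum.elim_inr,
      map_mul, reindex_prodComm_leftHom, reindex_prodComm_rightHom]
  · exact commute_leftHom_mul_rightHom hYX pauliX_mul_pauliY
  · exact commute_leftHom_mul_rightHom hYZ pauliX_mul_pauliY
  · exact (Commute.refl _).mul_left (commute_leftHom_rightHom _ _).symm
  · exact commute_leftHom_mul_rightHom hYX pauliZ_mul_pauliY
  · exact commute_leftHom_mul_rightHom hYZ pauliZ_mul_pauliY
  · exact (Commute.refl _).mul_left (commute_leftHom_rightHom _ _).symm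
  · exact (Commute.refl _).mul_right (commute_leftHom_rightHom _ _).symm
  · exact (Commute.refl _).mul_right (commute_leftHom_rightHom _ _).symm
  · exact (commute_leftHom_rightHom _ _).symm

/-- The Clifford system `E ⊗ Z`, `1 ⊗ G`, for an operator `Z` anticommuting with `G`. -/
def gradedSum (Z : Matrix κ κ ℝ) (E : s → Matrix ι ι ℝ) (G : t → Matrix κ κ ℝ) :
    s ⊕ t → Matrix (ι × κ) (ι × κ) ℝ :=
  Sum.elim (fun i => leftHom (E i) * rightHom Z) fun j => rightHom (G j)

variable {Z : Matrix κ κ ℝ} {G : t → Matrix κ κ ℝ}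

lemma IsCliffordSystem.gradedSum (hE : IsCliffordSystem E) (hG : IsCliffordSystem G)
    (hZ : Z.IsSymm) (hZ2 : Z * Z = 1) (hZG : ∀ j, Z * G j = -(G j * Z)) :
    IsCliffordSystem (gradedSum Z E G) :=
  (hE.mul_rightHom hZ hZ2).sumElim (hG.map transpose_rightHom) fun i j =>
    leftHom_mul_rightHom_anticomm (hZG j) (E i)

lemma IsQuaternionicSymmetry.gradedSum {e : ℕ} {K₁ K₂ : Matrix ι ι ℝ}
    (hK : IsQuaternionicSymmetry e K₁ K₂ E) (hZ2 : Z * Z = 1)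
    (hZG : ∀ j, Z * G j = -(G j * Z)) :
    IsQuaternionicSymmetry e (leftHom K₁ * rightHom Z ^ e) (leftHom K₂ * rightHom Z ^ e)
      (gradedSum Z E G) :=
  (hK.leftHom_mul_rightHom hZ2).sumElim
    (hK.toIsQuaternionicPair.isQuaternionicSymmetry_rightHom hZ2 hZG e)

end CliffordSystems

section CliffordDimensions

/-- There are `n` anticommuting orthogonal complex structures on `ℝ^d`. -/
def HasCliffordSystem (n d : ℕ) : Prop :=
  ∃ E : Fin n → Matrix (Fin d) (Fin d) ℝ, IsCliffordSystem E

/-- There are `n` anticommuting orthogonal complex structures on `ℝ^d` with a quaternionic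
symmetry of sign `(-1)^e`. -/
def HasQuaternionicCliffordSystem (e n d : ℕ) : Prop :=
  ∃ (E : Fin n → Matrix (Fin d) (Fin d) ℝ) (K₁ K₂ : Matrix (Fin d) (Fin d) ℝ),
    IsCliffordSystem E ∧ IsQuaternionicSymmetry e K₁ K₂ E

variable {e n m d : ℕ}

section Types

variable {ι s : Type*} [Fintype ι] [DecidableEq ι] [Fintype s] {E : s → Matrix ι ι ℝ}
  {K₁ K₂ : Matrix ι ι ℝ}

lemma IsCliffordSystem.hasCliffordSystem (hE : IsCliffordSystem E) :
    HasCliffordSystem (Fintype.card s) (Fintype.card ι) :=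
  ⟨_, (hE.comp_injective (Fintype.equivFin s).symm.injective).reindex (Fintype.equivFin ι)⟩

lemma IsQuaternionicSymmetry.hasQuaternionicCliffordSystem
    (hK : IsQuaternionicSymmetry e K₁ K₂ E) (hE : IsCliffordSystem E) :
    HasQuaternionicCliffordSystem e (Fintype.card s) (Fintype.card ι) :=
  ⟨_, _, _, (hE.comp_injective (Fintype.equivFin s).symm.injective).reindex (Fintype.equivFin ι),
    (hK.comp (Fintype.equivFin s).symm).map (reindexAlgEquiv ℝ ℝ (Fintype.equivFin ι))⟩

end Types

lemma HasCliffordSystem.mul (h : HasCliffordSystem n d) (k : ℕ) :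
    HasCliffordSystem n (d * k) := by
  obtain ⟨E, hE⟩ := h
  simpa using (hE.map (transpose_leftHom (n := Fin k))).hasCliffordSystem

lemma HasCliffordSystem.hasQuaternionicCliffordSystem (h : HasCliffordSystem (n + 2) d) :
    HasQuaternionicCliffordSystem 1 n d := by
  obtain ⟨E, hE⟩ := h
  have hsemi (a : Fin (n + 2)) (i : Fin n) (ha : a ≠ i.succ.succ) :
      SemiconjBy (E a) (E i.succ.succ) ((-1) ^ 1 * E i.succ.succ) := by
    rw [SemiconjBy, hE.anticomm a _ ha, pow_one, neg_one_mul, neg_mul]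
  exact ⟨_, E 0, E 1,
    hE.comp_injective ((Fin.succ_injective _).comp (Fin.succ_injective _)),
    hE.isQuaternionicPair Fin.zero_ne_one, fun i => hsemi 0 i (Fin.succ_ne_zero _).symm,
    fun i => hsemi 1 i ((Fin.succ_injective _).ne (Fin.succ_ne_zero i).symm)⟩

lemma HasCliffordSystem.mono (h : HasCliffordSystem n d) (hm : m ≤ n) :
    HasCliffordSystem m d := by
  obtain ⟨E, hE⟩ := h
  exact ⟨_, hE.comp_injective (Fin.castLE_injective hm)⟩

lemma HasQuaternionicCliffordSystem.mono (h : HasQuaternionicCliffordSystem e n d) (hm : m ≤ n) :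
    HasQuaternionicCliffordSystem e m d := by
  obtain ⟨E, K₁, K₂, hE, hK⟩ := h
  exact ⟨_, K₁, K₂, hE.comp_injective (Fin.castLE_injective hm), hK.comp (Fin.castLE hm)⟩

lemma hasCliffordSystem_zero_one : HasCliffordSystem 0 1 :=
  ⟨Fin.elim0, ⟨fun i => i.elim0, fun i => i.elim0, fun i => i.elim0⟩⟩

lemma hasCliffordSystem_one_two : HasCliffordSystem 1 2 :=
  isCliffordSystem_pauliY.hasCliffordSystem

lemma hasCliffordSystem_three_four : HasCliffordSystem 3 4 :=
  isCliffordSystem_quaternionLeft.hasCliffordSystem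

lemma hasQuaternionicCliffordSystem_three_four : HasQuaternionicCliffordSystem 0 3 4 := by
  have hpair := isCliffordSystem_quaternionRight.isQuaternionicPair
    (a := .inl (.inl ())) (b := .inr ()) Sum.inl_ne_inr
  have hsemi (i j) : SemiconjBy (quaternionRight j) (quaternionLeft i)
      ((-1) ^ 0 * quaternionLeft i) := by
    rw [pow_zero, one_mul]
    exact (commute_quaternionLeft_quaternionRight i j).symm
  exact IsQuaternionicSymmetry.hasQuaternionicCliffordSystem
    ⟨hpair, fun i => hsemi i _, fun i => hsemi i _⟩ isCliffordSystem_quaternionLeft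

lemma isCliffordSystem_octonion : IsCliffordSystem (double quaternionLeft quaternionRight) :=
  isCliffordSystem_quaternionLeft.double isCliffordSystem_quaternionRight
    commute_quaternionLeft_quaternionRight

lemma hasCliffordSystem_seven_eight : HasCliffordSystem 7 8 :=
  isCliffordSystem_octonion.hasCliffordSystem

lemma exists_gradedCliffordSystem_eight :
    ∃ (G : Fin 7 ⊕ Unit → Matrix (Fin 8 × Fin 2) (Fin 8 × Fin 2) ℝ)
      (Z : Matrix (Fin 8 × Fin 2) (Fin 8 × Fin 2) ℝ),
      IsCliffordSystem G ∧ Z.IsSymm ∧ Z * Z = 1 ∧ ∀ j, Z * G j = -(G j * Z) := by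
  obtain ⟨E, hE⟩ := hasCliffordSystem_seven_eight
  refine ⟨gradedSum pauliX E fun _ => pauliY, rightHom pauliZ,
    hE.gradedSum isCliffordSystem_pauliY transpose_pauliX pauliX_mul_self
      fun _ => pauliX_mul_pauliY, ?_, ?_, ?_⟩
  · rw [IsSymm, transpose_rightHom, transpose_pauliZ]
  · rw [← map_mul, pauliZ_mul_self, map_one]
  · rintro (j | j)
    · have hXZ : pauliX * pauliZ = -(pauliZ * pauliX) := by rw [pauliZ_mul_pauliX, neg_neg]
      exact (neg_eq_iff_eq_neg.2 (leftHom_mul_rightHom_anticomm hXZ (E j))).symm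
    · change rightHom pauliZ * rightHom pauliY = -(rightHom pauliY * rightHom pauliZ)
      rw [← map_mul, pauliZ_mul_pauliY, map_neg, map_mul]

lemma HasCliffordSystem.add_eight (h : HasCliffordSystem n d) :
    HasCliffordSystem (n + 8) (d * 16) := by
  obtain ⟨E, hE⟩ := h
  obtain ⟨G, Z, hG, hZ, hZ2, hZG⟩ := exists_gradedCliffordSystem_eight
  simpa using (hE.gradedSum hG hZ hZ2 hZG).hasCliffordSystem

lemma HasQuaternionicCliffordSystem.add_eight (h : HasQuaternionicCliffordSystem e n d) :
    HasQuaternionicCliffordSystem e (n + 8) (d * 16) := by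
  obtain ⟨E, K₁, K₂, hE, hK⟩ := h
  obtain ⟨G, Z, hG, hZ, hZ2, hZG⟩ := exists_gradedCliffordSystem_eight
  simpa using (hK.gradedSum hZ2 hZG).hasQuaternionicCliffordSystem
    (hE.gradedSum hG hZ hZ2 hZG)

end CliffordDimensions

section RadonNumber

/-- The Hurwitz–Radon number of an integer with `2`-adic valuation `v`. -/
def radonNumber (v : ℕ) : ℕ := 8 * (v / 4) + 2 ^ (v % 4)

lemma radonNumber_add_four (v : ℕ) : radonNumber (v + 4) = radonNumber v + 8 := by
  rw [radonNumber, radonNumber, Nat.add_div_right v four_pos, Nat.add_mod_right]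
  ring

lemma hrRho_natCast (N : ℕ) : hrRho N = radonNumber (padicValNat 2 N) := by
  rw [hrRho, padicValRat.of_nat, radonNumber]
  norm_cast

lemma exists_hasCliffordSystem_two_pow :
    ∀ v, ∃ m, m + 1 = radonNumber v ∧ HasCliffordSystem m (2 ^ v)
  | 0 => ⟨0, rfl, hasCliffordSystem_zero_one⟩
  | 1 => ⟨1, rfl, hasCliffordSystem_one_two⟩
  | 2 => ⟨3, rfl, hasCliffordSystem_three_four⟩
  | 3 => ⟨7, rfl, hasCliffordSystem_seven_eight⟩
  | v + 4 =>
    let ⟨m, hm, h⟩ := exists_hasCliffordSystem_two_pow v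
    ⟨m + 8, by rw [radonNumber_add_four, ← hm], by rw [pow_add]; exact h.add_eight⟩

lemma exists_hasQuaternionicCliffordSystem_two_pow :
    ∀ v, ∃ e j, j + v = radonNumber v + 1 ∧
      HasQuaternionicCliffordSystem e (radonNumber v + 1) (2 ^ j)
  | 0 => ⟨0, 2, rfl, hasQuaternionicCliffordSystem_three_four.mono (Nat.le_succ 2)⟩
  | 1 => ⟨0, 2, rfl, hasQuaternionicCliffordSystem_three_four⟩
  | 2 => ⟨1, 3, rfl, hasCliffordSystem_seven_eight.hasQuaternionicCliffordSystem⟩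
  | 3 => ⟨0, 6, rfl, (hasQuaternionicCliffordSystem_three_four.mono (by decide : 1 ≤ 3)).add_eight⟩
  | v + 4 =>
    let ⟨e, j, hj, h⟩ := exists_hasQuaternionicCliffordSystem_two_pow v
    ⟨e, j + 4, by rw [radonNumber_add_four]; lia, by
      rw [radonNumber_add_four, pow_add, add_right_comm]
      exact h.add_eight⟩

end RadonNumber

section LinearFamilies

variable {ι κ : Type*} [Fintype ι] [Fintype κ] {m n N v : ℕ}

lemma IsCliffordSystem.transpose_mul_self [DecidableEq κ] {E : ι → Matrix κ κ ℝ}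
    (hE : IsCliffordSystem E) (c : ℝ) (y : ι → ℝ) :
    (c • 1 + ∑ i, y i • E i)ᵀ * (c • 1 + ∑ i, y i • E i) = (c ^ 2 + ∑ i, y i ^ 2) • 1 := by
  have hskew : (∑ i, y i • E i)ᵀ = -∑ i, y i • E i := by
    simp only [transpose_sum, transpose_smul, hE.transpose_eq, smul_neg, Finset.sum_neg_distrib]
  have hsq : (∑ i, y i • E i) * ∑ i, y i • E i = -((∑ i, y i ^ 2) • 1) := by
    simp only [sum_smul_mul_self hE.anticomm, hE.mul_self, smul_neg, Finset.sum_neg_distrib,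
      Finset.sum_smul]
  rw [transpose_add, hskew, transpose_smul, transpose_one, add_mul, mul_add, mul_add, neg_mul,
    neg_mul, hsq, smul_mul_smul_comm, smul_one_mul, mul_smul_one, mul_one, add_smul, sq]
  abel

lemma HasCliffordSystem.exists_transpose_mul_self_eq_norm_sq (h : HasCliffordSystem m N) :
    ∃ f : EuclideanSpace ℝ (Fin (m + 1)) →ₗ[ℝ] Matrix (Fin N) (Fin N) ℝ,
      ∀ v, (f v)ᵀ * f v = (‖v‖ ^ 2 : ℝ) • 1 := by
  obtain ⟨E, hE⟩ := h
  let f := Fintype.linearCombination ℝ (Fin.cons 1 E : Fin (m + 1) → _) ∘ₗ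
    (WithLp.linearEquiv 2 ℝ (Fin (m + 1) → ℝ)).toLinearMap
  have hf (v) : f v = v 0 • 1 + ∑ i : Fin m, v i.succ • E i := Fin.sum_univ_succ _
  refine ⟨f, fun v => ?_⟩
  rw [hf, hE.transpose_mul_self, EuclideanSpace.real_norm_sq_eq, Fin.sum_univ_succ]

lemma exists_transpose_mul_self_eq_norm_sq_of_le_radonNumber (hv : 2 ^ v ∣ N)
    (hn : n ≤ radonNumber v) :
    ∃ f : EuclideanSpace ℝ (Fin n) →ₗ[ℝ] Matrix (Fin N) (Fin N) ℝ,
      ∀ v, (f v)ᵀ * f v = (‖v‖ ^ 2 : ℝ) • 1 := by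
  obtain _ | k := n
  · exact ⟨0, fun v => by rw [Subsingleton.elim v 0]; simp⟩
  obtain ⟨m, hm, h⟩ := exists_hasCliffordSystem_two_pow v
  obtain ⟨c, rfl⟩ := hv
  exact ((h.mono (by lia)).mul c).exists_transpose_mul_self_eq_norm_sq

lemma isUnit_of_transpose_mul_self_eq_smul_one [DecidableEq κ] {A : Matrix κ κ ℝ} {c : ℝ}
    (hc : c ≠ 0) (hA : Aᵀ * A = c • 1) : IsUnit A :=
  IsUnit.of_mul_eq_one (c⁻¹ • Aᵀ) <| mul_eq_one_comm.1 <| by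
    rw [smul_mul_assoc, hA, inv_smul_smul₀ hc]

lemma exists_isUnit_sum_smul [DecidableEq κ] {V : Type*} [AddCommGroup V] [Module ℝ V]
    {f : V →ₗ[ℝ] Matrix κ κ ℝ} (hf : ∀ v, v ≠ 0 → IsUnit (f v)) (hn : n ≤ Module.finrank ℝ V) :
    ∃ F : Fin n → Matrix κ κ ℝ, ∀ y : Fin n → ℝ, y ≠ 0 → IsUnit (∑ i, y i • F i) := by
  obtain ⟨b, hb⟩ := exists_linearIndependent_of_le_finrank hn
  refine ⟨fun i => f (b i), fun y hy => ?_⟩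
  simp only [← map_smul, ← map_sum]
  exact hf _ fun hsum => hy (funext (Fintype.linearIndependent_iff.1 hb y hsum))

lemma two_pow_succ_dvd_of_radonNumber_lt [DecidableEq κ] {V : Type*} [AddCommGroup V]
    [Module ℝ V] {f : V →ₗ[ℝ] Matrix κ κ ℝ} (hf : ∀ v, v ≠ 0 → IsUnit (f v))
    (hV : radonNumber v < Module.finrank ℝ V) : 2 ^ (v + 1) ∣ Fintype.card κ := by
  obtain ⟨F, hF⟩ := exists_isUnit_sum_smul hf (Nat.succ_le_of_lt hV)
  obtain ⟨e, j, hj, E, K₁, K₂, hE, hK⟩ := exists_hasQuaternionicCliffordSystem_two_pow v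
  have hdvd := four_mul_two_pow_card_dvd_of_isUnit hE hK hF
  rw [Fintype.card_fin, Fintype.card_fin, ← hj] at hdvd
  refine Nat.dvd_of_mul_dvd_mul_left (k := 2 ^ j * 2) (by positivity) ?_
  convert hdvd using 1 <;> ring

lemma finrank_le_radonNumber [DecidableEq κ] [Nonempty κ] {V : Type*} [AddCommGroup V]
    [Module ℝ V] {f : V →ₗ[ℝ] Matrix κ κ ℝ} (hf : ∀ v, v ≠ 0 → IsUnit (f v)) :
    Module.finrank ℝ V ≤ radonNumber (padicValNat 2 (Fintype.card κ)) :=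
  le_of_not_gt fun hV => pow_succ_padicValNat_not_dvd Fintype.card_ne_zero
    (two_pow_succ_dvd_of_radonNumber_lt hf hV)

end LinearFamilies

end HurwitzRadon

/-- The Hurwitz–Radon–Eckmann–Adams theorem:
`ρ(N) = ρ⁽¹⁾(𝔰𝔬(N,N),ι) = ρ⁽²⁾(𝔰𝔬(N,N),ι)`. -/
theorem hurwitzRadon_so_N_N (N : ℕ) (hN : 1 ≤ N) (n : ℕ) :
    ((∃ f : EuclideanSpace ℝ (Fin n) →ₗ[ℝ] Matrix (Fin N) (Fin N) ℝ,
        ∀ v, (f v)ᵀ * f v = (‖v‖ ^ 2 : ℝ) • (1 : Matrix (Fin N) (Fin N) ℝ)) ↔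
      (∃ f : EuclideanSpace ℝ (Fin n) →ₗ[ℝ] Matrix (Fin N) (Fin N) ℝ,
        ∀ v, v ≠ 0 → IsUnit (f v))) ∧
    ((∃ f : EuclideanSpace ℝ (Fin n) →ₗ[ℝ] Matrix (Fin N) (Fin N) ℝ,
        ∀ v, v ≠ 0 → IsUnit (f v)) ↔
      (n : ℤ) ≤ hrRho (N : ℚ)) := by
  have isUnit_of_isometry : (∃ f : EuclideanSpace ℝ (Fin n) →ₗ[ℝ] Matrix (Fin N) (Fin N) ℝ,
        ∀ v, (f v)ᵀ * f v = (‖v‖ ^ 2 : ℝ) • (1 : Matrix (Fin N) (Fin N) ℝ)) →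
      ∃ f : EuclideanSpace ℝ (Fin n) →ₗ[ℝ] Matrix (Fin N) (Fin N) ℝ, ∀ v, v ≠ 0 → IsUnit (f v) :=
    fun ⟨f, hf⟩ => ⟨f, fun v hv => HurwitzRadon.isUnit_of_transpose_mul_self_eq_smul_one
      (pow_ne_zero 2 (norm_ne_zero_iff.2 hv)) (hf v)⟩
  have le_of_isUnit : (∃ f : EuclideanSpace ℝ (Fin n) →ₗ[ℝ] Matrix (Fin N) (Fin N) ℝ,
      ∀ v, v ≠ 0 → IsUnit (f v)) → n ≤ HurwitzRadon.radonNumber (padicValNat 2 N) := by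
    rintro ⟨f, hf⟩
    have : Nonempty (Fin N) := Fin.pos_iff_nonempty.1 hN
    simpa using HurwitzRadon.finrank_le_radonNumber hf
  have isometry_of_le := HurwitzRadon.exists_transpose_mul_self_eq_norm_sq_of_le_radonNumber
    (n := n) (pow_padicValNat_dvd (p := 2) (n := N))
  rw [HurwitzRadon.hrRho_natCast, Nat.cast_le]
  exact ⟨⟨isUnit_of_isometry, isometry_of_le ∘ le_of_isUnit⟩,
    ⟨le_of_isUnit, isUnit_of_isometry ∘ isometry_of_le⟩⟩
end
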